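/- Let d ≥ 2 be an integer, 0 < τ₀ < τ₁, α > 0, and a > 0, γ > 0. Let V₁, V₂ : ℝ^d → ℝ with V₁ continuously differentiable, satisfying |V₁(x)| ≤ a(1+|x|)^{−γ}, |V₂(x)| ≤ a(1+|x|)^{−γ−1} and ∂_rV₁(x) ≤ a(1+|x|)^{−γ−1} for all x. Then there exists a constant C (depending only on τ₀, τ₁, α, a, γ, d) such that for every τ ∈ (τ₀, τ₁), every ε ∈ (0,1), every f ∈ L²((1+|x|)^{1+α}) and every classical solution u of −Δu + (V₁+V₂)u ± iεu − τu = f with u, ∇u ∈ L²((1+|x|)^{−1−α}), one has ‖u‖_{L²((1+|x|)^{−1−α})} + ‖∇u‖_{L²((1+|x|)^{−1−α})} ≤ C‖f‖_{L²((1+|x|)^{1+α})}. -/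

import Mathlib

noncomputable section
open MeasureTheory Metric Set ENNReal

abbrev Ed (d : ℕ) := EuclideanSpace ℝ (Fin d)

/-- partial derivative of a complex valued function -/
def pd {d : ℕ} (u : Ed d → ℂ) (i : Fin d) (x : Ed d) : ℂ :=
  fderiv ℝ u x (EuclideanSpace.single i 1)

/-- Laplacian of a complex valued function -/
def lap {d : ℕ} (u : Ed d → ℂ) (x : Ed d) : ℂ :=
  ∑ i, fderiv ℝ (pd u i) x (EuclideanSpace.single i 1)

/-- squared norm of the gradient, as an extended nonnegative real -/
def gradSq {d : ℕ} (u : Ed d → ℂ) (x : Ed d) : ℝ≥0∞ :=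
  ∑ i, (‖pd u i x‖₊ : ℝ≥0∞) ^ 2

/-- |u(x)|² as an extended nonnegative real -/
def usq {d : ℕ} (u : Ed d → ℂ) (x : Ed d) : ℝ≥0∞ := (‖u x‖₊ : ℝ≥0∞) ^ 2

/-- radial derivative ∂_r V (x) = (x/|x|)·∇V(x) -/
def radialDeriv {d : ℕ} (V : Ed d → ℝ) (x : Ed d) : ℝ :=
  fderiv ℝ V x x / ‖x‖

/-- Morrey–Campanato type quantity sup_{R>0} (1/R) ∫_{B(0,R)} g -/
def nX2 {d : ℕ} (g : Ed d → ℝ≥0∞) : ℝ≥0∞ :=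
  ⨆ (R : ℝ) (_ : 0 < R), (ENNReal.ofReal R)⁻¹ * ∫⁻ x in ball (0 : Ed d) R, g x

/-- dyadic shell C_j -/
def shell (d : ℕ) (j : ℤ) : Set (Ed d) := {x | (2:ℝ)^j < ‖x‖ ∧ ‖x‖ ≤ (2:ℝ)^(j+1)}

/-- the dual norm ‖f‖_{X*} applied to g = |f|² -/
def nXstar {d : ℕ} (g : Ed d → ℝ≥0∞) : ℝ≥0∞ :=
  ∑' j : ℤ, (ENNReal.ofReal ((2:ℝ)^(j+1)) * ∫⁻ x in shell d j, g x) ^ (1/2 : ℝ)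

/-- the index j₀ with 2^{j₀} < ρ ≤ 2^{j₀+1} -/
def jIdx (ρ : ℝ) : ℤ := ⌈Real.logb 2 ρ⌉ - 1

/-- sup_{R ≥ ρ} (1/R)∫_{B(0,R)} g -/
def nX2r {d : ℕ} (ρ : ℝ) (g : Ed d → ℝ≥0∞) : ℝ≥0∞ :=
  ⨆ (R : ℝ) (_ : ρ ≤ R), (ENNReal.ofReal R)⁻¹ * ∫⁻ x in ball (0 : Ed d) R, g x

/-- the dual norm ‖f‖_{X*_ρ} applied to g = |f|² -/
def nXstarr {d : ℕ} (ρ : ℝ) (g : Ed d → ℝ≥0∞) : ℝ≥0∞ :=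
  (∑' j : {j : ℤ // jIdx ρ ≤ j},
    (ENNReal.ofReal ((2:ℝ)^((j:ℤ)+1)) * ∫⁻ x in shell d (j:ℤ), g x) ^ (1/2 : ℝ))
  + (ENNReal.ofReal ρ * ∫⁻ x in ball (0 : Ed d) ρ, g x) ^ (1/2 : ℝ)

/-- integral of g over the sphere of radius R w.r.t. (d-1)-dimensional Hausdorff measure -/
def sphInt {d : ℕ} (R : ℝ) (g : Ed d → ℝ≥0∞) : ℝ≥0∞ :=
  ∫⁻ x in Metric.sphere (0 : Ed d) R, g x ∂(μH[(d:ℝ) - 1])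

/-!
The estimate is quantitative: a Carleman inequality whose weight `exp (2φ)` is bounded replaces the
compactness argument. Multiply the equation by `exp (2φ) w (∂ᵣu + ((d - 1) / (2r) + φ') u)` and take
real parts, with `w = 1 - (1 + r² / R²) ^ (-q)` and `φ' = k (1 + r / L) ^ (-1 - θ)`. The pointwise
divergence identity leaves a quadratic form in `u` and `∇u` that is positive: near the origin the
large slope `k` of the phase beats the potentials, far out `τ₀` beats their tails.

Nothing is lost at infinity because of the absorption `ε`: testing with `u` shows that `u` and `∇u`
lie in `L²`, with `ε (‖u‖² + ‖∇u‖²)` controlled by `∫ |f| |u|`, and this also bounds the term the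
absorption contributes to the Carleman inequality. The weight `w` degenerates at the origin; the
mass there is recovered from the divergence of a radial field times `|u|²`. Young's inequality then
absorbs `u` on the right-hand side.

Neither `V₂` nor `f` need be measurable. Both are replaced: `V₂ x` by the admissible value that
minimises `|f x|` for the given `u x` and `Δu x`, which is measurable and does not increase `|f|`.
-/

/-! ### Cut-offs away from the origin and infinity -/

section AnnularCutoff

theorem deriv_smoothTransition_of_notMem_Icc {t : ℝ} (ht : t ∉ Icc (0 : ℝ) 1) :
    deriv Real.smoothTransition t = 0 := by
  rcases not_and_or.1 ht with h | h
  · have : Real.smoothTransition =ᶠ[nhds t] fun _ => 0 := by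
      filter_upwards [Iio_mem_nhds (not_le.1 h)] with s hs
      exact Real.smoothTransition.zero_of_nonpos (mem_Iio.1 hs).le
    simpa using this.deriv_eq
  · have : Real.smoothTransition =ᶠ[nhds t] fun _ => 1 := by
      filter_upwards [Ioi_mem_nhds (not_le.1 h)] with s hs
      exact Real.smoothTransition.one_of_one_le (mem_Ioi.1 hs).le
    simpa using this.deriv_eq

theorem exists_abs_deriv_smoothTransition_le :
    ∃ K : ℝ, 0 < K ∧ ∀ t, |deriv Real.smoothTransition t| ≤ K := by
  have hcont : Continuous (deriv Real.smoothTransition) :=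
    (Real.smoothTransition.contDiff (n := 1)).continuous_deriv le_rfl
  have hcomp : HasCompactSupport (deriv Real.smoothTransition) :=
    .intro isCompact_Icc fun _ => deriv_smoothTransition_of_notMem_Icc
  obtain ⟨K, hK⟩ := hcomp.exists_bound_of_continuous hcont
  exact ⟨max K 1, by positivity, fun t => (hK t).trans (le_max_left _ _)⟩

variable {E : Type*} [NormedAddCommGroup E] {R : ℝ}

/-- A smooth cut-off equal to `1` for `2/R ≤ |x| ≤ R` and vanishing for `|x| ≤ 1/R` and for
`|x| ≥ 2R`. -/
def annularCutoff (R : ℝ) (x : E) : ℝ :=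
  Real.smoothTransition (-1 + R ^ 2 * ‖x‖ ^ 2) *
    Real.smoothTransition (2 + -(R ^ 2)⁻¹ * ‖x‖ ^ 2)

theorem annularCutoff_nonneg (R : ℝ) (x : E) : 0 ≤ annularCutoff R x :=
  mul_nonneg (Real.smoothTransition.nonneg _) (Real.smoothTransition.nonneg _)

theorem annularCutoff_le_one (R : ℝ) (x : E) : annularCutoff R x ≤ 1 :=
  mul_le_one₀ (Real.smoothTransition.le_one _) (Real.smoothTransition.nonneg _)
    (Real.smoothTransition.le_one _)

theorem annularCutoff_eq_one (hR : 0 < R) {x : E} (hlow : 2 ≤ R * ‖x‖) (hhigh : ‖x‖ ≤ R) :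
    annularCutoff R x = 1 := by
  have hhigh' : (R ^ 2)⁻¹ * ‖x‖ ^ 2 ≤ 1 := by
    rw [inv_mul_le_one₀ (by positivity)]
    gcongr
  rw [annularCutoff, Real.smoothTransition.one_of_one_le (by nlinarith),
    Real.smoothTransition.one_of_one_le (by linarith), one_mul]

theorem hasCompactSupport_annularCutoff [ProperSpace E] (hR : 0 < R) :
    HasCompactSupport (annularCutoff R : E → ℝ) := by
  refine .intro (isCompact_closedBall (0 : E) (2 * R)) fun x hx => ?_
  have hx' : 2 * R < ‖x‖ := by simpa using hx
  have hbig : 2 ≤ (R ^ 2)⁻¹ * ‖x‖ ^ 2 := by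
    rw [le_inv_mul_iff₀ (by positivity)]
    nlinarith
  rw [annularCutoff, Real.smoothTransition.zero_of_nonpos
    (show 2 + -(R ^ 2)⁻¹ * ‖x‖ ^ 2 ≤ 0 by linarith), mul_zero]

theorem zero_notMem_tsupport_annularCutoff (hR : 0 < R) :
    (0 : E) ∉ tsupport (annularCutoff R : E → ℝ) := by
  rw [notMem_tsupport_iff_eventuallyEq]
  filter_upwards [ball_mem_nhds (0 : E) (inv_pos.2 hR)] with x hx
  have hsmall : R * ‖x‖ ≤ 1 := by
    have := mem_ball_zero_iff.1 hx
    rw [← le_inv_mul_iff₀ hR, mul_one]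
    exact this.le
  have hsq : (R * ‖x‖) ^ 2 ≤ 1 := pow_le_one₀ (by positivity) hsmall
  rw [annularCutoff, Real.smoothTransition.zero_of_nonpos (by linarith [mul_pow R ‖x‖ 2]),
    zero_mul, Pi.zero_apply]

variable [InnerProductSpace ℝ E]

theorem contDiff_smoothTransition_affine_norm_sq (a b : ℝ) :
    ContDiff ℝ 1 fun x : E => Real.smoothTransition (a + b * ‖x‖ ^ 2) :=
  Real.smoothTransition.contDiff.comp
    (contDiff_const.add (contDiff_const.mul (contDiff_norm_sq ℝ)))

theorem fderiv_smoothTransition_affine_norm_sq (a b : ℝ) (x v : E) :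
    fderiv ℝ (fun y : E => Real.smoothTransition (a + b * ‖y‖ ^ 2)) x v =
      deriv Real.smoothTransition (a + b * ‖x‖ ^ 2) * (2 * b * inner ℝ x v) := by
  have hθ := ((Real.smoothTransition.contDiff (n := 1)).differentiable one_ne_zero
    (a + b * ‖x‖ ^ 2)).hasDerivAt
  have hsq : HasFDerivAt (fun y : E => a + b * ‖y‖ ^ 2) (b • (2 • innerSL ℝ x)) x :=
    ((hasStrictFDerivAt_norm_sq x).hasFDerivAt.const_mul b).const_add a
  have hcomp := (hθ.comp_hasFDerivAt x hsq).fderiv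
  rw [Function.comp_def] at hcomp
  rw [hcomp]
  simp only [smul_apply, innerSL_apply_apply, smul_eq_mul, nsmul_eq_mul, Nat.cast_ofNat]
  ring

theorem abs_fderiv_smoothTransition_affine_norm_sq_le {K : ℝ}
    (hK : ∀ t, |deriv Real.smoothTransition t| ≤ K) (a b : ℝ) {x v : E} (hv : ‖v‖ ≤ 1) :
    |fderiv ℝ (fun y : E => Real.smoothTransition (a + b * ‖y‖ ^ 2)) x v| ≤
      2 * K * |b| * ‖x‖ := by
  have hinner : |inner ℝ x v| ≤ ‖x‖ :=
    (abs_real_inner_le_norm x v).trans (mul_le_of_le_one_right (norm_nonneg _) hv)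
  rw [fderiv_smoothTransition_affine_norm_sq, abs_mul, abs_mul, abs_mul, abs_two]
  calc _ ≤ K * (2 * |b| * ‖x‖) :=
        mul_le_mul (hK _) (by gcongr) (by positivity) ((abs_nonneg _).trans (hK 0))
    _ = _ := by ring

theorem contDiff_annularCutoff (R : ℝ) : ContDiff ℝ 1 (annularCutoff R : E → ℝ) :=
  (contDiff_smoothTransition_affine_norm_sq _ _).mul (contDiff_smoothTransition_affine_norm_sq _ _)

theorem abs_fderiv_inner_smoothTransition_le {K : ℝ}
    (hK : ∀ t, |deriv Real.smoothTransition t| ≤ K) (hR : 0 < R) (x : E) {v : E} (hv : ‖v‖ ≤ 1) :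
    |fderiv ℝ (fun y : E => Real.smoothTransition (-1 + R ^ 2 * ‖y‖ ^ 2)) x v| ≤
      4 * K * R * (ball (0 : E) (2 / R)).indicator (fun _ => 1) x := by
  have : 0 ≤ K := (abs_nonneg _).trans (hK 0)
  by_cases hx : R * ‖x‖ < 2
  · have hmem : x ∈ ball (0 : E) (2 / R) := by
      rwa [mem_ball_zero_iff, lt_div_iff₀' hR]
    refine (abs_fderiv_smoothTransition_affine_norm_sq_le hK _ _ hv).trans ?_
    rw [indicator_of_mem hmem, abs_of_pos (by positivity)]
    nlinarith [mul_le_mul_of_nonneg_left hx.le (by positivity : 0 ≤ 2 * K * R)]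
  · rw [fderiv_smoothTransition_affine_norm_sq, deriv_smoothTransition_of_notMem_Icc
      fun h => by nlinarith [h.2], zero_mul, abs_zero]
    exact mul_nonneg (by positivity) (indicator_nonneg (fun _ _ => zero_le_one) _)

theorem abs_fderiv_outer_smoothTransition_le {K : ℝ}
    (hK : ∀ t, |deriv Real.smoothTransition t| ≤ K) (hR : 0 < R) (x : E) {v : E} (hv : ‖v‖ ≤ 1) :
    |fderiv ℝ (fun y : E => Real.smoothTransition (2 + -(R ^ 2)⁻¹ * ‖y‖ ^ 2)) x v| ≤
      4 * K / R := by
  have : 0 ≤ K := (abs_nonneg _).trans (hK 0)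
  by_cases hx : ‖x‖ ≤ 2 * R
  · calc _ ≤ 2 * K * |-(R ^ 2)⁻¹| * ‖x‖ :=
          abs_fderiv_smoothTransition_affine_norm_sq_le hK _ _ hv
      _ ≤ 2 * K * |-(R ^ 2)⁻¹| * (2 * R) := by gcongr
      _ = 4 * K / R := by
          rw [abs_neg, abs_of_pos (by positivity)]
          field_simp
          ring
  · have hbig : 2 < (R ^ 2)⁻¹ * ‖x‖ ^ 2 := by
      rw [lt_inv_mul_iff₀ (by positivity)]
      nlinarith
    rw [fderiv_smoothTransition_affine_norm_sq, deriv_smoothTransition_of_notMem_Icc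
      fun h => by linarith [h.1], zero_mul, abs_zero]
    positivity

theorem exists_abs_fderiv_annularCutoff_le :
    ∃ K : ℝ, 0 < K ∧ ∀ (R : ℝ) (x v : E), 0 < R → ‖v‖ ≤ 1 →
      |fderiv ℝ (annularCutoff R) x v| ≤
        K / R + K * R * (ball (0 : E) (2 / R)).indicator (fun _ => 1) x := by
  obtain ⟨K, hKpos, hK⟩ := exists_abs_deriv_smoothTransition_le
  refine ⟨4 * K, by positivity, fun R x v hR hv => ?_⟩
  have hdiff (a b : ℝ) : DifferentiableAt ℝ
      (fun y : E => Real.smoothTransition (a + b * ‖y‖ ^ 2)) x :=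
    (contDiff_smoothTransition_affine_norm_sq a b).differentiable one_ne_zero x
  have hle (t s : ℝ) : |Real.smoothTransition t * s| ≤ |s| := by
    rw [abs_mul, abs_of_nonneg (Real.smoothTransition.nonneg t)]
    exact mul_le_of_le_one_left (abs_nonneg _) (Real.smoothTransition.le_one t)
  have hprod : fderiv ℝ (annularCutoff R : E → ℝ) x = _ := fderiv_fun_mul (hdiff _ _) (hdiff _ _)
  rw [hprod]
  simp only [add_apply, smul_apply, smul_eq_mul]
  exact (abs_add_le _ _).trans
    (add_le_add ((hle _ _).trans (abs_fderiv_outer_smoothTransition_le hK hR x hv))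
      ((hle _ _).trans (abs_fderiv_inner_smoothTransition_le hK hR x hv)))

end AnnularCutoff

/-! ### The divergence theorem with a puncture at the origin -/

section Divergence

theorem integral_mul_fderiv_eq_neg_of_hasCompactSupport {E : Type*} [NormedAddCommGroup E]
    [NormedSpace ℝ E] [FiniteDimensional ℝ E] [MeasurableSpace E] [BorelSpace E]
    {μ : Measure E} [μ.IsAddHaarMeasure] {φ F : E → ℝ} (hφ : ContDiff ℝ 1 φ)
    (hφc : HasCompactSupport φ) (hF : ∀ x ∈ tsupport φ, ContDiffAt ℝ 1 F x) (v : E) :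
    Integrable (fun x => φ x * fderiv ℝ F x v) μ ∧
      ∫ x, φ x * fderiv ℝ F x v ∂μ = -∫ x, fderiv ℝ φ x v * F x ∂μ := by
  have hint {ψ G : E → ℝ} (hψ : Continuous ψ) (hψφ : tsupport ψ ⊆ tsupport φ)
      (hG : ∀ x ∈ tsupport φ, ContinuousAt G x) : Integrable (fun x => ψ x * G x) μ := by
    refine Continuous.integrable_of_hasCompactSupport (continuous_of_tsupport fun x hx => ?_)
      (HasCompactSupport.mul_right (hφc.of_isClosed_subset (isClosed_tsupport ψ) hψφ))
    exact hψ.continuousAt.mul (hG x (hψφ (tsupport_mul_subset_left hx)))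
  have hF' : ∀ x ∈ tsupport φ, ContinuousAt (fun y => fderiv ℝ F y v) x := fun x hx =>
    ((hF x hx).continuousAt_fderiv one_ne_zero).clm_apply continuousAt_const
  have hφF' := hint hφ.continuous subset_rfl hF'
  refine ⟨hφF', integral_mul_fderiv_eq_neg_fderiv_mul_of_integrable
    (hint ((hφ.continuous_fderiv one_ne_zero).clm_apply continuous_const)
      (tsupport_fderiv_apply_subset ℝ v) fun x hx => (hF x hx).continuousAt) hφF'
    (hint hφ.continuous subset_rfl fun x hx => (hF x hx).continuousAt)
    (fun x _ => hφ.differentiable one_ne_zero x)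
    fun x hx => (hF x hx).differentiableAt one_ne_zero⟩

variable {d : ℕ}

/-- The `i`-th vector of the standard basis of `ℝ^d`. -/
abbrev basisVec (i : Fin d) : Ed d := EuclideanSpace.single i 1

/-- The divergence `∑ᵢ ∂ᵢFᵢ` of a vector field given by its components. -/
def divergence (F : Fin d → Ed d → ℝ) (x : Ed d) : ℝ := ∑ i, fderiv ℝ (F i) x (basisVec i)

theorem integrable_indicator_ball_one (r : ℝ) :
    Integrable fun x => (ball (0 : Ed d) r).indicator (fun _ => (1 : ℝ)) x :=
  (integrable_indicator_iff measurableSet_ball).2 (integrableOn_const measure_ball_lt_top.ne)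

theorem integral_indicator_ball_one_le_sq (hd : 2 ≤ d) {r : ℝ} (hr : 0 < r) (hr1 : r ≤ 1) :
    ∫ x, (ball (0 : Ed d) r).indicator (fun _ => (1 : ℝ)) x ≤
      r ^ 2 * volume.real (ball (0 : Ed d) 1) := by
  have : Nonempty (Fin d) := ⟨⟨0, by omega⟩⟩
  have hvol : volume.real (ball (0 : Ed d) r) = r ^ d * volume.real (ball (0 : Ed d) 1) := by
    rw [Measure.real, Measure.addHaar_ball _ _ hr.le, ENNReal.toReal_mul,
      ENNReal.toReal_ofReal (by positivity), finrank_euclideanSpace_fin, Measure.real]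
  rw [integral_indicator measurableSet_ball, setIntegral_const, smul_eq_mul, mul_one, hvol]
  exact mul_le_mul_of_nonneg_right (pow_le_pow_of_le_one hr.le hr1 hd) measureReal_nonneg

theorem aestronglyMeasurable_of_continuousAt_ne_zero [Nonempty (Fin d)] {F : Ed d → ℝ}
    (hF : ∀ x, x ≠ 0 → ContinuousAt F x) : AEStronglyMeasurable F := by
  have hon : ContinuousOn F {0}ᶜ := fun x hx => (hF x hx).continuousWithinAt
  have hmeas := hon.aestronglyMeasurable (μ := volume) (measurableSet_singleton 0).compl
  rwa [Measure.restrict_eq_self_of_ae_mem] at hmeas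
  exact compl_mem_ae_iff.2 (by simp)

theorem exists_abs_fderiv_annularCutoff_mul_le {g : Ed d → ℝ} (hgc : Continuous g) :
    ∃ K C : ℝ, 0 < K ∧ 0 ≤ C ∧ ∀ (R y : ℝ) (x v : Ed d), 2 ≤ R → ‖v‖ ≤ 1 → |y| ≤ g x →
      |fderiv ℝ (annularCutoff R) x v * y| ≤
        K / R * g x + K * R * C * (ball (0 : Ed d) (2 / R)).indicator (fun _ => 1) x := by
  obtain ⟨K, hK, hη⟩ := exists_abs_fderiv_annularCutoff_le (E := Ed d)
  obtain ⟨C, hC⟩ :=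
    (isCompact_closedBall (0 : Ed d) 1).exists_bound_of_continuousOn hgc.continuousOn
  refine ⟨K, C, hK, (norm_nonneg _).trans (hC 0 (by simp)), fun R y x v hR hv hy => ?_⟩
  have hη' := hη R x v (by linarith) hv
  have hball : 2 / R ≤ 1 := by rwa [div_le_one (by linarith)]
  rw [abs_mul]
  refine (mul_le_mul hη' hy (abs_nonneg _) ((abs_nonneg _).trans hη')).trans ?_
  by_cases hx : x ∈ ball (0 : Ed d) (2 / R)
  · have hgC : g x ≤ C :=
      (le_abs_self _).trans (hC x (ball_subset_closedBall (ball_subset_ball hball hx)))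
    simp only [indicator_of_mem hx]
    nlinarith [mul_le_mul_of_nonneg_left hgC (by positivity : 0 ≤ K * R)]
  · simp [indicator_of_notMem hx]

/-- The puncture costs `O(1/n)`: the gradient of the cut-off is `O(n)` on a ball of volume
`O(n⁻ᵈ)`, and `d ≥ 2`. -/
theorem exists_integral_fderiv_annularCutoff_mul_le (hd : 2 ≤ d) {g : Ed d → ℝ}
    (hgc : Continuous g) (hgi : Integrable g) :
    ∃ C : ℝ, ∀ (F : Ed d → ℝ) (i : Fin d), (∀ x, x ≠ 0 → ContinuousAt F x) →
      (∀ x, |F x| ≤ g x) → ∀ n : ℕ, 2 ≤ n →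
      -∫ x, fderiv ℝ (annularCutoff (n : ℝ)) x (basisVec i) * F x ≤ C / n := by
  have : Nonempty (Fin d) := ⟨⟨0, by omega⟩⟩
  obtain ⟨K, C, hK, hC, hpt⟩ := exists_abs_fderiv_annularCutoff_mul_le hgc
  set v₁ := volume.real (ball (0 : Ed d) 1)
  refine ⟨K * (∫ x, g x) + 4 * K * C * v₁, fun F i hF hFg n hn => ?_⟩
  have hn2 : (2 : ℝ) ≤ n := by exact_mod_cast hn
  have hball := integrable_indicator_ball_one (d := d) (2 / n)
  have hmaj : Integrable fun x =>
      K / n * g x + K * n * C * (ball (0 : Ed d) (2 / n)).indicator (fun _ => (1 : ℝ)) x :=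
    (hgi.const_mul _).add (hball.const_mul _)
  have hle x := hpt n (F x) x (basisVec i) hn2 (by simp) (hFg x)
  have hmeas : AEStronglyMeasurable fun x =>
      fderiv ℝ (annularCutoff (n : ℝ)) x (basisVec i) * F x :=
    (((contDiff_annularCutoff (n : ℝ)).continuous_fderiv one_ne_zero).clm_apply
      continuous_const).aestronglyMeasurable.mul (aestronglyMeasurable_of_continuousAt_ne_zero hF)
  calc _ = ∫ x, -(fderiv ℝ (annularCutoff (n : ℝ)) x (basisVec i) * F x) := (integral_neg _).symm
    _ ≤ ∫ x, (K / n * g x +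
          K * n * C * (ball (0 : Ed d) (2 / n)).indicator (fun _ => (1 : ℝ)) x) :=
        integral_mono (hmaj.mono' hmeas (ae_of_all _ hle)).neg hmaj
          fun x => (neg_le_abs _).trans (hle x)
    _ = K / n * (∫ x, g x) +
          K * n * C * ∫ x, (ball (0 : Ed d) (2 / n)).indicator (fun _ => (1 : ℝ)) x := by
        rw [integral_add (hgi.const_mul _) (hball.const_mul _), integral_const_mul,
          integral_const_mul]
    _ ≤ K / n * (∫ x, g x) + K * n * C * ((2 / n) ^ 2 * v₁) := by
        gcongr
        exact integral_indicator_ball_one_le_sq hd (by positivity)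
          ((div_le_one (by positivity)).2 hn2)
    _ = _ := by field_simp; ring

theorem tendsto_integral_annularCutoff_mul [Nonempty (Fin d)] {h : Ed d → ℝ} (hh : Integrable h) :
    Filter.Tendsto (fun n : ℕ => ∫ x, annularCutoff (n : ℝ) x * h x) Filter.atTop
      (nhds (∫ x, h x)) := by
  refine tendsto_integral_filter_of_dominated_convergence (fun x => |h x|)
    (.of_forall fun n => (contDiff_annularCutoff _).continuous.aestronglyMeasurable.mul
      hh.aestronglyMeasurable) (.of_forall fun n => ae_of_all _ fun x => ?_) hh.abs ?_
  · rw [norm_mul, Real.norm_of_nonneg (annularCutoff_nonneg _ _), Real.norm_eq_abs]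
    exact mul_le_of_le_one_left (abs_nonneg _) (annularCutoff_le_one _ _)
  · have hne : ∀ᵐ x : Ed d, x ≠ 0 := by rw [ae_iff]; simp
    filter_upwards [hne] with x hx
    have hlarge (a : ℝ) : ∀ᶠ n : ℕ in Filter.atTop, a ≤ n :=
      tendsto_natCast_atTop_atTop.eventually_ge_atTop a
    refine tendsto_const_nhds.congr' ?_
    filter_upwards [hlarge (2 / ‖x‖), hlarge ‖x‖, hlarge 1] with n hlow hhigh hone
    rw [annularCutoff_eq_one (by linarith) (by rwa [div_le_iff₀ (norm_pos_iff.2 hx)] at hlow) hhigh,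
      one_mul]

theorem integral_nonpos_of_le_divergence (hd : 2 ≤ d) {F : Fin d → Ed d → ℝ} {g h : Ed d → ℝ}
    (hF : ∀ i x, x ≠ 0 → ContDiffAt ℝ 1 (F i) x) (hgc : Continuous g) (hgi : Integrable g)
    (hFg : ∀ i x, |F i x| ≤ g x) (hh : Integrable h)
    (hle : ∀ x, x ≠ 0 → h x ≤ divergence F x) : ∫ x, h x ≤ 0 := by
  have : Nonempty (Fin d) := ⟨⟨0, by omega⟩⟩
  obtain ⟨C, hC⟩ := exists_integral_fderiv_annularCutoff_mul_le hd hgc hgi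
  refine le_of_tendsto_of_tendsto (tendsto_integral_annularCutoff_mul hh)
    (tendsto_const_div_atTop_nhds_zero_nat (d * C)) ?_
  filter_upwards [Filter.eventually_ge_atTop 2] with n hn
  have hn0 : (0 : ℝ) < n := by positivity
  have h0 := zero_notMem_tsupport_annularCutoff (E := Ed d) hn0
  have hparts i := integral_mul_fderiv_eq_neg_of_hasCompactSupport (μ := volume)
    (contDiff_annularCutoff (n : ℝ)) (hasCompactSupport_annularCutoff hn0)
    (fun x hx => hF i x (ne_of_mem_of_not_mem hx h0)) (basisVec i)
  calc ∫ x, annularCutoff (n : ℝ) x * h x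
      ≤ ∫ x, ∑ i, annularCutoff (n : ℝ) x * fderiv ℝ (F i) x (basisVec i) := by
        refine integral_mono (hh.bdd_mul (c := 1)
          (contDiff_annularCutoff _).continuous.aestronglyMeasurable (ae_of_all _ fun x => ?_))
          (integrable_finsetSum _ fun i _ => (hparts i).1) fun x => ?_
        · rw [Real.norm_of_nonneg (annularCutoff_nonneg _ _)]
          exact annularCutoff_le_one _ x
        · rw [← Finset.mul_sum]
          rcases eq_or_ne x 0 with rfl | hx
          · simp [image_eq_zero_of_notMem_tsupport h0]
          · exact mul_le_mul_of_nonneg_left (hle x hx) (annularCutoff_nonneg _ x)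
    _ = ∑ i, -∫ x, fderiv ℝ (annularCutoff (n : ℝ)) x (basisVec i) * F i x := by
        rw [integral_finsetSum _ fun i _ => (hparts i).1]
        exact Finset.sum_congr rfl fun i _ => (hparts i).2
    _ ≤ ∑ _i : Fin d, C / n := Finset.sum_le_sum fun i _ =>
        hC (F i) i (fun x hx => (hF i x hx).continuousAt) (hFg i) n hn
    _ = d * C / n := by rw [Finset.sum_const, Finset.card_fin, nsmul_eq_mul]; ring

end Divergence

/-! ### Divergences of the multiplier fields -/

section MultiplierFields

variable {d : ℕ}

/-- `|∇u|²` as a real number. -/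
def gradNormSq (u : Ed d → ℂ) (x : Ed d) : ℝ := ∑ i, ‖pd u i x‖ ^ 2

/-- The Euler derivative `x·∇u = r ∂_r u`. -/
def eulerDeriv (u : Ed d → ℂ) (x : Ed d) : ℂ := ∑ j, x j • pd u j x

/-- The field `B Re(c̄ ū ∇u)` obtained by testing `Δu` against `c B u`. -/
def fluxField (B : Ed d → ℝ) (c : ℂ) (u : Ed d → ℂ) (i : Fin d) (x : Ed d) : ℝ :=
  B x * inner ℝ (c * u x) (pd u i x)

/-- The field `g |u|² x`. -/
def massField (g : Ed d → ℝ) (u : Ed d → ℂ) (i : Fin d) (x : Ed d) : ℝ :=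
  g x * x i * ‖u x‖ ^ 2

/-- The field `2A Re((x·∇ū)∇u) - A|∇u|² x` obtained by testing `Δu` against `2A x·∇u`. -/
def pohozaevField (A : Ed d → ℝ) (u : Ed d → ℂ) (i : Fin d) (x : Ed d) : ℝ :=
  2 * (A x * inner ℝ (eulerDeriv u x) (pd u i x)) - A x * x i * gradNormSq u x

theorem divergence_add {F G : Fin d → Ed d → ℝ} {x : Ed d}
    (hF : ∀ i, DifferentiableAt ℝ (F i) x) (hG : ∀ i, DifferentiableAt ℝ (G i) x) :
    divergence (F + G) x = divergence F x + divergence G x := by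
  simp only [divergence, ← Finset.sum_add_distrib]
  refine Finset.sum_congr rfl fun i _ => ?_
  rw [Pi.add_apply, fderiv_add (hF i) (hG i), add_apply]

theorem apply_eq_sum_basisVec (L : Ed d →L[ℝ] ℝ) (x : Ed d) :
    L x = ∑ i, L (basisVec i) * x i := by
  conv_lhs => rw [← (EuclideanSpace.basisFun (Fin d) ℝ).sum_repr x, map_sum]
  simp [mul_comm]

theorem norm_sq_eq_sum_mul_self (x : Ed d) : ‖x‖ ^ 2 = ∑ i, x i * x i := by
  simp only [EuclideanSpace.real_norm_sq_eq, sq (x _)]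

theorem hasDerivAt_apply_add_smul {H : Type*} [NormedAddCommGroup H] [NormedSpace ℝ H]
    {f : Ed d → H} {x : Ed d} (hf : DifferentiableAt ℝ f x) (v : Ed d) :
    HasDerivAt (fun t : ℝ => f (x + t • v)) (fderiv ℝ f x v) 0 :=
  hf.hasFDerivAt.hasLineDerivAt v

theorem hasDerivAt_coord_add_smul_basisVec (x : Ed d) (i j : Fin d) :
    HasDerivAt (fun t : ℝ => (x + t • basisVec i) j) (if j = i then 1 else 0) 0 := by
  have haffine : (fun t : ℝ => (x + t • basisVec i) j) =
      fun t : ℝ => x j + t * (if j = i then 1 else 0) := by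
    funext t
    simp
  rw [haffine]
  simpa using ((hasDerivAt_id (0 : ℝ)).mul_const (if j = i then (1 : ℝ) else 0)).const_add (x j)

theorem fderiv_eq_of_hasDerivAt {f : Ed d → ℝ} {x v : Ed d} {f' : ℝ}
    (hf : DifferentiableAt ℝ f x) (hf' : HasDerivAt (fun t : ℝ => f (x + t • v)) f' 0) :
    fderiv ℝ f x v = f' :=
  (hasDerivAt_apply_add_smul hf v).unique hf'

theorem contDiff_coord (i : Fin d) : ContDiff ℝ 1 (fun x : Ed d => x i) := by fun_prop

variable {u : Ed d → ℂ}

theorem inner_eulerDeriv (z : ℂ) (x : Ed d) :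
    inner ℝ z (eulerDeriv u x) = ∑ i, x i * inner ℝ z (pd u i x) := by
  simp only [eulerDeriv, inner_sum, real_inner_smul_right]

theorem inner_lap (z : ℂ) (x : Ed d) :
    inner ℝ z (lap u x) = ∑ i, inner ℝ z (fderiv ℝ (pd u i) x (basisVec i)) := by
  rw [lap, inner_sum]

theorem gradNormSq_eq_sum_inner (x : Ed d) :
    gradNormSq u x = ∑ i, inner ℝ (pd u i x) (pd u i x) := by
  simp only [gradNormSq, real_inner_self_eq_norm_sq]

theorem contDiff_pd (hu : ContDiff ℝ 2 u) (i : Fin d) : ContDiff ℝ 1 (pd u i) :=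
  (hu.fderiv_right (m := 1) (by norm_num)).clm_apply contDiff_const

theorem contDiff_eulerDeriv (hu : ContDiff ℝ 2 u) : ContDiff ℝ 1 (eulerDeriv u) :=
  ContDiff.sum fun j _ => (contDiff_coord j).smul (contDiff_pd hu j)

theorem contDiff_gradNormSq (hu : ContDiff ℝ 2 u) : ContDiff ℝ 1 (gradNormSq u) :=
  ContDiff.sum fun j _ => (contDiff_pd hu j).norm_sq ℝ

theorem contDiffAt_fluxField (hu : ContDiff ℝ 2 u) {B : Ed d → ℝ} {x : Ed d}
    (hB : ContDiffAt ℝ 1 B x) (c : ℂ) (i : Fin d) : ContDiffAt ℝ 1 (fluxField B c u i) x :=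
  hB.mul ((contDiffAt_const.mul (hu.of_le one_le_two).contDiffAt).inner ℝ
    (contDiff_pd hu i).contDiffAt)

theorem contDiffAt_massField (hu : ContDiff ℝ 2 u) {g : Ed d → ℝ} {x : Ed d}
    (hg : ContDiffAt ℝ 1 g x) (i : Fin d) : ContDiffAt ℝ 1 (massField g u i) x :=
  (hg.mul (contDiff_coord i).contDiffAt).mul ((hu.of_le one_le_two).contDiffAt.norm_sq ℝ)

theorem contDiffAt_pohozaevField (hu : ContDiff ℝ 2 u) {A : Ed d → ℝ} {x : Ed d}
    (hA : ContDiffAt ℝ 1 A x) (i : Fin d) : ContDiffAt ℝ 1 (pohozaevField A u i) x :=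
  (contDiffAt_const.mul (hA.mul ((contDiff_eulerDeriv hu).contDiffAt.inner ℝ
    (contDiff_pd hu i).contDiffAt))).sub
    ((hA.mul (contDiff_coord i).contDiffAt).mul (contDiff_gradNormSq hu).contDiffAt)

theorem hasDerivAt_add_smul_basisVec (hu : ContDiff ℝ 2 u) (x : Ed d) (i : Fin d) :
    HasDerivAt (fun t : ℝ => u (x + t • basisVec i)) (pd u i x) 0 :=
  hasDerivAt_apply_add_smul (hu.differentiable two_ne_zero x) (basisVec i)

theorem hasDerivAt_pd_add_smul_basisVec (hu : ContDiff ℝ 2 u) (x : Ed d) (i j : Fin d) :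
    HasDerivAt (fun t : ℝ => pd u j (x + t • basisVec i))
      (fderiv ℝ (pd u j) x (basisVec i)) 0 :=
  hasDerivAt_apply_add_smul ((contDiff_pd hu j).differentiable one_ne_zero x) (basisVec i)

theorem hasDerivAt_eulerDeriv_add_smul_basisVec (hu : ContDiff ℝ 2 u) (x : Ed d) (i : Fin d) :
    HasDerivAt (fun t : ℝ => eulerDeriv u (x + t • basisVec i))
      (pd u i x + ∑ j, x j • fderiv ℝ (pd u j) x (basisVec i)) 0 := by
  have hsum := HasDerivAt.fun_sum (u := Finset.univ) fun j _ =>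
    (hasDerivAt_coord_add_smul_basisVec x i j).smul (hasDerivAt_pd_add_smul_basisVec hu x i j)
  refine hsum.congr_deriv ?_
  rw [Finset.sum_add_distrib, add_comm]
  simp

theorem hasDerivAt_gradNormSq_add_smul_basisVec (hu : ContDiff ℝ 2 u) (x : Ed d) (i : Fin d) :
    HasDerivAt (fun t : ℝ => gradNormSq u (x + t • basisVec i))
      (∑ j, 2 * inner ℝ (pd u j x) (fderiv ℝ (pd u j) x (basisVec i))) 0 := by
  have hsum := HasDerivAt.fun_sum (u := Finset.univ) fun j _ =>
    (hasDerivAt_pd_add_smul_basisVec hu x i j).norm_sq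
  simp only [zero_smul, add_zero] at hsum
  exact hsum

theorem fderiv_pd_comm (hu : ContDiff ℝ 2 u) (x : Ed d) (i j : Fin d) :
    fderiv ℝ (pd u j) x (basisVec i) = fderiv ℝ (pd u i) x (basisVec j) := by
  have hsymm : IsSymmSndFDerivAt ℝ u x := hu.contDiffAt.isSymmSndFDerivAt (by simp)
  have hdiff : DifferentiableAt ℝ (fderiv ℝ u) x :=
    (hu.fderiv_right (m := 1) (by norm_num)).differentiable one_ne_zero x
  have hsecond (k : Fin d) (v : Ed d) :
      fderiv ℝ (pd u k) x v = fderiv ℝ (fderiv ℝ u) x v (basisVec k) := by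
    have hpd : fderiv ℝ (pd u k) x = _ :=
      (hdiff.hasFDerivAt.clm_apply (hasFDerivAt_const (basisVec k) x)).fderiv
    rw [hpd]
    simp
  rw [hsecond, hsecond, hsymm.eq]

theorem divergence_fluxField (hu : ContDiff ℝ 2 u) {B : Ed d → ℝ} {x : Ed d} {B₁ : ℝ}
    (hB : ContDiffAt ℝ 1 B x) (hB₁ : ∀ i, fderiv ℝ B x (basisVec i) = B₁ * x i) (c : ℂ) :
    divergence (fluxField B c u) x = B₁ * inner ℝ (c * u x) (eulerDeriv u x) +
      B x * (inner ℝ (c * u x) (lap u x) + c.re * gradNormSq u x) := by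
  have hself (z : ℂ) : inner ℝ (c * z) z = c.re * ‖z‖ ^ 2 := by
    rw [Complex.inner, ← Complex.normSq_eq_norm_sq, map_mul, mul_comm, mul_assoc,
      ← Complex.normSq_eq_conj_mul_self]
    simp
  have hcomp (i : Fin d) : fderiv ℝ (fluxField B c u i) x (basisVec i) =
      B₁ * (x i * inner ℝ (c * u x) (pd u i x)) +
        B x * (inner ℝ (c * u x) (fderiv ℝ (pd u i) x (basisVec i)) +
          c.re * ‖pd u i x‖ ^ 2) := by
    rw [fderiv_eq_of_hasDerivAt
      ((contDiffAt_fluxField hu hB c i).differentiableAt one_ne_zero)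
      ((hasDerivAt_apply_add_smul (hB.differentiableAt one_ne_zero) (basisVec i)).mul
        (((hasDerivAt_add_smul_basisVec hu x i).const_mul c).inner ℝ
          (hasDerivAt_pd_add_smul_basisVec hu x i i)))]
    simp only [zero_smul, add_zero, hB₁, hself]
    ring
  simp only [divergence, hcomp, inner_eulerDeriv, inner_lap, gradNormSq, Finset.mul_sum,
    mul_add, Finset.sum_add_distrib]

theorem divergence_massField (hu : ContDiff ℝ 2 u) {g : Ed d → ℝ} {x : Ed d}
    (hg : ContDiffAt ℝ 1 g x) :
    divergence (massField g u) x = (d * g x + fderiv ℝ g x x) * ‖u x‖ ^ 2 +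
      2 * g x * inner ℝ (u x) (eulerDeriv u x) := by
  have hcomp (i : Fin d) : fderiv ℝ (massField g u i) x (basisVec i) =
      g x * ‖u x‖ ^ 2 + fderiv ℝ g x (basisVec i) * x i * ‖u x‖ ^ 2 +
        2 * g x * (x i * inner ℝ (u x) (pd u i x)) := by
    rw [fderiv_eq_of_hasDerivAt ((contDiffAt_massField hu hg i).differentiableAt one_ne_zero)
      (((hasDerivAt_apply_add_smul (hg.differentiableAt one_ne_zero) (basisVec i)).mul
        (hasDerivAt_coord_add_smul_basisVec x i i)).mul
          (hasDerivAt_add_smul_basisVec hu x i).norm_sq)]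
    simp only [zero_smul, add_zero, Pi.mul_apply, if_true]
    ring
  simp only [divergence, hcomp, Finset.sum_add_distrib, ← Finset.mul_sum, ← Finset.sum_mul,
    Finset.sum_const, Finset.card_fin, nsmul_eq_mul, ← inner_eulerDeriv, ← apply_eq_sum_basisVec]
  ring

theorem fderiv_pohozaevField_basisVec (hu : ContDiff ℝ 2 u) {A : Ed d → ℝ} {x : Ed d}
    (hA : ContDiffAt ℝ 1 A x) (i : Fin d) :
    fderiv ℝ (pohozaevField A u i) x (basisVec i) =
      2 * (fderiv ℝ A x (basisVec i) * inner ℝ (eulerDeriv u x) (pd u i x) +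
        A x * (inner ℝ (eulerDeriv u x) (fderiv ℝ (pd u i) x (basisVec i)) +
          inner ℝ (pd u i x + ∑ j, x j • fderiv ℝ (pd u j) x (basisVec i)) (pd u i x))) -
      ((fderiv ℝ A x (basisVec i) * x i + A x) * gradNormSq u x +
        A x * x i * ∑ j, 2 * inner ℝ (pd u j x) (fderiv ℝ (pd u j) x (basisVec i))) := by
  have hdA := hasDerivAt_apply_add_smul (hA.differentiableAt one_ne_zero) (basisVec i)
  rw [fderiv_eq_of_hasDerivAt ((contDiffAt_pohozaevField hu hA i).differentiableAt one_ne_zero)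
    (((hdA.mul ((hasDerivAt_eulerDeriv_add_smul_basisVec hu x i).inner ℝ
      (hasDerivAt_pd_add_smul_basisVec hu x i i))).const_mul 2).sub
      ((hdA.mul (hasDerivAt_coord_add_smul_basisVec x i i)).mul
        (hasDerivAt_gradNormSq_add_smul_basisVec hu x i)))]
  simp only [zero_smul, add_zero, Pi.mul_apply, if_true, mul_one]

theorem divergence_pohozaevField (hu : ContDiff ℝ 2 u) {A : Ed d → ℝ} {x : Ed d} {A₁ : ℝ}
    (hA : ContDiffAt ℝ 1 A x) (hA₁ : ∀ i, fderiv ℝ A x (basisVec i) = A₁ * x i) :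
    divergence (pohozaevField A u) x = 2 * A x * inner ℝ (eulerDeriv u x) (lap u x) +
      (2 * A x - d * A x - A₁ * ‖x‖ ^ 2) * gradNormSq u x + 2 * A₁ * ‖eulerDeriv u x‖ ^ 2 := by
  have hhess : ∑ i, inner ℝ (∑ j, x j • fderiv ℝ (pd u j) x (basisVec i)) (pd u i x) =
      ∑ i, x i * ∑ j, inner ℝ (pd u j x) (fderiv ℝ (pd u j) x (basisVec i)) := by
    simp only [sum_inner, Finset.mul_sum]
    rw [Finset.sum_comm]
    refine Finset.sum_congr rfl fun i _ => Finset.sum_congr rfl fun j _ => ?_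
    rw [real_inner_smul_left, fderiv_pd_comm hu x j i, real_inner_comm]
  have hcomp (i : Fin d) : fderiv ℝ (pohozaevField A u i) x (basisVec i) =
      2 * A₁ * (x i * inner ℝ (eulerDeriv u x) (pd u i x)) +
        2 * A x * inner ℝ (eulerDeriv u x) (fderiv ℝ (pd u i) x (basisVec i)) +
        2 * A x * inner ℝ (pd u i x) (pd u i x) +
        2 * A x * inner ℝ (∑ j, x j • fderiv ℝ (pd u j) x (basisVec i)) (pd u i x) -
        A₁ * gradNormSq u x * (x i * x i) - A x * gradNormSq u x -
        2 * A x * (x i * ∑ j, inner ℝ (pd u j x) (fderiv ℝ (pd u j) x (basisVec i))) := by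
    rw [fderiv_pohozaevField_basisVec hu hA, hA₁, inner_add_left, ← Finset.mul_sum]
    ring
  rw [← real_inner_self_eq_norm_sq (eulerDeriv u x), norm_sq_eq_sum_mul_self x]
  simp only [divergence, hcomp, Finset.sum_add_distrib, Finset.sum_sub_distrib, ← Finset.mul_sum,
    hhess, ← gradNormSq_eq_sum_inner, ← inner_lap, ← inner_eulerDeriv, Finset.sum_const,
    Finset.card_fin, nsmul_eq_mul]
  ring

end MultiplierFields

/-! ### Energy inequalities -/

section Energy

variable {X : Type*} [MeasurableSpace X] {μ : Measure X} {g₁ g₂ g₃ : X → ℝ}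

theorem integrable_linearCombination_three (a b c : ℝ) (h₁ : Integrable g₁ μ)
    (h₂ : Integrable g₂ μ) (h₃ : Integrable g₃ μ) :
    Integrable (fun x => a * g₁ x + b * g₂ x + c * g₃ x) μ :=
  ((h₁.const_mul a).add (h₂.const_mul b)).add (h₃.const_mul c)

theorem integral_linearCombination_three (a b c : ℝ) (h₁ : Integrable g₁ μ)
    (h₂ : Integrable g₂ μ) (h₃ : Integrable g₃ μ) :
    ∫ x, (a * g₁ x + b * g₂ x + c * g₃ x) ∂μ =
      a * ∫ x, g₁ x ∂μ + b * ∫ x, g₂ x ∂μ + c * ∫ x, g₃ x ∂μ := by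
  have hsum := integral_add ((h₁.const_mul a).add (h₂.const_mul b)) (h₃.const_mul c)
  simp only [Pi.add_apply] at hsum
  rw [hsum, integral_add (h₁.const_mul a) (h₂.const_mul b), integral_const_mul,
    integral_const_mul, integral_const_mul]

variable {d : ℕ}

theorem gradNormSq_nonneg (u : Ed d → ℂ) (x : Ed d) : 0 ≤ gradNormSq u x :=
  Finset.sum_nonneg fun _ _ => by positivity

theorem norm_pd_sq_le (u : Ed d → ℂ) (i : Fin d) (x : Ed d) : ‖pd u i x‖ ^ 2 ≤ gradNormSq u x :=
  Finset.single_le_sum (f := fun i => ‖pd u i x‖ ^ 2) (fun _ _ => by positivity)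
    (Finset.mem_univ i)

theorem norm_eulerDeriv_sq_le (u : Ed d → ℂ) (x : Ed d) :
    ‖eulerDeriv u x‖ ^ 2 ≤ ‖x‖ ^ 2 * gradNormSq u x := by
  have htriangle : ‖eulerDeriv u x‖ ≤ ∑ j, |x j| * ‖pd u j x‖ := by
    refine (norm_sum_le _ _).trans (Finset.sum_le_sum fun j _ => ?_)
    rw [norm_smul, Real.norm_eq_abs]
  calc ‖eulerDeriv u x‖ ^ 2 ≤ (∑ j, |x j| * ‖pd u j x‖) ^ 2 := by gcongr
    _ ≤ (∑ j, |x j| ^ 2) * ∑ j, ‖pd u j x‖ ^ 2 := Finset.sum_mul_sq_le_sq_mul_sq _ _ _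
    _ = _ := by simp only [EuclideanSpace.real_norm_sq_eq, gradNormSq, sq_abs]

theorem norm_eulerDeriv_le (u : Ed d → ℂ) (x : Ed d) :
    ‖eulerDeriv u x‖ ≤ ‖x‖ * √(gradNormSq u x) := by
  refine abs_le_of_sq_le_sq' ?_ (by positivity) |>.2
  rw [mul_pow, Real.sq_sqrt (gradNormSq_nonneg u x)]
  exact norm_eulerDeriv_sq_le u x

section Young

variable {b K B : ℝ} (z : ℂ) (u : Ed d → ℂ) {x : Ed d}

theorem abs_mul_inner_eulerDeriv_le (h : |b| * ‖x‖ ≤ K * B) :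
    |b * inner ℝ z (eulerDeriv u x)| ≤ K * B * (‖z‖ * √(gradNormSq u x)) := by
  rw [abs_mul]
  calc |b| * |inner ℝ z (eulerDeriv u x)| ≤ |b| * (‖z‖ * (‖x‖ * √(gradNormSq u x))) := by
        gcongr
        exact (abs_real_inner_le_norm _ _).trans (by gcongr; exact norm_eulerDeriv_le u x)
    _ = (|b| * ‖x‖) * (‖z‖ * √(gradNormSq u x)) := by ring
    _ ≤ _ := by gcongr

theorem abs_mul_inner_eulerDeriv_le_half_mul_add (h : |b| * ‖x‖ ≤ K * B) :
    |b * inner ℝ z (eulerDeriv u x)| ≤ K / 2 * (B * ‖z‖ ^ 2 + B * gradNormSq u x) := by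
  have hyoung : ‖z‖ * √(gradNormSq u x) ≤ (‖z‖ ^ 2 + gradNormSq u x) / 2 := by
    linarith [two_mul_le_add_sq ‖z‖ √(gradNormSq u x), Real.sq_sqrt (gradNormSq_nonneg u x)]
  have hKB : 0 ≤ K * B := le_trans (by positivity) h
  calc _ ≤ K * B * (‖z‖ * √(gradNormSq u x)) := abs_mul_inner_eulerDeriv_le z u h
    _ ≤ K * B * ((‖z‖ ^ 2 + gradNormSq u x) / 2) := by gcongr
    _ = _ := by ring

theorem abs_mul_inner_eulerDeriv_le_half_add_sq_mul (hB : 0 ≤ B) (h : |b| * ‖x‖ ≤ K * B) :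
    |b * inner ℝ z (eulerDeriv u x)| ≤
      1 / 2 * (B * gradNormSq u x) + K ^ 2 / 2 * (B * ‖z‖ ^ 2) := by
  have hyoung : K * ‖z‖ * √(gradNormSq u x) ≤ ((K * ‖z‖) ^ 2 + gradNormSq u x) / 2 := by
    linarith [two_mul_le_add_sq (K * ‖z‖) √(gradNormSq u x),
      Real.sq_sqrt (gradNormSq_nonneg u x)]
  calc _ ≤ K * B * (‖z‖ * √(gradNormSq u x)) := abs_mul_inner_eulerDeriv_le z u h
    _ = B * (K * ‖z‖ * √(gradNormSq u x)) := by ring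
    _ ≤ B * (((K * ‖z‖) ^ 2 + gradNormSq u x) / 2) := by gcongr
    _ = _ := by ring

end Young

/-- `u` is a classical solution of `-Δu + Wu + isu = f`. -/
structure SolvesHelmholtz (W : Ed d → ℝ) (s : ℝ) (f u : Ed d → ℂ) : Prop where
  contDiff : ContDiff ℝ 2 u
  lap_eq : ∀ x, lap u x = W x • u x + s • (Complex.I * u x) - f x

variable {u f : Ed d → ℂ} {W : Ed d → ℝ} {s : ℝ}

theorem SolvesHelmholtz.inner_lap_eq (hu : SolvesHelmholtz W s f u) (c : ℂ) (x : Ed d) :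
    inner ℝ (c * u x) (lap u x) =
      (c.re * W x + c.im * s) * ‖u x‖ ^ 2 - inner ℝ (c * u x) (f x) := by
  rw [hu.lap_eq, inner_sub_right, inner_add_right, real_inner_smul_right, real_inner_smul_right]
  simp only [Complex.inner, Complex.sq_norm, Complex.normSq_apply, Complex.mul_re, Complex.mul_im,
    Complex.conj_re, Complex.conj_im, Complex.I_re, Complex.I_im]
  ring

theorem abs_fluxField_le {B : Ed d → ℝ} {x : Ed d} (hB0 : 0 ≤ B x) {c : ℂ} (hc : ‖c‖ ≤ 1)
    (u : Ed d → ℂ) (i : Fin d) :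
    |fluxField B c u i x| ≤ B x * ‖u x‖ ^ 2 + B x * gradNormSq u x := by
  rw [fluxField, abs_mul, abs_of_nonneg hB0, ← mul_add]
  refine mul_le_mul_of_nonneg_left ?_ hB0
  calc |inner ℝ (c * u x) (pd u i x)| ≤ ‖c * u x‖ * ‖pd u i x‖ := abs_real_inner_le_norm _ _
    _ ≤ ‖u x‖ * ‖pd u i x‖ := by
        rw [norm_mul]
        gcongr
        exact mul_le_of_le_one_left (norm_nonneg _) hc
    _ ≤ ‖u x‖ ^ 2 + gradNormSq u x := by
        nlinarith [two_mul_le_add_sq ‖u x‖ ‖pd u i x‖, norm_pd_sq_le u i x,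
          mul_nonneg (norm_nonneg (u x)) (norm_nonneg (pd u i x))]

variable {B B₁ : Ed d → ℝ}

/-- The equation tested against `c B u`. -/
theorem integral_nonpos_of_le_flux (hd : 2 ≤ d) (hu : SolvesHelmholtz W s f u)
    (hB : ContDiff ℝ 1 B) (hB0 : ∀ x, 0 ≤ B x)
    (hB₁ : ∀ x i, fderiv ℝ B x (basisVec i) = B₁ x * x i)
    (hS : Integrable fun x => B x * ‖u x‖ ^ 2) (hN : Integrable fun x => B x * gradNormSq u x)
    {c : ℂ} (hc : ‖c‖ ≤ 1) {h : Ed d → ℝ} (hh : Integrable h)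
    (hle : ∀ x, h x ≤ B₁ x * inner ℝ (c * u x) (eulerDeriv u x) +
      B x * ((c.re * W x + c.im * s) * ‖u x‖ ^ 2 - inner ℝ (c * u x) (f x) +
        c.re * gradNormSq u x)) : ∫ x, h x ≤ 0 := by
  refine integral_nonpos_of_le_divergence hd (F := fluxField B c u)
    (fun i x _ => contDiffAt_fluxField hu.contDiff hB.contDiffAt c i)
    ((hB.continuous.mul (hu.contDiff.continuous.norm.pow 2)).add
      (hB.continuous.mul (contDiff_gradNormSq hu.contDiff).continuous))
    (hS.add hN) (fun i x => abs_fluxField_le (hB0 x) hc u i) hh fun x _ => ?_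
  rw [divergence_fluxField hu.contDiff hB.contDiffAt (hB₁ x), hu.inner_lap_eq]
  exact hle x

theorem integral_mul_gradNormSq_le (hd : 2 ≤ d) (hu : SolvesHelmholtz W s f u)
    (hB : ContDiff ℝ 1 B) (hB0 : ∀ x, 0 ≤ B x)
    (hB₁ : ∀ x i, fderiv ℝ B x (basisVec i) = B₁ x * x i)
    (hS : Integrable fun x => B x * ‖u x‖ ^ 2) (hN : Integrable fun x => B x * gradNormSq u x)
    {K : ℝ} (hK : ∀ x, |B₁ x| * ‖x‖ ≤ K * B x)
    (hfu : Integrable fun x => B x * (‖f x‖ * ‖u x‖)) {c₀ : ℝ} (hW : ∀ x, |W x| ≤ c₀) :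
    ∫ x, B x * gradNormSq u x ≤ (2 * c₀ + K ^ 2) * (∫ x, B x * ‖u x‖ ^ 2) +
      2 * ∫ x, B x * (‖f x‖ * ‖u x‖) := by
  have hint := integral_nonpos_of_le_flux hd hu hB hB0 hB₁ hS hN (c := 1) (by simp)
    (integrable_linearCombination_three (1 / 2) (-(c₀ + K ^ 2 / 2)) (-1) hN hS hfu) fun x => ?_
  · rw [integral_linearCombination_three _ _ _ hN hS hfu] at hint
    linarith
  · have hcross :=
      (abs_le.1 (abs_mul_inner_eulerDeriv_le_half_add_sq_mul (u x) u (hB0 x) (hK x))).1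
    have hforce : B x * inner ℝ (u x) (f x) ≤ B x * (‖f x‖ * ‖u x‖) :=
      mul_le_mul_of_nonneg_left ((real_inner_le_norm _ _).trans_eq (mul_comm _ _)) (hB0 x)
    have hpot : -c₀ * (B x * ‖u x‖ ^ 2) ≤ W x * (B x * ‖u x‖ ^ 2) :=
      mul_le_mul_of_nonneg_right (abs_le.1 (hW x)).1 (mul_nonneg (hB0 x) (by positivity))
    simp only [one_mul, Complex.one_re, Complex.one_im, zero_mul, add_zero]
    linarith

theorem mul_integral_mul_norm_sq_le (hd : 2 ≤ d) (hu : SolvesHelmholtz W s f u)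
    (hB : ContDiff ℝ 1 B) (hB0 : ∀ x, 0 ≤ B x)
    (hB₁ : ∀ x i, fderiv ℝ B x (basisVec i) = B₁ x * x i)
    (hS : Integrable fun x => B x * ‖u x‖ ^ 2) (hN : Integrable fun x => B x * gradNormSq u x)
    {K : ℝ} (hK : ∀ x, |B₁ x| * ‖x‖ ≤ K * B x)
    (hfu : Integrable fun x => B x * (‖f x‖ * ‖u x‖)) {ε σ : ℝ} (hσ : |σ| = 1) (hs : s = σ * ε) :
    ε * (∫ x, B x * ‖u x‖ ^ 2) ≤ (∫ x, B x * (‖f x‖ * ‖u x‖)) +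
      K / 2 * ((∫ x, B x * ‖u x‖ ^ 2) + ∫ x, B x * gradNormSq u x) := by
  have hσ2 : σ * σ = 1 := by rw [← abs_mul_abs_self, hσ, one_mul]
  have hc : ‖(σ * Complex.I : ℂ)‖ = 1 := by simp [hσ]
  have hint := integral_nonpos_of_le_flux hd hu hB hB0 hB₁ hS hN hc.le
    (integrable_linearCombination_three (ε - K / 2) (-1) (-(K / 2)) hS hfu hN) fun x => ?_
  · rw [integral_linearCombination_three _ _ _ hS hfu hN] at hint
    linarith
  · have hnorm : ‖(σ * Complex.I : ℂ) * u x‖ = ‖u x‖ := by rw [norm_mul, hc, one_mul]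
    have hcross := (abs_le.1 (abs_mul_inner_eulerDeriv_le_half_mul_add
      ((σ * Complex.I : ℂ) * u x) u (hK x))).1
    have hforce : B x * inner ℝ ((σ * Complex.I : ℂ) * u x) (f x) ≤ B x * (‖f x‖ * ‖u x‖) := by
      refine mul_le_mul_of_nonneg_left ((real_inner_le_norm _ _).trans_eq ?_) (hB0 x)
      rw [hnorm, mul_comm]
    have hre : (σ * Complex.I : ℂ).re = 0 := by simp
    have him : (σ * Complex.I : ℂ).im * s = ε := by
      rw [hs, Complex.im_ofReal_mul, Complex.I_im, mul_one, ← mul_assoc, hσ2, one_mul]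
    rw [hnorm] at hcross
    rw [hre, him]
    linarith

end Energy

/-! ### Decaying weights -/

section DecayWeight

theorem integrable_and_integral_le_of_tendsto {X : Type*} [MeasurableSpace X] {μ : Measure X}
    {F : ℕ → X → ℝ} {G : X → ℝ} {M : ℝ} (hF0 : ∀ n x, 0 ≤ F n x)
    (hF : ∀ n, Integrable (F n) μ) (hM : ∀ n, ∫ x, F n x ∂μ ≤ M)
    (hlim : ∀ x, Filter.Tendsto (fun n => F n x) Filter.atTop (nhds (G x))) :
    Integrable G μ ∧ ∫ x, G x ∂μ ≤ M := by
  have hG0 : ∀ x, 0 ≤ G x := fun x => ge_of_tendsto' (hlim x) fun n => hF0 n x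
  have hM0 : 0 ≤ M := (integral_nonneg (hF0 0)).trans (hM 0)
  have hmeas (n : ℕ) : AEStronglyMeasurable (F n) μ := (hF n).aestronglyMeasurable
  have hfatou : ∫⁻ x, ENNReal.ofReal (G x) ∂μ ≤ ENNReal.ofReal M := by
    have hliminf (x : X) : Filter.liminf (fun n => ENNReal.ofReal (F n x)) Filter.atTop =
        ENNReal.ofReal (G x) := (ENNReal.tendsto_ofReal (hlim x)).liminf_eq
    simp only [← hliminf]
    refine (lintegral_liminf_le' fun n => (hmeas n).aemeasurable.ennreal_ofReal).trans <|
      Filter.liminf_le_of_frequently_le' <| .of_forall fun n => ?_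
    rw [← ofReal_integral_eq_lintegral_ofReal (hF n) (.of_forall (hF0 n))]
    exact ENNReal.ofReal_le_ofReal (hM n)
  have hG : Integrable G μ :=
    ⟨aestronglyMeasurable_of_tendsto_ae _ hmeas (.of_forall hlim),
      (hasFiniteIntegral_iff_ofReal (.of_forall hG0)).2
        (hfatou.trans_lt ENNReal.ofReal_lt_top)⟩
  rw [← ofReal_integral_eq_lintegral_ofReal hG (.of_forall hG0)] at hfatou
  exact ⟨hG, (ENNReal.ofReal_le_ofReal_iff hM0).1 hfatou⟩

variable {d : ℕ}

theorem inner_basisVec (x : Ed d) (i : Fin d) : inner ℝ x (basisVec i) = x i := by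
  simp [EuclideanSpace.inner_single_right]

/-- The weight `(1 + t²|x|²)^{-m}`, equivalent to `(1 + |x|)^{-2m}` for each `t > 0` and tending to
`1` as `t → 0`. -/
def decayWeight (m t : ℝ) (x : Ed d) : ℝ := (1 + t ^ 2 * ‖x‖ ^ 2) ^ (-m)

theorem decayWeight_pos (m t : ℝ) (x : Ed d) : 0 < decayWeight m t x := by
  unfold decayWeight
  positivity

theorem contDiff_decayWeight (m t : ℝ) : ContDiff ℝ 1 (decayWeight m t : Ed d → ℝ) :=
  (contDiff_const.add (contDiff_const.mul (contDiff_norm_sq ℝ))).rpow_const_of_ne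
    fun _ => by positivity

theorem fderiv_decayWeight (m t : ℝ) (x v : Ed d) :
    fderiv ℝ (decayWeight m t) x v =
      -(2 * m * t ^ 2) * decayWeight (m + 1) t x * inner ℝ x v := by
  have hbase : HasFDerivAt (fun y : Ed d => 1 + t ^ 2 * ‖y‖ ^ 2) (t ^ 2 • (2 • innerSL ℝ x)) x :=
    ((hasStrictFDerivAt_norm_sq x).hasFDerivAt.const_mul (t ^ 2)).const_add 1
  have hfderiv : fderiv ℝ (decayWeight m t) x = _ :=
    (hbase.rpow_const (p := -m) (Or.inl (by positivity))).fderiv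
  rw [hfderiv]
  simp only [decayWeight, smul_apply, innerSL_apply_apply, smul_eq_mul, nsmul_eq_mul]
  rw [show -(m + 1) = -m - 1 by ring]
  push_cast
  ring

theorem decayWeight_eq_mul_succ (m t : ℝ) (x : Ed d) :
    decayWeight m t x = decayWeight (m + 1) t x * (1 + t ^ 2 * ‖x‖ ^ 2) := by
  rw [decayWeight, decayWeight, ← Real.rpow_add_one (by positivity)]
  congr 1
  ring

theorem decayWeight_one_eq_mul_succ (m : ℝ) (x : Ed d) :
    decayWeight m 1 x = decayWeight (m + 1) 1 x * (1 + ‖x‖ ^ 2) := by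
  rw [decayWeight_eq_mul_succ, one_pow, one_mul]

theorem decayWeight_neg (m t : ℝ) (x : Ed d) : decayWeight (-m) t x = (decayWeight m t x)⁻¹ := by
  rw [decayWeight, decayWeight, ← Real.rpow_neg (by positivity)]

theorem abs_deriv_decayWeight_mul_norm_le {m t : ℝ} (hm : 0 ≤ m) (ht : 0 ≤ t) (x : Ed d) :
    |-(2 * m * t ^ 2) * decayWeight (m + 1) t x| * ‖x‖ ≤ m * t * decayWeight m t x := by
  have hpos := decayWeight_pos (m + 1) t x
  have hamgm : 2 * (t * ‖x‖) ≤ 1 + t ^ 2 * ‖x‖ ^ 2 := by nlinarith [sq_nonneg (1 - t * ‖x‖)]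
  rw [decayWeight_eq_mul_succ m, abs_mul, abs_neg, abs_of_nonneg (by positivity), abs_of_pos hpos]
  calc 2 * m * t ^ 2 * decayWeight (m + 1) t x * ‖x‖ =
        m * t * decayWeight (m + 1) t x * (2 * (t * ‖x‖)) := by ring
    _ ≤ m * t * decayWeight (m + 1) t x * (1 + t ^ 2 * ‖x‖ ^ 2) := by gcongr
    _ = _ := by ring

theorem decayWeight_le_one {m : ℝ} (hm : 0 ≤ m) (t : ℝ) (x : Ed d) : decayWeight m t x ≤ 1 :=
  Real.rpow_le_one_of_one_le_of_nonpos (by linarith [sq_nonneg (t * ‖x‖), mul_pow t ‖x‖ 2])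
    (by linarith)

theorem decayWeight_le_mul_one {m t : ℝ} (hm : 0 ≤ m) (ht : 0 < t) (ht1 : t ≤ 1) (x : Ed d) :
    decayWeight m t x ≤ (t ^ 2) ^ (-m) * decayWeight m 1 x := by
  rw [decayWeight, decayWeight, ← Real.mul_rpow (by positivity) (by positivity)]
  refine Real.rpow_le_rpow_of_nonpos (by positivity) ?_ (by linarith)
  linarith [pow_le_one₀ ht.le ht1 (n := 2)]

theorem tendsto_decayWeight_one (m t : ℝ) (x : Ed d) :
    Filter.Tendsto (fun n : ℕ => decayWeight m (t / (n + 1)) x) Filter.atTop (nhds 1) := by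
  have hscale : Filter.Tendsto (fun n : ℕ => t / ((n : ℝ) + 1)) Filter.atTop (nhds 0) :=
    tendsto_const_div_atTop_nhds_zero_nat t |>.comp (Filter.tendsto_add_atTop_nat 1)
      |>.congr fun n => by simp
  have hcont : Continuous fun s : ℝ => decayWeight m s x :=
    Continuous.rpow_const (by fun_prop) fun _ => Or.inl (by positivity)
  simpa [decayWeight, Function.comp_def] using (hcont.tendsto 0).comp hscale

variable {m : ℝ} {G : Ed d → ℝ}

theorem integrable_decayWeight_mul_of_one {t : ℝ} (hm : 0 ≤ m) (ht : 0 < t) (ht1 : t ≤ 1)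
    (hG0 : ∀ x, 0 ≤ G x) (hG : Continuous G) (hint : Integrable fun x => decayWeight m 1 x * G x) :
    Integrable fun x => decayWeight m t x * G x := by
  refine (hint.const_mul ((t ^ 2) ^ (-m))).mono'
    ((contDiff_decayWeight m t).continuous.mul hG).aestronglyMeasurable (.of_forall fun x => ?_)
  rw [Real.norm_of_nonneg (mul_nonneg (decayWeight_pos m t x).le (hG0 x)), ← mul_assoc]
  exact mul_le_mul_of_nonneg_right (decayWeight_le_mul_one hm ht ht1 x) (hG0 x)

theorem integrable_decayWeight_mul (hm : 0 ≤ m) (t : ℝ) (hG : Integrable G) :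
    Integrable fun x => decayWeight m t x * G x :=
  hG.bdd_mul (c := 1) (contDiff_decayWeight m t).continuous.aestronglyMeasurable
    (.of_forall fun x => by
      rw [Real.norm_of_nonneg (decayWeight_pos m t x).le]
      exact decayWeight_le_one hm t x)

theorem integral_decayWeight_mul_le (hm : 0 ≤ m) (t : ℝ) (hG0 : ∀ x, 0 ≤ G x) (hG : Integrable G) :
    ∫ x, decayWeight m t x * G x ≤ ∫ x, G x :=
  integral_mono (integrable_decayWeight_mul hm t hG) hG fun x =>
    mul_le_of_le_one_left (hG0 x) (decayWeight_le_one hm t x)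

theorem integrable_decayWeight_succ_mul (hint : Integrable fun x => decayWeight m 1 x * G x) :
    Integrable fun x => decayWeight (m + 1) 1 x * G x := by
  refine (integrable_decayWeight_mul zero_le_one 1 hint).congr (.of_forall fun x => ?_)
  simp only [decayWeight_one_eq_mul_succ m]
  simp only [decayWeight, one_pow, one_mul, Real.rpow_neg_one]
  have : 1 + ‖x‖ ^ 2 ≠ 0 := by positivity
  field_simp

theorem integrable_norm_sq_mul_decayWeight_succ_mul
    (hint : Integrable fun x => decayWeight m 1 x * G x) :
    Integrable fun x => ‖x‖ ^ 2 * decayWeight (m + 1) 1 x * G x := by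
  refine (hint.sub (integrable_decayWeight_succ_mul hint)).congr (.of_forall fun x => ?_)
  simp only [Pi.sub_apply, decayWeight_one_eq_mul_succ m]
  ring

theorem integral_decayWeight_mul_eq_add (hint : Integrable fun x => decayWeight m 1 x * G x) :
    ∫ x, decayWeight m 1 x * G x = (∫ x, decayWeight (m + 1) 1 x * G x) +
      ∫ x, ‖x‖ ^ 2 * decayWeight (m + 1) 1 x * G x := by
  rw [← integral_add (integrable_decayWeight_succ_mul hint)
    (integrable_norm_sq_mul_decayWeight_succ_mul hint)]
  congr 1 with x
  rw [decayWeight_one_eq_mul_succ m]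
  ring

end DecayWeight

/-! ### Solutions with absorption -/

/-- A solution of `-Δu + Wu + iσεu = f` with `σ = ±1`, absorption `0 < ε ≤ 1` and a potential
bounded by `c₀`, where `u, ∇u ∈ L²((1+|x|²)^{-m})` and `f` lies in the dual space. -/
structure AbsorptiveSolution {d : ℕ} (m c₀ σ ε : ℝ) (W : Ed d → ℝ) (f u : Ed d → ℂ) : Prop where
  solves : SolvesHelmholtz W (σ * ε) f u
  abs_sign : |σ| = 1
  absorption_pos : 0 < ε
  absorption_le_one : ε ≤ 1
  abs_potential_le : ∀ x, |W x| ≤ c₀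
  integrable_norm_sq : Integrable fun x => decayWeight m 1 x * ‖u x‖ ^ 2
  integrable_gradNormSq : Integrable fun x => decayWeight m 1 x * gradNormSq u x
  integrable_forcing : Integrable fun x => decayWeight (-m) 1 x * ‖f x‖ ^ 2

theorem mul_le_and_mul_le_of_energy_le {ε s n J K c₀ : ℝ} (hs : 0 ≤ s) (hJ : 0 ≤ J) (hc₀ : 0 ≤ c₀)
    (hε : 0 ≤ ε) (hε1 : ε ≤ 1) (hK : 0 ≤ K) (hK1 : K ≤ 1) (hKε : K * (c₀ + 1) ≤ ε / 2)
    (hgrad : n ≤ (2 * c₀ + K ^ 2) * s + 2 * J) (hmass : ε * s ≤ J + K / 2 * (s + n)) :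
    ε * s ≤ 4 * J ∧ ε * n ≤ (8 * c₀ + 6) * J := by
  have hn : n ≤ (2 * c₀ + 1) * s + 2 * J := by
    have : K ^ 2 * s ≤ 1 * s := by gcongr; exact pow_le_one₀ hK hK1
    linarith
  have hεs : ε * s ≤ 4 * J := by
    have hcross : K / 2 * (s + n) ≤ K / 2 * ((2 * c₀ + 2) * s + 2 * J) := by
      refine mul_le_mul_of_nonneg_left ?_ (by positivity)
      linarith
    have hsmall : K * (c₀ + 1) * s ≤ ε / 2 * s := by gcongr
    have hKJ : K * J ≤ 1 * J := by gcongr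
    linarith
  have hεn : ε * n ≤ ε * ((2 * c₀ + 1) * s + 2 * J) := by gcongr
  have hscaled : (2 * c₀ + 1) * (ε * s) ≤ (2 * c₀ + 1) * (4 * J) := by gcongr
  have hεJ : ε * J ≤ 1 * J := by gcongr
  exact ⟨hεs, by linarith⟩

theorem neg_le_two_mul_inner_eulerDeriv {d : ℕ} {η : ℝ} (hη : 0 < η) (z : ℂ) (u : Ed d → ℂ)
    (x : Ed d) :
    -(η * gradNormSq u x + 1 / η * (‖x‖ ^ 2 * ‖z‖ ^ 2)) ≤ 2 * inner ℝ z (eulerDeriv u x) := by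
  have hcs : |inner ℝ z (eulerDeriv u x)| ≤ ‖z‖ * (‖x‖ * √(gradNormSq u x)) :=
    (abs_real_inner_le_norm _ _).trans (by gcongr; exact norm_eulerDeriv_le u x)
  have hsq : 1 / η * (η * √(gradNormSq u x) - ‖x‖ * ‖z‖) ^ 2 =
      η * √(gradNormSq u x) ^ 2 - 2 * (‖z‖ * (‖x‖ * √(gradNormSq u x))) +
        1 / η * (‖x‖ ^ 2 * ‖z‖ ^ 2) := by
    field_simp
    ring
  have : 0 ≤ 1 / η * (η * √(gradNormSq u x) - ‖x‖ * ‖z‖) ^ 2 := by positivity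
  rw [Real.sq_sqrt (gradNormSq_nonneg u x)] at hsq
  linarith [(abs_le.1 hcs).1]

theorem abs_massField_decayWeight_le {d : ℕ} (m : ℝ) (u : Ed d → ℂ) (i : Fin d)
    (x : Ed d) :
    |massField (decayWeight (m + 1) 1) u i x| ≤ decayWeight m 1 x * ‖u x‖ ^ 2 := by
  have hpos := decayWeight_pos (m + 1) 1 x
  have hcoord : |x i| ≤ 1 + ‖x‖ ^ 2 := by
    nlinarith [PiLp.norm_apply_le x i, Real.norm_eq_abs (x i), sq_nonneg (‖x‖ - 1), norm_nonneg x]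
  rw [massField, abs_mul, abs_mul, abs_of_pos hpos, abs_of_nonneg (by positivity : 0 ≤ ‖u x‖ ^ 2),
    decayWeight_one_eq_mul_succ m]
  gcongr

theorem le_divergence_massField_decayWeight {d : ℕ} (hd : 1 ≤ d) {m η : ℝ} (hm : 0 ≤ m)
    (hη : 0 < η) {u : Ed d → ℂ} (hu : ContDiff ℝ 2 u) (x : Ed d) :
    1 * (decayWeight (m + 1) 1 x * ‖u x‖ ^ 2) +
        -(2 * (m + 1) + 1 / η) * (‖x‖ ^ 2 * decayWeight (m + 1) 1 x * ‖u x‖ ^ 2) +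
        -η * (decayWeight m 1 x * gradNormSq u x) ≤
      divergence (massField (decayWeight (m + 1) 1) u) x := by
  have hpos := decayWeight_pos (m + 1) 1 x
  have hgrad := gradNormSq_nonneg u x
  have hd1 : (1 : ℝ) ≤ d := by exact_mod_cast hd
  have hmono : decayWeight (m + 1 + 1) 1 x ≤ decayWeight (m + 1) 1 x := by
    rw [decayWeight_one_eq_mul_succ (m + 1)]
    exact le_mul_of_one_le_right (decayWeight_pos _ 1 x).le (by linarith [sq_nonneg ‖x‖])
  rw [divergence_massField hu (contDiff_decayWeight _ _).contDiffAt, fderiv_decayWeight,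
    real_inner_self_eq_norm_sq, decayWeight_one_eq_mul_succ m]
  have hcross := mul_le_mul_of_nonneg_left (neg_le_two_mul_inner_eulerDeriv hη (u x) u x) hpos.le
  have hdim : 1 * (decayWeight (m + 1) 1 x * ‖u x‖ ^ 2) ≤
      d * (decayWeight (m + 1) 1 x * ‖u x‖ ^ 2) := by gcongr
  have hdecay : 2 * (m + 1) * (‖x‖ ^ 2 * ‖u x‖ ^ 2) * decayWeight (m + 1 + 1) 1 x ≤
      2 * (m + 1) * (‖x‖ ^ 2 * ‖u x‖ ^ 2) * decayWeight (m + 1) 1 x := by gcongr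
  have : 0 ≤ η * (decayWeight (m + 1) 1 x * ‖x‖ ^ 2 * gradNormSq u x) := by positivity
  linarith

theorem norm_mul_norm_le_decayWeight_dual {d : ℕ} {η : ℝ} (hη : 0 < η) (m : ℝ)
    (f u : Ed d → ℂ) (x : Ed d) :
    ‖f x‖ * ‖u x‖ ≤ η * (decayWeight m 1 x * ‖u x‖ ^ 2) +
      1 / (4 * η) * (decayWeight (-m) 1 x * ‖f x‖ ^ 2) := by
  have hpos := decayWeight_pos m 1 x
  have hsq : (2 * η * decayWeight m 1 x * ‖u x‖ - ‖f x‖) ^ 2 / (4 * η * decayWeight m 1 x) =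
      η * (decayWeight m 1 x * ‖u x‖ ^ 2) +
        1 / (4 * η) * ((decayWeight m 1 x)⁻¹ * ‖f x‖ ^ 2) - ‖f x‖ * ‖u x‖ := by
    field_simp
    ring
  have : 0 ≤ (2 * η * decayWeight m 1 x * ‖u x‖ - ‖f x‖) ^ 2 / (4 * η * decayWeight m 1 x) := by
    positivity
  rw [decayWeight_neg]
  linarith

namespace AbsorptiveSolution

variable {d : ℕ} {m c₀ σ ε : ℝ} {W : Ed d → ℝ} {f u : Ed d → ℂ}

theorem bound_nonneg (h : AbsorptiveSolution m c₀ σ ε W f u) : 0 ≤ c₀ :=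
  (abs_nonneg _).trans (h.abs_potential_le 0)

theorem continuous_norm_sq (h : AbsorptiveSolution m c₀ σ ε W f u) :
    Continuous fun x => ‖u x‖ ^ 2 :=
  h.solves.contDiff.continuous.norm.pow 2

theorem aestronglyMeasurable_norm_forcing (h : AbsorptiveSolution m c₀ σ ε W f u) :
    AEStronglyMeasurable fun x => ‖f x‖ := by
  have hsq : AEStronglyMeasurable fun x =>
      √(decayWeight m 1 x * (decayWeight (-m) 1 x * ‖f x‖ ^ 2)) :=
    Real.continuous_sqrt.comp_aestronglyMeasurable
      ((contDiff_decayWeight m 1).continuous.aestronglyMeasurable.mul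
        h.integrable_forcing.aestronglyMeasurable)
  refine hsq.congr (.of_forall fun x => ?_)
  simp only [decayWeight_neg]
  rw [mul_inv_cancel_left₀ (decayWeight_pos m 1 x).ne', Real.sqrt_sq (norm_nonneg _)]

theorem integrable_norm_mul_norm (h : AbsorptiveSolution m c₀ σ ε W f u) :
    Integrable fun x => ‖f x‖ * ‖u x‖ := by
  refine ((h.integrable_norm_sq.const_mul 1).add
    (h.integrable_forcing.const_mul (1 / (4 * 1)))).mono' (h.aestronglyMeasurable_norm_forcing.mul
      h.solves.contDiff.continuous.norm.aestronglyMeasurable) (.of_forall fun x => ?_)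
  rw [Real.norm_of_nonneg (by positivity)]
  exact norm_mul_norm_le_decayWeight_dual one_pos m f u x

theorem integral_norm_mul_norm_le (h : AbsorptiveSolution m c₀ σ ε W f u) {η : ℝ} (hη : 0 < η) :
    ∫ x, ‖f x‖ * ‖u x‖ ≤ η * (∫ x, decayWeight m 1 x * ‖u x‖ ^ 2) +
      1 / (4 * η) * ∫ x, decayWeight (-m) 1 x * ‖f x‖ ^ 2 := by
  have hS := h.integrable_norm_sq.const_mul η
  have hf := h.integrable_forcing.const_mul (1 / (4 * η))
  rw [← integral_const_mul, ← integral_const_mul, ← integral_add hS hf]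
  exact integral_mono h.integrable_norm_mul_norm (hS.add hf)
    (norm_mul_norm_le_decayWeight_dual hη m f u)

section FixedScale

variable {t : ℝ}

theorem integrable_decayWeight_mul_norm_sq (h : AbsorptiveSolution m c₀ σ ε W f u) (hm : 0 ≤ m)
    (ht : 0 < t) (ht1 : t ≤ 1) : Integrable fun x => decayWeight m t x * ‖u x‖ ^ 2 :=
  integrable_decayWeight_mul_of_one hm ht ht1 (fun _ => by positivity) h.continuous_norm_sq
    h.integrable_norm_sq

theorem integrable_decayWeight_mul_gradNormSq (h : AbsorptiveSolution m c₀ σ ε W f u)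
    (hm : 0 ≤ m) (ht : 0 < t) (ht1 : t ≤ 1) :
    Integrable fun x => decayWeight m t x * gradNormSq u x :=
  integrable_decayWeight_mul_of_one hm ht ht1 (gradNormSq_nonneg u)
    (contDiff_gradNormSq h.solves.contDiff).continuous h.integrable_gradNormSq

theorem integral_decayWeight_mul_gradNormSq_le (h : AbsorptiveSolution m c₀ σ ε W f u)
    (hd : 2 ≤ d) (hm : 0 ≤ m) (ht : 0 < t) (ht1 : t ≤ 1) :
    ∫ x, decayWeight m t x * gradNormSq u x ≤
      (2 * c₀ + (m * t) ^ 2) * (∫ x, decayWeight m t x * ‖u x‖ ^ 2) +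
        2 * ∫ x, ‖f x‖ * ‖u x‖ := by
  have henergy := integral_mul_gradNormSq_le hd h.solves (contDiff_decayWeight m t)
    (fun x => (decayWeight_pos m t x).le)
    (fun x i => by rw [fderiv_decayWeight, inner_basisVec])
    (h.integrable_decayWeight_mul_norm_sq hm ht ht1)
    (h.integrable_decayWeight_mul_gradNormSq hm ht ht1)
    (abs_deriv_decayWeight_mul_norm_le hm ht.le)
    (integrable_decayWeight_mul hm t h.integrable_norm_mul_norm) h.abs_potential_le
  linarith [integral_decayWeight_mul_le hm t (fun _ => by positivity) h.integrable_norm_mul_norm]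

theorem mul_integral_decayWeight_mul_norm_sq_le (h : AbsorptiveSolution m c₀ σ ε W f u)
    (hd : 2 ≤ d) (hm : 0 ≤ m) (ht : 0 < t) (ht1 : t ≤ 1) :
    ε * (∫ x, decayWeight m t x * ‖u x‖ ^ 2) ≤ (∫ x, ‖f x‖ * ‖u x‖) +
      m * t / 2 * ((∫ x, decayWeight m t x * ‖u x‖ ^ 2) +
        ∫ x, decayWeight m t x * gradNormSq u x) := by
  have henergy := mul_integral_mul_norm_sq_le hd h.solves (contDiff_decayWeight m t)
    (fun x => (decayWeight_pos m t x).le)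
    (fun x i => by rw [fderiv_decayWeight, inner_basisVec])
    (h.integrable_decayWeight_mul_norm_sq hm ht ht1)
    (h.integrable_decayWeight_mul_gradNormSq hm ht ht1)
    (abs_deriv_decayWeight_mul_norm_le hm ht.le)
    (integrable_decayWeight_mul hm t h.integrable_norm_mul_norm) h.abs_sign rfl
  linarith [integral_decayWeight_mul_le hm t (fun _ => by positivity) h.integrable_norm_mul_norm]

theorem decayWeight_energy_le (h : AbsorptiveSolution m c₀ σ ε W f u) (hd : 2 ≤ d) (hm : 0 ≤ m)
    (ht : 0 < t) (ht1 : t ≤ 1) (hmt : m * t * (c₀ + 1) ≤ ε / 2) :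
    ε * (∫ x, decayWeight m t x * ‖u x‖ ^ 2) ≤ 4 * ∫ x, ‖f x‖ * ‖u x‖ ∧
      ε * (∫ x, decayWeight m t x * gradNormSq u x) ≤
        (8 * c₀ + 6) * ∫ x, ‖f x‖ * ‖u x‖ := by
  have hmt0 : 0 ≤ m * t := by positivity
  have hmt1 : m * t ≤ 1 := by
    nlinarith [mul_nonneg hmt0 h.bound_nonneg, h.absorption_le_one]
  exact mul_le_and_mul_le_of_energy_le
    (integral_nonneg fun x => mul_nonneg (decayWeight_pos m t x).le (by positivity))
    (integral_nonneg fun x => by positivity) h.bound_nonneg h.absorption_pos.le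
    h.absorption_le_one hmt0 hmt1 hmt (h.integral_decayWeight_mul_gradNormSq_le hd hm ht ht1)
    (h.mul_integral_decayWeight_mul_norm_sq_le hd hm ht ht1)

end FixedScale

theorem exists_scale (h : AbsorptiveSolution m c₀ σ ε W f u) (hm : 0 ≤ m) :
    ∃ t₀ : ℝ, ∀ n : ℕ, 0 < t₀ / (n + 1) ∧ t₀ / (n + 1) ≤ 1 ∧
      m * (t₀ / (n + 1)) * (c₀ + 1) ≤ ε / 2 := by
  have hc₀ := h.bound_nonneg
  have hε := h.absorption_pos
  set t₀ := ε / (2 * (m + 1) * (c₀ + 1)) with ht₀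
  have ht₀_pos : 0 < t₀ := by positivity
  have ht₀_eq : t₀ * (2 * (m + 1) * (c₀ + 1)) = ε := by rw [ht₀]; field_simp
  have hnonneg : 0 ≤ t₀ * m ∧ 0 ≤ t₀ * c₀ ∧ 0 ≤ t₀ * m * c₀ :=
    ⟨by positivity, by positivity, by positivity⟩
  refine ⟨t₀, fun n => ?_⟩
  have hn : t₀ / ((n : ℝ) + 1) ≤ t₀ := div_le_self ht₀_pos.le (by linarith [n.cast_nonneg (α := ℝ)])
  refine ⟨by positivity, by linarith [h.absorption_le_one], ?_⟩
  calc m * (t₀ / (n + 1)) * (c₀ + 1) ≤ m * t₀ * (c₀ + 1) := by gcongr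
    _ ≤ ε / 2 := by linarith

theorem integrable_and_mul_integral_le (h : AbsorptiveSolution m c₀ σ ε W f u) (hm : 0 ≤ m)
    {G : Ed d → ℝ} (hG0 : ∀ x, 0 ≤ G x) {M : ℝ}
    (hG : ∀ t, 0 < t → t ≤ 1 → Integrable fun x => decayWeight m t x * G x)
    (hM : ∀ t, 0 < t → t ≤ 1 → m * t * (c₀ + 1) ≤ ε / 2 →
      ε * (∫ x, decayWeight m t x * G x) ≤ M) :
    Integrable G ∧ ε * ∫ x, G x ≤ M := by
  obtain ⟨t₀, hscale⟩ := h.exists_scale hm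
  simp only [← le_div_iff₀' h.absorption_pos] at hM ⊢
  refine integrable_and_integral_le_of_tendsto
    (F := fun n x => decayWeight m (t₀ / (n + 1)) x * G x)
    (fun n x => mul_nonneg (decayWeight_pos _ _ x).le (hG0 x))
    (fun n => hG _ (hscale n).1 (hscale n).2.1)
    (fun n => hM _ (hscale n).1 (hscale n).2.1 (hscale n).2.2) fun x => ?_
  simpa using (tendsto_decayWeight_one m t₀ x).mul_const (G x)

theorem integrable_norm_sq_and_mul_integral_le (h : AbsorptiveSolution m c₀ σ ε W f u)
    (hd : 2 ≤ d) (hm : 0 ≤ m) :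
    (Integrable fun x => ‖u x‖ ^ 2) ∧
      ε * ∫ x, ‖u x‖ ^ 2 ≤ 4 * ∫ x, ‖f x‖ * ‖u x‖ :=
  h.integrable_and_mul_integral_le hm (fun _ => by positivity)
    (fun _ ht ht1 => h.integrable_decayWeight_mul_norm_sq hm ht ht1)
    fun _ ht ht1 hmt => (h.decayWeight_energy_le hd hm ht ht1 hmt).1

theorem integrable_gradNormSq_and_mul_integral_le (h : AbsorptiveSolution m c₀ σ ε W f u)
    (hd : 2 ≤ d) (hm : 0 ≤ m) :
    Integrable (gradNormSq u) ∧
      ε * ∫ x, gradNormSq u x ≤ (8 * c₀ + 6) * ∫ x, ‖f x‖ * ‖u x‖ :=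
  h.integrable_and_mul_integral_le hm (gradNormSq_nonneg u)
    (fun _ ht ht1 => h.integrable_decayWeight_mul_gradNormSq hm ht ht1)
    fun _ ht ht1 hmt => (h.decayWeight_energy_le hd hm ht ht1 hmt).2

theorem integral_near_origin_le (h : AbsorptiveSolution m c₀ σ ε W f u) (hd : 2 ≤ d) (hm : 0 ≤ m)
    {η : ℝ} (hη : 0 < η) :
    ∫ x, decayWeight (m + 1) 1 x * ‖u x‖ ^ 2 ≤
      (2 * (m + 1) + 1 / η) * (∫ x, ‖x‖ ^ 2 * decayWeight (m + 1) 1 x * ‖u x‖ ^ 2) +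
        η * ∫ x, decayWeight m 1 x * gradNormSq u x := by
  have hnear := integrable_decayWeight_succ_mul h.integrable_norm_sq
  have hfar := integrable_norm_sq_mul_decayWeight_succ_mul h.integrable_norm_sq
  have hdiv := integral_nonpos_of_le_divergence hd (F := massField (decayWeight (m + 1) 1) u)
    (fun i x _ => contDiffAt_massField h.solves.contDiff (contDiff_decayWeight _ _).contDiffAt i)
    ((contDiff_decayWeight m 1).continuous.mul h.continuous_norm_sq) h.integrable_norm_sq
    (fun i x => abs_massField_decayWeight_le m u i x)
    (integrable_linearCombination_three _ _ _ hnear hfar h.integrable_gradNormSq)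
    fun x _ => le_divergence_massField_decayWeight (one_le_two.trans hd) hm hη h.solves.contDiff x
  rw [integral_linearCombination_three _ _ _ hnear hfar h.integrable_gradNormSq] at hdiv
  linarith

end AbsorptiveSolution

theorem exists_const_of_near_far_le {A b Q : ℝ} (hA : 0 ≤ A) (hb : 0 ≤ b) (hQ : 0 ≤ Q) :
    ∃ C : ℝ, 0 ≤ C ∧ ∀ {near far n J Φ : ℝ}, 0 ≤ far → 0 ≤ J → 0 ≤ Φ → 0 ≤ near →
      n ≤ A * (near + far) + 2 * J →
      (∀ η, 0 < η → near ≤ (b + 1 / η) * far + η * n) →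
      (∀ η, 0 < η → J ≤ η * (near + far) + 1 / (4 * η) * Φ) →
      far ≤ Q * (Φ + J) → near + far ≤ C * Φ ∧ n ≤ C * Φ := by
  set D := b + 2 * (A + 1) + 1 with hD
  set M := 2 * D * Q + 2 with hM
  have : 0 ≤ D := by positivity
  have hM2 : 2 ≤ M := le_add_of_nonneg_left (by positivity)
  refine ⟨(A + 3) * (2 * M + M ^ 2), by positivity, ?_⟩
  intro near far n J Φ hfar hJ hΦ hnear hgrad hlow hyoung hcarleman
  have hgrad_small : 1 / (2 * (A + 1)) * n ≤ (near + far) / 2 + J := by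
    rw [one_div, inv_mul_le_iff₀ (by positivity)]
    linarith [mul_nonneg hA hJ]
  have hmass_far : near + far ≤ 2 * D * far + 2 * J := by
    have hlow' := hlow (1 / (2 * (A + 1))) (by positivity)
    rw [one_div_one_div] at hlow'
    rw [hD]
    linarith
  have hmass_J : near + far ≤ M * Φ + M * J := by
    have : 2 * D * far ≤ 2 * D * (Q * (Φ + J)) := by gcongr
    rw [hM]
    linarith
  have hJ_young : J ≤ 1 / (2 * M) * (near + far) + M / 2 * Φ := by
    refine (hyoung (1 / (2 * M)) (by positivity)).trans_eq ?_
    field_simp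
    ring
  have hmass : near + far ≤ (2 * M + M ^ 2) * Φ := by
    have hMJ : M * J ≤ M * (1 / (2 * M) * (near + far) + M / 2 * Φ) := by gcongr
    have hexpand : M * (1 / (2 * M) * (near + far) + M / 2 * Φ) =
        (near + far) / 2 + M ^ 2 / 2 * Φ := by field_simp
    linarith
  have hJ_bound : 2 * J ≤ 2 * (2 * M + M ^ 2) * Φ := by
    have : 1 / (2 * M) * (near + far) ≤ 1 / 4 * (near + far) := by gcongr; linarith
    have : 0 ≤ M * Φ ∧ 0 ≤ M ^ 2 * Φ := ⟨by positivity, by positivity⟩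
    linarith
  have : 0 ≤ (2 * M + M ^ 2) * Φ := by positivity
  have hA_mass := mul_le_mul_of_nonneg_left hmass hA
  have : 0 ≤ A * ((2 * M + M ^ 2) * Φ) := by positivity
  constructor <;> linarith

theorem AbsorptiveSolution.exists_const_of_carleman {m c₀ Q : ℝ} (hm : 0 ≤ m) (hc₀ : 0 ≤ c₀)
    (hQ : 0 ≤ Q) :
    ∃ C : ℝ, 0 ≤ C ∧ ∀ {d : ℕ} {σ ε : ℝ} {W : Ed d → ℝ} {f u : Ed d → ℂ}, 2 ≤ d →
      AbsorptiveSolution m c₀ σ ε W f u →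
      ∫ x, ‖x‖ ^ 2 * decayWeight (m + 1) 1 x * ‖u x‖ ^ 2 ≤
        Q * ((∫ x, decayWeight (-m) 1 x * ‖f x‖ ^ 2) +
          ε * ((∫ x, ‖u x‖ ^ 2) + ∫ x, gradNormSq u x)) →
      ∫ x, decayWeight m 1 x * ‖u x‖ ^ 2 ≤ C * ∫ x, decayWeight (-m) 1 x * ‖f x‖ ^ 2 ∧
      ∫ x, decayWeight m 1 x * gradNormSq u x ≤
        C * ∫ x, decayWeight (-m) 1 x * ‖f x‖ ^ 2 := by
  obtain ⟨C, hC, hclose⟩ := exists_const_of_near_far_le (A := 2 * c₀ + (m * 1) ^ 2)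
    (b := 2 * (m + 1)) (Q := Q * (8 * c₀ + 10)) (by positivity) (by positivity) (by positivity)
  refine ⟨C, hC, fun {d σ ε W f u} hd h hcarleman => ?_⟩
  have hweight (k : ℝ) (x : Ed d) : 0 ≤ decayWeight k 1 x := (decayWeight_pos k 1 x).le
  have hΦ : 0 ≤ ∫ x, decayWeight (-m) 1 x * ‖f x‖ ^ 2 :=
    integral_nonneg fun x => mul_nonneg (hweight _ x) (by positivity)
  have hsplit := integral_decayWeight_mul_eq_add h.integrable_norm_sq
  have hfar : ∫ x, ‖x‖ ^ 2 * decayWeight (m + 1) 1 x * ‖u x‖ ^ 2 ≤ Q * (8 * c₀ + 10) *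
      ((∫ x, decayWeight (-m) 1 x * ‖f x‖ ^ 2) + ∫ x, ‖f x‖ * ‖u x‖) := by
    rw [mul_assoc]
    refine hcarleman.trans (mul_le_mul_of_nonneg_left ?_ hQ)
    linarith [(h.integrable_norm_sq_and_mul_integral_le hd hm).2,
      (h.integrable_gradNormSq_and_mul_integral_le hd hm).2, mul_nonneg hc₀ hΦ]
  rw [hsplit]
  refine hclose
    (integral_nonneg fun x => mul_nonneg (mul_nonneg (by positivity) (hweight _ x)) (by positivity))
    (integral_nonneg fun x => by positivity) hΦ
    (integral_nonneg fun x => mul_nonneg (hweight _ x) (by positivity)) ?_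
    (fun η hη => h.integral_near_origin_le hd hm hη) (fun η hη => ?_) hfar
  · rw [← hsplit]
    exact h.integral_decayWeight_mul_gradNormSq_le hd hm one_pos le_rfl
  · rw [← hsplit]
    exact h.integral_norm_mul_norm_le hη

section Radial

variable {H : Type*} [NormedAddCommGroup H] [InnerProductSpace ℝ H] {F : ℝ → ℝ} {x : H}

theorem fderiv_comp_norm {F' : ℝ} (hx : x ≠ 0) (hF : HasDerivAt F F' ‖x‖) (v : H) :
    fderiv ℝ (fun y : H => F ‖y‖) x v = F' / ‖x‖ * inner ℝ x v := by
  have hnorm : HasFDerivAt (fun y : H => ‖y‖) (fderiv ℝ (fun y : H => ‖y‖) x) x :=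
    ((contDiffAt_norm ℝ hx (n := 1)).differentiableAt one_ne_zero).hasFDerivAt
  have hsq := congrArg (fun T : H →L[ℝ] ℝ => T v)
    ((hnorm.pow 2).unique (hasStrictFDerivAt_norm_sq x).hasFDerivAt)
  have hfderiv : fderiv ℝ (fun y : H => ‖y‖) x v = inner ℝ x v / ‖x‖ := by
    rw [eq_div_iff (norm_ne_zero_iff.2 hx)]
    simp only [Nat.add_one_sub_one, pow_one, nsmul_eq_mul, Nat.cast_ofNat, smul_apply, smul_eq_mul,
      innerSL_apply_apply] at hsq
    linarith
  have hcomp : HasFDerivAt (fun y : H => F ‖y‖) _ x := hF.comp_hasFDerivAt x hnorm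
  rw [hcomp.fderiv]
  simp only [smul_apply, smul_eq_mul, hfderiv]
  ring

theorem contDiffAt_comp_norm (hx : x ≠ 0) (hF : ContDiffAt ℝ 1 F ‖x‖) :
    ContDiffAt ℝ 1 (fun y : H => F ‖y‖) x :=
  hF.comp x (contDiffAt_norm ℝ hx)

end Radial

/-- The radial data of a Carleman multiplier: the bounded weight `E = e^{2φ}` with `p = φ'`, and a
bounded increasing profile `w` vanishing quadratically at the origin. The primed fields are the
derivatives, and `Λ` measures by how much `w` fails to be exactly quadratic. -/
structure CarlemanProfile where
  (E w w' p p' : ℝ → ℝ)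
  (M k Λ : ℝ)
  contDiffAt_E {r : ℝ} : 0 < r → ContDiffAt ℝ 1 E r
  contDiffAt_w {r : ℝ} : 0 < r → ContDiffAt ℝ 1 w r
  contDiffAt_p {r : ℝ} : 0 < r → ContDiffAt ℝ 1 p r
  hasDerivAt_E {r : ℝ} : 0 < r → HasDerivAt E (2 * p r * E r) r
  hasDerivAt_w {r : ℝ} : 0 < r → HasDerivAt w (w' r) r
  hasDerivAt_p {r : ℝ} : 0 < r → HasDerivAt p (p' r) r
  one_le_E {r : ℝ} : 0 < r → 1 ≤ E r
  E_le {r : ℝ} : 0 < r → E r ≤ M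
  w_zero : w 0 = 0
  w_nonneg {r : ℝ} : 0 < r → 0 ≤ w r
  w_le_one {r : ℝ} : 0 < r → w r ≤ 1
  w_le_self {r : ℝ} : 0 < r → w r ≤ r
  w_le_sq {r : ℝ} : 0 < r → w r ≤ r ^ 2
  w'_pos {r : ℝ} : 0 < r → 0 < w' r
  p_pos {r : ℝ} : 0 < r → 0 < p r
  p_le {r : ℝ} : 0 < r → p r ≤ k
  mul_w'_le {r : ℝ} : 0 < r → r * w' r ≤ 2 * w r
  two_mul_div_sub_le {r : ℝ} : 0 < r → 2 * w r / r - w' r ≤ Λ * r ^ 2 * w' r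

/-- `∂ᵣu + ((d - 1)/(2r) + p)u`, which is the radial derivative of `e^φ r^{(d-1)/2} u` up to the
factor `e^φ r^{(d-1)/2}` when `φ' = p`. -/
def conjugatedRadialDeriv {d : ℕ} (p : ℝ) (u : Ed d → ℂ) (x : Ed d) : ℂ :=
  (1 / ‖x‖) • eulerDeriv u x + (((d : ℝ) - 1) / (2 * ‖x‖) + p) • u x

section ConjugatedRadialDeriv

variable {d : ℕ} (p : ℝ) (u : Ed d → ℂ) (x : Ed d)

theorem norm_conjugatedRadialDeriv_sq :
    ‖conjugatedRadialDeriv p u x‖ ^ 2 = ‖eulerDeriv u x‖ ^ 2 / ‖x‖ ^ 2 +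
      2 * (((d : ℝ) - 1) / (2 * ‖x‖) + p) * inner ℝ (u x) (eulerDeriv u x) / ‖x‖ +
      (((d : ℝ) - 1) / (2 * ‖x‖) + p) ^ 2 * ‖u x‖ ^ 2 := by
  rw [conjugatedRadialDeriv, norm_add_sq_real, norm_smul, norm_smul, mul_pow, mul_pow,
    Real.norm_eq_abs, Real.norm_eq_abs, sq_abs, sq_abs, real_inner_smul_left,
    real_inner_smul_right, real_inner_comm (u x) (eulerDeriv u x)]
  ring

theorem inner_conjugatedRadialDeriv (z : ℂ) :
    inner ℝ (conjugatedRadialDeriv p u x) z = inner ℝ (eulerDeriv u x) z / ‖x‖ +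
      (((d : ℝ) - 1) / (2 * ‖x‖) + p) * inner ℝ (u x) z := by
  rw [conjugatedRadialDeriv, inner_add_left, real_inner_smul_left, real_inner_smul_left]
  ring

end ConjugatedRadialDeriv

namespace CarlemanProfile

/-- The coefficient `e^{2φ}w/r` of the Pohozaev part of the Carleman field. -/
def eulerCoeff (P : CarlemanProfile) (r : ℝ) : ℝ := P.E r * (P.w r / r)

/-- The coefficient `2e^{2φ}w((d-1)/(2r) + p)` of the flux part of the Carleman field. -/
def fluxCoeff (P : CarlemanProfile) (d : ℕ) (r : ℝ) : ℝ :=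
  P.E r * (P.w r * (d - 1) / r + 2 * P.w r * P.p r)

/-- The potential-free coefficient of the mass part of the Carleman field. -/
def massCoeff (P : CarlemanProfile) (d : ℕ) (τ r : ℝ) : ℝ :=
  P.eulerCoeff r * (2 * P.p r ^ 2 + P.p r * (d - 1) / r + τ + (d - 1) / (2 * r ^ 2))

/-- The vector field whose divergence is the Carleman identity. Its flux and mass parts are dictated
by testing the equation against the conjugated radial derivative of `u`. -/
def carlemanField (P : CarlemanProfile) {d : ℕ} (τ : ℝ) (V : Ed d → ℝ) (u : Ed d → ℂ) :
    Fin d → Ed d → ℝ :=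
  pohozaevField (fun x => P.eulerCoeff ‖x‖) u + fluxField (fun x => P.fluxCoeff d ‖x‖) 1 u +
    massField (fun x => P.massCoeff d τ ‖x‖ - P.eulerCoeff ‖x‖ * V x) u

/-- The coefficient of `|u|²` in the Carleman identity after all cross terms are absorbed; `v`,
`v'`, `v₂` are the values of `V₁`, `∂ᵣV₁`, `V₂`. -/
def bracket (P : CarlemanProfile) (τ v v' v₂ r : ℝ) : ℝ :=
  P.w' r * (P.p r ^ 2 + τ - v) + 2 * P.w r * P.p r * P.p' r - P.w r * v' -
    3 / 4 * (P.w r * P.p' r ^ 2 / P.p r) - 3 * P.w r ^ 2 * v₂ ^ 2 / P.w' r - P.Λ / 4 * P.w' r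

variable (P : CarlemanProfile) {d : ℕ} {r τ s : ℝ} {u f : Ed d → ℂ} {V V₂ : Ed d → ℝ} {x : Ed d}

theorem contDiffAt_eulerCoeff (hr : 0 < r) : ContDiffAt ℝ 1 P.eulerCoeff r :=
  (P.contDiffAt_E hr).mul ((P.contDiffAt_w hr).div contDiffAt_id hr.ne')

theorem contDiffAt_fluxCoeff (d : ℕ) (hr : 0 < r) : ContDiffAt ℝ 1 (P.fluxCoeff d) r :=
  (P.contDiffAt_E hr).mul ((((P.contDiffAt_w hr).mul contDiffAt_const).div contDiffAt_id
    hr.ne').add ((contDiffAt_const.mul (P.contDiffAt_w hr)).mul (P.contDiffAt_p hr)))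

theorem contDiffAt_massCoeff (d : ℕ) (τ : ℝ) (hr : 0 < r) : ContDiffAt ℝ 1 (P.massCoeff d τ) r :=
  (P.contDiffAt_eulerCoeff hr).mul ((((contDiffAt_const.mul ((P.contDiffAt_p hr).pow 2)).add
    (((P.contDiffAt_p hr).mul contDiffAt_const).div contDiffAt_id hr.ne')).add
    contDiffAt_const).add (contDiffAt_const.div (contDiffAt_const.mul (contDiffAt_id.pow 2))
      (mul_ne_zero two_ne_zero (pow_ne_zero 2 hr.ne'))))

theorem hasDerivAt_eulerCoeff (hr : 0 < r) : HasDerivAt P.eulerCoeff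
    (P.E r * (2 * P.p r * P.w r / r + P.w' r / r - P.w r / r ^ 2)) r := by
  refine ((P.hasDerivAt_E hr).mul ((P.hasDerivAt_w hr).div (hasDerivAt_id r)
    hr.ne')).congr_deriv ?_
  simp only [Pi.div_apply, id]
  field_simp
  ring

theorem hasDerivAt_fluxCoeff (d : ℕ) (hr : 0 < r) : HasDerivAt (P.fluxCoeff d)
    (P.E r * (2 * P.p r * (P.w r * (d - 1) / r + 2 * P.w r * P.p r) + P.w' r * (d - 1) / r -
      P.w r * (d - 1) / r ^ 2 + 2 * P.w' r * P.p r + 2 * P.w r * P.p' r)) r := by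
  refine ((P.hasDerivAt_E hr).mul ((((P.hasDerivAt_w hr).mul_const ((d : ℝ) - 1)).div
    (hasDerivAt_id r) hr.ne').add
      (((P.hasDerivAt_w hr).const_mul 2).mul (P.hasDerivAt_p hr)))).congr_deriv ?_
  simp only [Pi.div_apply, Pi.add_apply, Pi.mul_apply, id]
  field_simp
  ring

theorem hasDerivAt_massCoeff (d : ℕ) (τ : ℝ) (hr : 0 < r) : HasDerivAt (P.massCoeff d τ)
    (P.E r * ((2 * P.p r * P.w r / r + P.w' r / r - P.w r / r ^ 2) *
      (2 * P.p r ^ 2 + P.p r * (d - 1) / r + τ + (d - 1) / (2 * r ^ 2)) +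
      P.w r / r * (4 * P.p r * P.p' r + P.p' r * (d - 1) / r - P.p r * (d - 1) / r ^ 2 -
        (d - 1) / r ^ 3))) r := by
  have hcentrifugal := (hasDerivAt_const r ((d : ℝ) - 1)).div
    (((hasDerivAt_id r).pow 2).const_mul 2) (by simp [hr.ne'])
  have hfactor := (((((P.hasDerivAt_p hr).pow 2).const_mul 2).add (((P.hasDerivAt_p hr).mul_const
    ((d : ℝ) - 1)).div (hasDerivAt_id r) hr.ne')).add_const τ).add hcentrifugal
  refine ((P.hasDerivAt_eulerCoeff hr).mul hfactor).congr_deriv ?_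
  simp only [eulerCoeff, Pi.div_apply, Pi.add_apply, Pi.pow_apply, id]
  field_simp
  ring

theorem contDiffAt_potentialCoeff (τ : ℝ) (hV : ContDiffAt ℝ 1 V x) (hx : x ≠ 0) :
    ContDiffAt ℝ 1 (fun y => P.massCoeff d τ ‖y‖ - P.eulerCoeff ‖y‖ * V y) x :=
  (contDiffAt_comp_norm hx (P.contDiffAt_massCoeff d τ (norm_pos_iff.2 hx))).sub
    ((contDiffAt_comp_norm hx (P.contDiffAt_eulerCoeff (norm_pos_iff.2 hx))).mul hV)

theorem fderiv_potentialCoeff (τ : ℝ) (hV : DifferentiableAt ℝ V x) (hx : x ≠ 0) :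
    fderiv ℝ (fun y => P.massCoeff d τ ‖y‖ - P.eulerCoeff ‖y‖ * V y) x x =
      fderiv ℝ (fun y : Ed d => P.massCoeff d τ ‖y‖) x x -
        (P.eulerCoeff ‖x‖ * fderiv ℝ V x x +
          V x * fderiv ℝ (fun y : Ed d => P.eulerCoeff ‖y‖) x x) := by
  have hr : 0 < ‖x‖ := norm_pos_iff.2 hx
  have hmass := (contDiffAt_comp_norm hx (P.contDiffAt_massCoeff d τ hr)).differentiableAt
    one_ne_zero
  have heuler := (contDiffAt_comp_norm hx (P.contDiffAt_eulerCoeff hr)).differentiableAt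
    one_ne_zero
  exact congrArg (fun T : Ed d →L[ℝ] ℝ => T x)
    (hmass.hasFDerivAt.sub (heuler.hasFDerivAt.mul hV.hasFDerivAt)).fderiv

theorem contDiffAt_carlemanField (τ : ℝ) (hu : ContDiff ℝ 2 u) (hV : ContDiffAt ℝ 1 V x)
    (hx : x ≠ 0) (i : Fin d) : ContDiffAt ℝ 1 (P.carlemanField τ V u i) x :=
  ((contDiffAt_pohozaevField hu
    (contDiffAt_comp_norm hx (P.contDiffAt_eulerCoeff (norm_pos_iff.2 hx))) i).add
    (contDiffAt_fluxField hu
      (contDiffAt_comp_norm hx (P.contDiffAt_fluxCoeff d (norm_pos_iff.2 hx))) 1 i)).add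
    (contDiffAt_massField hu (P.contDiffAt_potentialCoeff τ hV hx) i)

theorem divergence_carlemanField_eq_add (τ : ℝ) (hu : ContDiff ℝ 2 u) (hV : ContDiffAt ℝ 1 V x)
    (hx : x ≠ 0) :
    divergence (P.carlemanField τ V u) x =
      divergence (pohozaevField (fun x => P.eulerCoeff ‖x‖) u) x +
      divergence (fluxField (fun x => P.fluxCoeff d ‖x‖) 1 u) x +
      divergence (massField (fun x => P.massCoeff d τ ‖x‖ - P.eulerCoeff ‖x‖ * V x) u) x := by
  have hr : 0 < ‖x‖ := norm_pos_iff.2 hx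
  have hpohozaev (i : Fin d) := (contDiffAt_pohozaevField hu
    (contDiffAt_comp_norm hx (P.contDiffAt_eulerCoeff hr)) i).differentiableAt one_ne_zero
  have hflux (i : Fin d) := (contDiffAt_fluxField hu
    (contDiffAt_comp_norm hx (P.contDiffAt_fluxCoeff d hr)) 1 i).differentiableAt one_ne_zero
  have hmass (i : Fin d) := (contDiffAt_massField hu
    (P.contDiffAt_potentialCoeff τ hV hx) i).differentiableAt one_ne_zero
  rw [carlemanField, divergence_add (F := pohozaevField _ u + fluxField _ 1 u)
    (fun i => (hpohozaev i).add (hflux i)) hmass, divergence_add hpohozaev hflux]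

theorem divergence_carlemanField (hu : SolvesHelmholtz (fun y => V y + V₂ y - τ) s f u)
    (hV : ContDiffAt ℝ 1 V x) (hx : x ≠ 0) :
    divergence (P.carlemanField τ V u) x = P.E ‖x‖ *
      ((P.w' ‖x‖ + 4 * P.p ‖x‖ * P.w ‖x‖) * ‖conjugatedRadialDeriv (P.p ‖x‖) u x‖ ^ 2 +
      (2 * P.w ‖x‖ / ‖x‖ - P.w' ‖x‖) * (gradNormSq u x - ‖eulerDeriv u x‖ ^ 2 / ‖x‖ ^ 2 +
        ((d : ℝ) - 1) * (d - 3) / 4 / ‖x‖ ^ 2 * ‖u x‖ ^ 2) +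
      (P.w' ‖x‖ * (P.p ‖x‖ ^ 2 + τ - V x) + 2 * P.w ‖x‖ * P.p ‖x‖ * P.p' ‖x‖ -
        P.w ‖x‖ * radialDeriv V x) * ‖u x‖ ^ 2 +
      2 * P.w ‖x‖ * ((P.p' ‖x‖ + V₂ x) * inner ℝ (conjugatedRadialDeriv (P.p ‖x‖) u x) (u x) -
        inner ℝ (conjugatedRadialDeriv (P.p ‖x‖) u x) (f x)) +
      2 * P.w ‖x‖ * s * inner ℝ (eulerDeriv u x) (Complex.I * u x) / ‖x‖) := by
  have hr : 0 < ‖x‖ := norm_pos_iff.2 hx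
  have hlap := hu.inner_lap_eq 1 x
  have heuler_lap : inner ℝ (eulerDeriv u x) (lap u x) =
      (V x + V₂ x - τ) * inner ℝ (u x) (eulerDeriv u x) +
        s * inner ℝ (eulerDeriv u x) (Complex.I * u x) - inner ℝ (eulerDeriv u x) (f x) := by
    rw [hu.lap_eq, inner_sub_right, inner_add_right, real_inner_smul_right, real_inner_smul_right,
      real_inner_comm (u x) (eulerDeriv u x)]
  rw [P.divergence_carlemanField_eq_add τ hu.contDiff hV hx,
    divergence_pohozaevField hu.contDiff (contDiffAt_comp_norm hx (P.contDiffAt_eulerCoeff hr))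
      (fun i => by rw [fderiv_comp_norm hx (P.hasDerivAt_eulerCoeff hr), inner_basisVec]),
    divergence_fluxField hu.contDiff (contDiffAt_comp_norm hx (P.contDiffAt_fluxCoeff d hr))
      (fun i => by rw [fderiv_comp_norm hx (P.hasDerivAt_fluxCoeff d hr), inner_basisVec]),
    divergence_massField hu.contDiff (P.contDiffAt_potentialCoeff τ hV hx),
    P.fderiv_potentialCoeff τ (hV.differentiableAt one_ne_zero) hx,
    fderiv_comp_norm hx (P.hasDerivAt_massCoeff d τ hr),
    fderiv_comp_norm hx (P.hasDerivAt_eulerCoeff hr), real_inner_self_eq_norm_sq, hlap, heuler_lap,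
    norm_conjugatedRadialDeriv_sq, inner_conjugatedRadialDeriv, inner_conjugatedRadialDeriv,
    real_inner_self_eq_norm_sq, real_inner_comm (u x) (eulerDeriv u x)]
  simp only [eulerCoeff, fluxCoeff, massCoeff, radialDeriv, one_mul, Complex.one_re,
    Complex.one_im, zero_mul, add_zero]
  generalize inner ℝ (u x) (eulerDeriv u x) = q
  generalize inner ℝ (eulerDeriv u x) (Complex.I * u x) = q₁
  generalize inner ℝ (eulerDeriv u x) (f x) = q₂
  generalize inner ℝ (u x) (f x) = q₃
  generalize ‖x‖ = r at *
  field_simp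
  ring

end CarlemanProfile

/-! ### The Carleman estimate for an abstract profile -/

theorem neg_third_mul_sq_sub_le {κ t D U α : ℝ} (hκ : 0 < κ) (h : |α| ≤ D * U) :
    -(κ / 3 * D ^ 2) - 3 * t ^ 2 / κ * U ^ 2 ≤ 2 * t * α := by
  have habs : |2 * t * α| ≤ 2 * |t| * (D * U) := by
    rw [abs_mul, abs_mul, abs_two]
    gcongr
  have hsq : 1 / (3 * κ) * (κ * D - 3 * |t| * U) ^ 2 =
      κ / 3 * D ^ 2 + 3 * |t| ^ 2 / κ * U ^ 2 - 2 * |t| * (D * U) := by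
    field_simp
    ring
  have hsq_nonneg : 0 ≤ 1 / (3 * κ) * (κ * D - 3 * |t| * U) ^ 2 := by positivity
  rw [sq_abs] at hsq
  linarith [(abs_le.1 habs).1]

theorem abs_massField_le {d : ℕ} {g : Ed d → ℝ} {x : Ed d} {C : ℝ} (hg : |g x| * ‖x‖ ≤ C)
    (u : Ed d → ℂ) (i : Fin d) : |massField g u i x| ≤ C * ‖u x‖ ^ 2 := by
  rw [massField, abs_mul, abs_mul, abs_of_nonneg (sq_nonneg ‖u x‖)]
  gcongr
  exact le_trans (by gcongr; exact PiLp.norm_apply_le x i) hg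

theorem abs_pohozaevField_le {d : ℕ} {A : Ed d → ℝ} {x : Ed d} {C : ℝ} (hA : |A x| * ‖x‖ ≤ C)
    (u : Ed d → ℂ) (i : Fin d) : |pohozaevField A u i x| ≤ 3 * C * gradNormSq u x := by
  have hN := gradNormSq_nonneg u x
  have hpd : ‖pd u i x‖ ^ 2 ≤ gradNormSq u x := norm_pd_sq_le u i x
  have hcross : |A x * inner ℝ (eulerDeriv u x) (pd u i x)| ≤ C * gradNormSq u x := by
    have hC : 0 ≤ C := le_trans (by positivity) hA
    rw [real_inner_comm]
    refine (abs_mul_inner_eulerDeriv_le_half_mul_add (B := 1) (K := C) _ u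
      (by rwa [mul_one])).trans ?_
    nlinarith [mul_le_mul_of_nonneg_left hpd hC]
  have hdiag : |A x * x i * gradNormSq u x| ≤ C * gradNormSq u x := by
    rw [abs_mul, abs_mul, abs_of_nonneg hN]
    gcongr
    exact le_trans (by gcongr; exact PiLp.norm_apply_le x i) hA
  calc |pohozaevField A u i x|
      ≤ |2 * (A x * inner ℝ (eulerDeriv u x) (pd u i x))| + |A x * x i * gradNormSq u x| :=
        abs_sub _ _
    _ ≤ 2 * (C * gradNormSq u x) + C * gradNormSq u x := by
        rw [abs_mul, abs_two]
        gcongr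
    _ = _ := by ring

namespace CarlemanProfile

variable (P : CarlemanProfile) {d : ℕ} {r τ τ₁ a s : ℝ} {u f : Ed d → ℂ} {V V₂ : Ed d → ℝ}
  {x : Ed d}

theorem angular_coeff_nonneg (hr : 0 < r) : 0 ≤ 2 * P.w r / r - P.w' r := by
  rw [sub_nonneg, le_div_iff₀ hr]
  linarith [P.mul_w'_le hr]

/-- The angular gradient is nonnegative, and the centrifugal constant `(d - 1)(d - 3)/4` is
at least `-1/4`. -/
theorem neg_mul_le_angular (u : Ed d → ℂ) (hx : x ≠ 0) :
    -(P.Λ / 4 * P.w' ‖x‖ * ‖u x‖ ^ 2) ≤ (2 * P.w ‖x‖ / ‖x‖ - P.w' ‖x‖) *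
      (gradNormSq u x - ‖eulerDeriv u x‖ ^ 2 / ‖x‖ ^ 2 +
        ((d : ℝ) - 1) * (d - 3) / 4 / ‖x‖ ^ 2 * ‖u x‖ ^ 2) := by
  have hr : 0 < ‖x‖ := norm_pos_iff.2 hx
  have hcoeff := P.angular_coeff_nonneg hr
  have hangular : 0 ≤ gradNormSq u x - ‖eulerDeriv u x‖ ^ 2 / ‖x‖ ^ 2 := by
    rw [sub_nonneg, div_le_iff₀ (by positivity)]
    linarith [norm_eulerDeriv_sq_le u x]
  have hcentrifugal : -(1 / 4 : ℝ) ≤ ((d : ℝ) - 1) * (d - 3) / 4 := by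
    nlinarith [sq_nonneg ((d : ℝ) - 2)]
  have hdefect := mul_le_mul_of_nonneg_right (P.two_mul_div_sub_le hr)
    (by positivity : 0 ≤ 1 / 4 / ‖x‖ ^ 2 * ‖u x‖ ^ 2)
  have hcancel : P.Λ * ‖x‖ ^ 2 * P.w' ‖x‖ * (1 / 4 / ‖x‖ ^ 2 * ‖u x‖ ^ 2) =
      P.Λ / 4 * P.w' ‖x‖ * ‖u x‖ ^ 2 := by
    field_simp
  calc -(P.Λ / 4 * P.w' ‖x‖ * ‖u x‖ ^ 2)
      ≤ (2 * P.w ‖x‖ / ‖x‖ - P.w' ‖x‖) * (0 + -(1 / 4) / ‖x‖ ^ 2 * ‖u x‖ ^ 2) := by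
        rw [zero_add, neg_div, neg_mul, mul_neg]
        linarith
    _ ≤ _ := by gcongr

theorem neg_abs_mul_le_absorption (s : ℝ) (u : Ed d → ℂ) (hx : x ≠ 0) :
    -(|s| * (‖u x‖ ^ 2 + gradNormSq u x)) ≤
      2 * P.w ‖x‖ * s * inner ℝ (eulerDeriv u x) (Complex.I * u x) / ‖x‖ := by
  have hr : 0 < ‖x‖ := norm_pos_iff.2 hx
  have hw := P.w_nonneg hr
  have hcoeff : |2 * P.w ‖x‖ * s / ‖x‖| * ‖x‖ ≤ 2 * |s| * 1 := by
    rw [abs_div, abs_of_pos hr, div_mul_cancel₀ _ hr.ne', abs_mul, abs_mul, abs_two,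
      abs_of_nonneg hw]
    nlinarith [P.w_le_one hr, abs_nonneg s]
  have habs := abs_mul_inner_eulerDeriv_le_half_mul_add (Complex.I * u x) u hcoeff
  rw [norm_mul, Complex.norm_I, one_mul, one_mul, one_mul, mul_div_cancel_left₀ _ two_ne_zero,
    real_inner_comm, div_mul_eq_mul_div] at habs
  exact (abs_le.1 habs).1

/-- Each of the three cross terms is absorbed by a third of the square of the conjugated radial
derivative. -/
theorem neg_sub_le_square_add_cross (hr : 0 < r) (v₂ : ℝ) (D z g : ℂ) :
    -((3 / 4 * (P.w r * P.p' r ^ 2 / P.p r) + 3 * P.w r ^ 2 * v₂ ^ 2 / P.w' r) * ‖z‖ ^ 2) -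
      3 * P.w r ^ 2 / P.w' r * ‖g‖ ^ 2 ≤
    (P.w' r + 4 * P.p r * P.w r) * ‖D‖ ^ 2 +
      2 * P.w r * ((P.p' r + v₂) * inner ℝ D z - inner ℝ D g) := by
  have hw := P.w_nonneg hr
  have hw' := P.w'_pos hr
  have hp := P.p_pos hr
  set κ := P.w' r + 4 * P.p r * P.w r
  have hw'_le : P.w' r ≤ κ := le_add_of_nonneg_right (by positivity)
  have hpw_le : 4 * P.p r * P.w r ≤ κ := le_add_of_nonneg_left hw'.le
  have hκ_pos : 0 < κ := hw'.trans_le hw'_le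
  have hphase : 3 * (P.w r * P.p' r) ^ 2 / κ * ‖z‖ ^ 2 ≤
      3 / 4 * (P.w r * P.p' r ^ 2 / P.p r) * ‖z‖ ^ 2 := by
    gcongr
    rw [div_le_iff₀ hκ_pos]
    refine le_trans (le_of_eq ?_) (mul_le_mul_of_nonneg_left hpw_le (by positivity))
    field_simp
  have hpotential : 3 * (P.w r * v₂) ^ 2 / κ * ‖z‖ ^ 2 ≤
      3 * P.w r ^ 2 * v₂ ^ 2 / P.w' r * ‖z‖ ^ 2 := by
    rw [mul_assoc 3 (P.w r ^ 2), ← mul_pow]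
    gcongr
  have hforcing : 3 * (-P.w r) ^ 2 / κ * ‖g‖ ^ 2 ≤ 3 * P.w r ^ 2 / P.w' r * ‖g‖ ^ 2 := by
    rw [neg_sq]
    gcongr
  linarith [neg_third_mul_sq_sub_le (t := P.w r * P.p' r) hκ_pos (abs_real_inner_le_norm D z),
    neg_third_mul_sq_sub_le (t := P.w r * v₂) hκ_pos (abs_real_inner_le_norm D z),
    neg_third_mul_sq_sub_le (t := -P.w r) hκ_pos (abs_real_inner_le_norm D g)]

theorem E_nonneg (hr : 0 < r) : 0 ≤ P.E r := zero_le_one.trans (P.one_le_E hr)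

theorem E_mul_bracket_sub_le_divergence
    (hu : SolvesHelmholtz (fun y => V y + V₂ y - τ) s f u) (hV : ContDiffAt ℝ 1 V x)
    (hx : x ≠ 0) :
    P.E ‖x‖ * (P.bracket τ (V x) (radialDeriv V x) (V₂ x) ‖x‖ * ‖u x‖ ^ 2 -
      3 * P.w ‖x‖ ^ 2 / P.w' ‖x‖ * ‖f x‖ ^ 2 - |s| * (‖u x‖ ^ 2 + gradNormSq u x)) ≤
    divergence (P.carlemanField τ V u) x := by
  have hr : 0 < ‖x‖ := norm_pos_iff.2 hx
  rw [P.divergence_carlemanField hu hV hx]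
  refine mul_le_mul_of_nonneg_left ?_ (P.E_nonneg hr)
  rw [bracket]
  linarith [P.neg_mul_le_angular u hx, P.neg_abs_mul_le_absorption s u hx,
    P.neg_sub_le_square_add_cross hr (V₂ x) (conjugatedRadialDeriv (P.p ‖x‖) u x) (u x) (f x)]

theorem M_nonneg : 0 ≤ P.M := (P.E_nonneg one_pos).trans (P.E_le one_pos)

theorem k_nonneg : 0 ≤ P.k := (P.p_pos one_pos).le.trans (P.p_le one_pos)

theorem abs_eulerCoeff_mul_le (hr : 0 < r) : |P.eulerCoeff r| * r ≤ P.M := by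
  have hE := P.E_nonneg hr
  have hw := P.w_nonneg hr
  rw [eulerCoeff, abs_of_nonneg (by positivity), mul_assoc, div_mul_cancel₀ _ hr.ne']
  exact (mul_le_of_le_one_right hE (P.w_le_one hr)).trans (P.E_le hr)

theorem fluxCoeff_nonneg (hd : 1 ≤ d) (hr : 0 < r) : 0 ≤ P.fluxCoeff d r := by
  have hd' : (0 : ℝ) ≤ d - 1 := sub_nonneg.2 (by exact_mod_cast hd)
  have hE := P.E_nonneg hr
  have hw := P.w_nonneg hr
  have hp := P.p_pos hr
  rw [fluxCoeff]
  positivity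

theorem fluxCoeff_le (hd : 1 ≤ d) (hr : 0 < r) : P.fluxCoeff d r ≤ P.M * (d - 1 + 2 * P.k) := by
  have hd' : (0 : ℝ) ≤ d - 1 := sub_nonneg.2 (by exact_mod_cast hd)
  have hM := P.M_nonneg
  have hw := P.w_nonneg hr
  have hp := P.p_pos hr
  have hw_div : P.w r * (d - 1) / r ≤ d - 1 := by
    rw [mul_div_right_comm]
    exact mul_le_of_le_one_left hd' ((div_le_one hr).2 (P.w_le_self hr))
  have hwp : 2 * P.w r * P.p r ≤ 2 * 1 * P.k := by
    gcongr
    exacts [P.w_le_one hr, P.p_le hr]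
  rw [fluxCoeff]
  exact mul_le_mul (P.E_le hr) (by linarith) (by positivity) hM

theorem massCoeff_sub_mul (d : ℕ) (τ v : ℝ) (hr : 0 < r) :
    (P.massCoeff d τ r - P.eulerCoeff r * v) * r = P.E r * (2 * P.p r ^ 2 * P.w r +
      P.p r * (d - 1) * (P.w r / r) + (d - 1) / 2 * (P.w r / r ^ 2) + P.w r * (τ - v)) := by
  rw [massCoeff, eulerCoeff]
  field_simp
  ring

theorem abs_massCoeff_sub_mul_le (hd : 1 ≤ d) (hr : 0 < r) {v : ℝ} (hτ : |τ| ≤ τ₁)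
    (hv : |v| ≤ a) : |P.massCoeff d τ r - P.eulerCoeff r * v| * r ≤
      P.M * (2 * P.k ^ 2 + P.k * (d - 1) + (d - 1) + (τ₁ + a)) := by
  have hd' : (0 : ℝ) ≤ d - 1 := sub_nonneg.2 (by exact_mod_cast hd)
  have hw := P.w_nonneg hr
  have hp := P.p_pos hr
  have hM := P.M_nonneg
  have hk := P.k_nonneg
  have hw_le := P.w_le_one hr
  have hw_div : P.w r / r ≤ 1 := (div_le_one hr).2 (P.w_le_self hr)
  have hw_div_sq : P.w r / r ^ 2 ≤ 1 := (div_le_one (by positivity)).2 (P.w_le_sq hr)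
  have hp_le := P.p_le hr
  rw [← abs_of_pos hr, ← abs_mul, abs_of_pos hr, massCoeff_sub_mul P d τ v hr, abs_mul,
    abs_of_nonneg (P.E_nonneg hr)]
  gcongr
  · exact P.E_le hr
  calc |2 * P.p r ^ 2 * P.w r + P.p r * (d - 1) * (P.w r / r) + (d - 1) / 2 * (P.w r / r ^ 2) +
        P.w r * (τ - v)|
      ≤ (2 * P.p r ^ 2 * P.w r + P.p r * (d - 1) * (P.w r / r) +
          (d - 1) / 2 * (P.w r / r ^ 2)) + P.w r * (|τ| + |v|) := by
        refine (abs_add_le _ _).trans (add_le_add (abs_of_nonneg (by positivity)).le ?_)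
        rw [abs_mul, abs_of_nonneg hw]
        gcongr
        exact abs_sub _ _
    _ ≤ (2 * P.k ^ 2 * 1 + P.k * (d - 1) * 1 + (d - 1) / 2 * 1) + 1 * (τ₁ + a) := by gcongr
    _ ≤ _ := by linarith

theorem carlemanField_zero (τ : ℝ) (V : Ed d → ℝ) (u : Ed d → ℂ) (i : Fin d) :
    P.carlemanField τ V u i 0 = 0 := by
  simp [carlemanField, pohozaevField, fluxField, massField, eulerCoeff, fluxCoeff, P.w_zero]

/-- A bound for the Carleman field relative to `|u|² + |∇u|²`. -/
def fieldBound (P : CarlemanProfile) (d : ℕ) (b : ℝ) : ℝ :=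
  3 * P.M + P.M * (d - 1 + 2 * P.k) +
    P.M * (2 * P.k ^ 2 + P.k * (d - 1) + (d - 1) + b)

theorem abs_carlemanField_le (hd : 1 ≤ d) (hτ : |τ| ≤ τ₁) (hV : ∀ x, |V x| ≤ a) (u : Ed d → ℂ)
    (i : Fin d) (x : Ed d) : |P.carlemanField τ V u i x| ≤
      P.fieldBound d (τ₁ + a) * (‖u x‖ ^ 2 + gradNormSq u x) := by
  have hd' : (0 : ℝ) ≤ d - 1 := sub_nonneg.2 (by exact_mod_cast hd)
  have hM := P.M_nonneg
  have hk := P.k_nonneg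
  have hN := gradNormSq_nonneg u x
  have hτa : 0 ≤ τ₁ + a := add_nonneg ((abs_nonneg _).trans hτ) ((abs_nonneg _).trans (hV x))
  rw [fieldBound]
  set cF := P.M * (d - 1 + 2 * P.k)
  set cM := P.M * (2 * P.k ^ 2 + P.k * (d - 1) + (d - 1) + (τ₁ + a))
  have : 0 ≤ cF := by positivity
  have hcM : 0 ≤ cM := by positivity
  rcases eq_or_ne x 0 with rfl | hx
  · rw [carlemanField_zero, abs_zero]
    positivity
  have hr : 0 < ‖x‖ := norm_pos_iff.2 hx
  have hpohozaev : |pohozaevField (fun x => P.eulerCoeff ‖x‖) u i x| ≤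
      3 * P.M * gradNormSq u x := abs_pohozaevField_le (P.abs_eulerCoeff_mul_le hr) u i
  have hflux : |fluxField (fun x => P.fluxCoeff d ‖x‖) 1 u i x| ≤
      cF * (‖u x‖ ^ 2 + gradNormSq u x) := by
    refine (abs_fluxField_le (P.fluxCoeff_nonneg hd hr) (by simp) u i).trans ?_
    rw [← mul_add]
    gcongr
    exact P.fluxCoeff_le hd hr
  have hmass : |massField (fun x => P.massCoeff d τ ‖x‖ - P.eulerCoeff ‖x‖ * V x) u i x| ≤
      cM * ‖u x‖ ^ 2 := abs_massField_le (P.abs_massCoeff_sub_mul_le hd hr hτ (hV x)) u i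
  refine (abs_add_three _ _ _).trans ?_
  nlinarith [mul_nonneg hM (sq_nonneg ‖u x‖), mul_nonneg hcM hN]

variable {m c c₂ : ℝ}

theorem weighted_sub_le_divergence (hu : SolvesHelmholtz (fun y => V y + V₂ y - τ) s f u)
    (hV : ContDiffAt ℝ 1 V x) (hx : x ≠ 0) (hc : 0 ≤ c)
    (hc₂ : 0 ≤ c₂)
    (hbracket : c * (‖x‖ ^ 2 * decayWeight (m + 1) 1 x) ≤
      P.bracket τ (V x) (radialDeriv V x) (V₂ x) ‖x‖)
    (hforcing : 3 * P.w ‖x‖ ^ 2 / P.w' ‖x‖ ≤ c₂ * decayWeight (-m) 1 x) :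
    c * (‖x‖ ^ 2 * decayWeight (m + 1) 1 x * ‖u x‖ ^ 2) +
      -(P.M * c₂) * (decayWeight (-m) 1 x * ‖f x‖ ^ 2) +
      -(P.M * |s|) * (‖u x‖ ^ 2 + gradNormSq u x) ≤ divergence (P.carlemanField τ V u) x := by
  have hr : 0 < ‖x‖ := norm_pos_iff.2 hx
  have hN := gradNormSq_nonneg u x
  have hweight := decayWeight_pos (m + 1) 1 x
  have hweight_neg := decayWeight_pos (-m) 1 x
  have hgain : 0 ≤ c * (‖x‖ ^ 2 * decayWeight (m + 1) 1 x) * ‖u x‖ ^ 2 := by positivity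
  have hloss : 0 ≤ c₂ * decayWeight (-m) 1 x * ‖f x‖ ^ 2 +
      |s| * (‖u x‖ ^ 2 + gradNormSq u x) := by positivity
  refine le_trans ?_ (P.E_mul_bracket_sub_le_divergence hu hV hx)
  calc _ ≤ P.E ‖x‖ * (c * (‖x‖ ^ 2 * decayWeight (m + 1) 1 x) * ‖u x‖ ^ 2 -
        c₂ * decayWeight (-m) 1 x * ‖f x‖ ^ 2 - |s| * (‖u x‖ ^ 2 + gradNormSq u x)) := by
        linarith [mul_nonneg (sub_nonneg.2 (P.one_le_E hr)) hgain,
          mul_nonneg (sub_nonneg.2 (P.E_le hr)) hloss]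
    _ ≤ _ := by
        refine mul_le_mul_of_nonneg_left ?_ (P.E_nonneg hr)
        gcongr

theorem mul_integral_le (hd : 2 ≤ d) (hu : SolvesHelmholtz (fun y => V y + V₂ y - τ) s f u)
    (hV : ContDiff ℝ 1 V) (hτ : |τ| ≤ τ₁) (hVa : ∀ x, |V x| ≤ a) (hc : 0 ≤ c) (hc₂ : 0 ≤ c₂)
    (hbracket : ∀ x, x ≠ 0 → c * (‖x‖ ^ 2 * decayWeight (m + 1) 1 x) ≤
      P.bracket τ (V x) (radialDeriv V x) (V₂ x) ‖x‖)
    (hforcing : ∀ x : Ed d, x ≠ 0 → 3 * P.w ‖x‖ ^ 2 / P.w' ‖x‖ ≤ c₂ * decayWeight (-m) 1 x)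
    (hint_mass : Integrable fun x => ‖x‖ ^ 2 * decayWeight (m + 1) 1 x * ‖u x‖ ^ 2)
    (hint_forcing : Integrable fun x => decayWeight (-m) 1 x * ‖f x‖ ^ 2)
    (hint_norm_sq : Integrable fun x => ‖u x‖ ^ 2) (hint_grad : Integrable (gradNormSq u)) :
    c * (∫ x, ‖x‖ ^ 2 * decayWeight (m + 1) 1 x * ‖u x‖ ^ 2) ≤
      P.M * (c₂ * (∫ x, decayWeight (-m) 1 x * ‖f x‖ ^ 2) +
        |s| * ((∫ x, ‖u x‖ ^ 2) + ∫ x, gradNormSq u x)) := by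
  have hint_sum : Integrable fun x => ‖u x‖ ^ 2 + gradNormSq u x := hint_norm_sq.add hint_grad
  have hint := integral_nonpos_of_le_divergence hd
    (fun i x hx => P.contDiffAt_carlemanField τ hu.contDiff hV.contDiffAt hx i)
    (continuous_const.mul ((hu.contDiff.continuous.norm.pow 2).add
      (contDiff_gradNormSq hu.contDiff).continuous))
    (hint_sum.const_mul _) (P.abs_carlemanField_le (one_le_two.trans hd) hτ hVa u)
    (integrable_linearCombination_three c (-(P.M * c₂)) (-(P.M * |s|)) hint_mass hint_forcing
      hint_sum)
    fun x hx => P.weighted_sub_le_divergence hu hV.contDiffAt hx hc hc₂ (hbracket x hx)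
      (hforcing x hx)
  rw [integral_linearCombination_three _ _ _ hint_mass hint_forcing hint_sum,
    integral_add hint_norm_sq hint_grad] at hint
  linarith

end CarlemanProfile

/-! ### The explicit Carleman profile -/

section Bernoulli

variable {q t : ℝ}

theorem one_sub_rpow_neg_le_div (hq1 : q ≤ 1) (ht : 0 ≤ t) :
    1 - (1 + t) ^ (-q) ≤ t / (1 + t) := by
  have hpow : (1 + t) ^ (-1 : ℝ) ≤ (1 + t) ^ (-q) :=
    Real.rpow_le_rpow_of_exponent_le (by linarith) (by linarith)
  have hdiv : t / (1 + t) = 1 - (1 + t) ^ (-1 : ℝ) := by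
    rw [Real.rpow_neg_one]
    field_simp
    ring
  linarith

theorem one_sub_rpow_neg_le_mul (hq : 0 ≤ q) (hq1 : q ≤ 1) (ht : 0 ≤ t) :
    1 - (1 + t) ^ (-q) ≤ q * t * (1 + t) ^ (-q) := by
  have hpos : 0 < (1 + t) ^ (-q) := by positivity
  have hcancel : (1 + t) ^ (-q) * (1 + t) ^ q = 1 := by
    rw [← Real.rpow_add (by positivity), neg_add_cancel, Real.rpow_zero]
  have hbernoulli := rpow_one_add_le_one_add_mul_self (s := t) (by linarith) hq hq1
  linarith [mul_le_mul_of_nonneg_left hbernoulli hpos.le]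

theorem mul_rpow_neg_sub_one_le (hq : 0 ≤ q) (ht : 0 ≤ t) :
    q * t * (1 + t) ^ (-q - 1) ≤ 1 - (1 + t) ^ (-q) := by
  have hbase : 0 < 1 + t := by positivity
  have hpos : 0 < (1 + t) ^ (-q - 1) := by positivity
  have hcancel : (1 + t) ^ (-q - 1) * (1 + t) ^ (1 + q) = 1 := by
    rw [← Real.rpow_add hbase, show -q - 1 + (1 + q) = 0 by ring, Real.rpow_zero]
  have hstep : (1 + t) ^ (-q) = (1 + t) ^ (-q - 1) * (1 + t) := by
    rw [← Real.rpow_add_one hbase.ne', sub_add_cancel]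
  have hbernoulli := one_add_mul_self_le_rpow_one_add (s := t) (by linarith) (p := 1 + q)
    (by linarith)
  linarith [mul_le_mul_of_nonneg_left hbernoulli hpos.le]

end Bernoulli

/-- The bounded increasing function `w(r) = 1 - (1 + r²/R²)^{-q}`. -/
def radialProfile (q R r : ℝ) : ℝ := 1 - (1 + r ^ 2 / R ^ 2) ^ (-q)

/-- The derivative of `radialProfile q R`. -/
def radialProfileDeriv (q R r : ℝ) : ℝ := 2 * q * r / R ^ 2 * (1 + r ^ 2 / R ^ 2) ^ (-q - 1)

section RadialProfile

variable {q R r : ℝ}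

theorem contDiffAt_radialProfile (q R r : ℝ) : ContDiffAt ℝ 1 (radialProfile q R) r :=
  contDiffAt_const.sub ((contDiffAt_const.add ((contDiffAt_id.pow 2).div_const _)).rpow_const_of_ne
    (by simp only [id]; positivity))

theorem hasDerivAt_radialProfile (q R r : ℝ) :
    HasDerivAt (radialProfile q R) (radialProfileDeriv q R r) r := by
  have hpow := ((((hasDerivAt_id r).pow 2).div_const (R ^ 2)).const_add 1).rpow_const (p := -q)
    (Or.inl (by simp only [id, Pi.pow_apply]; positivity))
  refine (hpow.const_sub 1).congr_deriv ?_
  simp only [radialProfileDeriv, id, Pi.pow_apply]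
  push_cast
  ring

theorem radialProfile_zero (q R : ℝ) : radialProfile q R 0 = 0 := by simp [radialProfile]

theorem radialProfileDeriv_pos (hq : 0 < q) (hR : 0 < R) (hr : 0 < r) :
    0 < radialProfileDeriv q R r := by
  rw [radialProfileDeriv]
  positivity

theorem mul_radialProfileDeriv (q R r : ℝ) : r * radialProfileDeriv q R r =
    2 * (q * (r ^ 2 / R ^ 2) * (1 + r ^ 2 / R ^ 2) ^ (-q - 1)) := by
  rw [radialProfileDeriv]
  ring

theorem radialProfile_nonneg (hq : 0 ≤ q) (R r : ℝ) : 0 ≤ radialProfile q R r :=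
  sub_nonneg.2 (Real.rpow_le_one_of_one_le_of_nonpos (le_add_of_nonneg_right (by positivity))
    (neg_nonpos.2 hq))

theorem radialProfile_le_one (q R r : ℝ) : radialProfile q R r ≤ 1 :=
  sub_le_self _ (by positivity)

theorem radialProfile_le_div (hq1 : q ≤ 1) (R r : ℝ) :
    radialProfile q R r ≤ (r ^ 2 / R ^ 2) / (1 + r ^ 2 / R ^ 2) :=
  one_sub_rpow_neg_le_div hq1 (by positivity)

theorem radialProfile_le_sq (hq1 : q ≤ 1) (hR : 1 ≤ R) (r : ℝ) : radialProfile q R r ≤ r ^ 2 :=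
  calc radialProfile q R r ≤ (r ^ 2 / R ^ 2) / (1 + r ^ 2 / R ^ 2) := radialProfile_le_div hq1 R r
    _ ≤ r ^ 2 / R ^ 2 := div_le_self (by positivity) (le_add_of_nonneg_right (by positivity))
    _ ≤ r ^ 2 := div_le_self (by positivity) (one_le_pow₀ hR)

theorem radialProfile_le_self (hq1 : q ≤ 1) (hR : 1 ≤ R) (hr : 0 ≤ r) :
    radialProfile q R r ≤ r := by
  rcases le_total r 1 with hr1 | hr1
  · exact (radialProfile_le_sq hq1 hR r).trans (pow_le_of_le_one hr hr1 two_ne_zero)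
  · exact (radialProfile_le_one q R r).trans hr1

theorem mul_radialProfileDeriv_le (hq : 0 ≤ q) (R r : ℝ) :
    r * radialProfileDeriv q R r ≤ 2 * radialProfile q R r := by
  rw [mul_radialProfileDeriv, radialProfile]
  gcongr
  exact mul_rpow_neg_sub_one_le hq (by positivity)

theorem two_mul_radialProfile_le (hq : 0 ≤ q) (hq1 : q ≤ 1) (R r : ℝ) :
    2 * radialProfile q R r ≤ r * (1 + r ^ 2 / R ^ 2) * radialProfileDeriv q R r := by
  have hbase : 0 < 1 + r ^ 2 / R ^ 2 := by positivity
  have hstep : (1 + r ^ 2 / R ^ 2) ^ (-q - 1) * (1 + r ^ 2 / R ^ 2) =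
      (1 + r ^ 2 / R ^ 2) ^ (-q) := by
    rw [← Real.rpow_add_one hbase.ne', sub_add_cancel]
  calc 2 * radialProfile q R r
      ≤ 2 * (q * (r ^ 2 / R ^ 2) * (1 + r ^ 2 / R ^ 2) ^ (-q)) := by
        rw [radialProfile]
        gcongr
        exact one_sub_rpow_neg_le_mul hq hq1 (by positivity)
    _ = _ := by
        rw [mul_right_comm r, mul_radialProfileDeriv, ← hstep]
        ring

theorem two_mul_radialProfile_div_sub_le (hq : 0 ≤ q) (hq1 : q ≤ 1) (R : ℝ) (hr : 0 < r) :
    2 * radialProfile q R r / r - radialProfileDeriv q R r ≤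
      1 / R ^ 2 * r ^ 2 * radialProfileDeriv q R r := by
  have hdiv : 2 * radialProfile q R r / r ≤ (1 + r ^ 2 / R ^ 2) * radialProfileDeriv q R r := by
    rw [div_le_iff₀ hr]
    linarith [two_mul_radialProfile_le hq hq1 R r]
  calc _ ≤ (1 + r ^ 2 / R ^ 2) * radialProfileDeriv q R r - radialProfileDeriv q R r := by gcongr
    _ = _ := by ring

theorem radialProfile_le_mul_deriv (hq : 0 < q) (hq1 : q ≤ 1) (hR : 1 ≤ R) (hr : 0 < r) :
    radialProfile q R r ≤ 1 / (2 * q) * (1 + r ^ 2) ^ q * r * radialProfileDeriv q R r := by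
  have hw' := radialProfileDeriv_pos hq (zero_lt_one.trans_le hR) hr
  have hbase : 0 < 1 + r ^ 2 / R ^ 2 := by positivity
  have hpow : (1 + r ^ 2 / R ^ 2) ^ q * (1 + r ^ 2 / R ^ 2) ^ (-q - 1) =
      1 / (1 + r ^ 2 / R ^ 2) := by
    rw [← Real.rpow_add hbase, one_div, ← Real.rpow_neg_one]
    ring_nf
  calc radialProfile q R r ≤ (r ^ 2 / R ^ 2) / (1 + r ^ 2 / R ^ 2) := radialProfile_le_div hq1 R r
    _ = 1 / (2 * q) * (1 + r ^ 2 / R ^ 2) ^ q * (r * radialProfileDeriv q R r) := by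
        rw [mul_radialProfileDeriv, div_eq_mul_one_div (r ^ 2 / R ^ 2), ← hpow]
        field_simp
    _ ≤ 1 / (2 * q) * (1 + r ^ 2) ^ q * (r * radialProfileDeriv q R r) := by
        gcongr
        exact div_le_self (by positivity) (one_le_pow₀ hR)
    _ = _ := by ring

theorem one_add_sq_rpow_le_one_add_rpow (hq : 0 ≤ q) (hr : 0 ≤ r) :
    (1 + r ^ 2) ^ q ≤ (1 + r) ^ (2 * q) := by
  rw [Real.rpow_mul (by positivity), Real.rpow_two]
  exact Real.rpow_le_rpow (by positivity) (by nlinarith) hq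

theorem radialProfile_mul_rpow_le (hq : 0 < q) (hq1 : q ≤ 1) (hR : 1 ≤ R) (hr : 0 < r) {γ : ℝ}
    (hqγ : q ≤ γ / 4) : radialProfile q R r * (1 + r) ^ (-γ - 1) ≤
      1 / (2 * q) * (1 + r) ^ (-γ / 2) * radialProfileDeriv q R r := by
  have hw' := radialProfileDeriv_pos hq (zero_lt_one.trans_le hR) hr
  have hpow : (1 + r ^ 2) ^ q ≤ (1 + r) ^ (γ / 2) :=
    (one_add_sq_rpow_le_one_add_rpow hq.le hr.le).trans
      (Real.rpow_le_rpow_of_exponent_le (by linarith) (by linarith))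
  have hexp : (1 + r) ^ (γ / 2) * (1 + r) * (1 + r) ^ (-γ - 1) = (1 + r) ^ (-γ / 2) := by
    rw [← Real.rpow_add_one (by positivity), ← Real.rpow_add (by positivity)]
    ring_nf
  calc _ ≤ (1 / (2 * q) * (1 + r ^ 2) ^ q * r * radialProfileDeriv q R r) *
        (1 + r) ^ (-γ - 1) := by
        gcongr
        exact radialProfile_le_mul_deriv hq hq1 hR hr
    _ ≤ (1 / (2 * q) * (1 + r) ^ (γ / 2) * (1 + r) * radialProfileDeriv q R r) *
        (1 + r) ^ (-γ - 1) := by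
        gcongr
        linarith
    _ = _ := by
        rw [← hexp]
        ring

theorem le_one_add_sq_rpow_half (r : ℝ) : r ≤ (1 + r ^ 2) ^ (1 / 2 : ℝ) := by
  rw [← Real.sqrt_eq_rpow]
  exact Real.le_sqrt_of_sq_le (by linarith)

theorem three_mul_radialProfile_sq_div_le (hq : 0 < q) (hq1 : q ≤ 1) (hR : 1 ≤ R) (hr : 0 < r)
    {m : ℝ} (hm : q + 1 / 2 ≤ m) :
    3 * radialProfile q R r ^ 2 / radialProfileDeriv q R r ≤ 3 / (2 * q) * (1 + r ^ 2) ^ m := by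
  have hw' := radialProfileDeriv_pos hq (zero_lt_one.trans_le hR) hr
  have hpow : (1 + r ^ 2) ^ q * r ≤ (1 + r ^ 2) ^ m := by
    calc _ ≤ (1 + r ^ 2) ^ q * (1 + r ^ 2) ^ (1 / 2 : ℝ) := by
          gcongr
          exact le_one_add_sq_rpow_half r
      _ = (1 + r ^ 2) ^ (q + 1 / 2) := by rw [← Real.rpow_add (by positivity)]
      _ ≤ _ := Real.rpow_le_rpow_of_exponent_le (by nlinarith) hm
  rw [div_le_iff₀ hw']
  calc 3 * radialProfile q R r ^ 2 ≤ 3 * radialProfile q R r := by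
        gcongr
        exact pow_le_of_le_one (radialProfile_nonneg hq.le R r) (radialProfile_le_one q R r)
          two_ne_zero
    _ ≤ 3 * (1 / (2 * q) * (1 + r ^ 2) ^ q * r * radialProfileDeriv q R r) := by
        gcongr
        exact radialProfile_le_mul_deriv hq hq1 hR hr
    _ = 3 / (2 * q) * ((1 + r ^ 2) ^ q * r) * radialProfileDeriv q R r := by ring
    _ ≤ _ := by gcongr

theorem mul_sq_mul_rpow_le_radialProfileDeriv (hq : 0 ≤ q) (hR : 1 ≤ R) (hr : 0 ≤ r) {m : ℝ}
    (hm : q + 1 / 2 ≤ m) :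
    2 * q / R ^ 2 * (r ^ 2 * (1 + r ^ 2) ^ (-(m + 1))) ≤ radialProfileDeriv q R r := by
  have hdiv : r ^ 2 / R ^ 2 ≤ r ^ 2 := div_le_self (by positivity) (one_le_pow₀ hR)
  have hpow : r * (1 + r ^ 2) ^ (-(m + 1)) ≤ (1 + r ^ 2 / R ^ 2) ^ (-q - 1) := by
    calc _ ≤ (1 + r ^ 2) ^ (1 / 2 : ℝ) * (1 + r ^ 2) ^ (-(m + 1)) := by
          gcongr
          exact le_one_add_sq_rpow_half r
      _ = (1 + r ^ 2) ^ (1 / 2 + -(m + 1)) := by rw [← Real.rpow_add (by positivity)]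
      _ ≤ (1 + r ^ 2) ^ (-q - 1) :=
          Real.rpow_le_rpow_of_exponent_le (by nlinarith) (by linarith)
      _ ≤ _ := Real.rpow_le_rpow_of_nonpos (by positivity) (by linarith) (by linarith)
  calc _ = 2 * q * r / R ^ 2 * (r * (1 + r ^ 2) ^ (-(m + 1))) := by ring
    _ ≤ _ := by
        rw [radialProfileDeriv]
        gcongr

end RadialProfile

/-- The slope `φ'(r) = k(1 + r/L)^{-1-θ}` of the Carleman phase. -/
def phaseSlope (k L θ r : ℝ) : ℝ := k * (1 + r / L) ^ (-1 - θ)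

/-- The derivative of `phaseSlope k L θ`. -/
def phaseSlopeDeriv (k L θ r : ℝ) : ℝ := -(phaseSlope k L θ r * (1 + θ) / (L + r))

/-- The Carleman weight `e^{2φ}` with `φ' = phaseSlope k L θ` and `φ(0) = 0`. -/
def phaseWeight (k L θ r : ℝ) : ℝ := Real.exp (2 * (k * L / θ * (1 - (1 + r / L) ^ (-θ))))

section Phase

variable {k L θ r : ℝ}

theorem contDiffAt_phaseSlope (hL : 0 < L) (hr : 0 < r) (k θ : ℝ) :
    ContDiffAt ℝ 1 (phaseSlope k L θ) r :=
  contDiffAt_const.mul ((contDiffAt_const.add (contDiffAt_id.div_const _)).rpow_const_of_ne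
    (by simp only [id]; positivity))

theorem contDiffAt_phaseWeight (hL : 0 < L) (hr : 0 < r) (k θ : ℝ) :
    ContDiffAt ℝ 1 (phaseWeight k L θ) r :=
  (contDiffAt_const.mul (contDiffAt_const.mul (contDiffAt_const.sub
    ((contDiffAt_const.add (contDiffAt_id.div_const _)).rpow_const_of_ne
      (by simp only [id]; positivity))))).exp

theorem hasDerivAt_one_add_div_rpow (hL : 0 < L) (hr : 0 < r) (b : ℝ) :
    HasDerivAt (fun r : ℝ => (1 + r / L) ^ b) (1 / L * b * (1 + r / L) ^ (b - 1)) r :=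
  (((hasDerivAt_id r).div_const L).const_add 1).rpow_const
    (Or.inl (by simp only [id]; positivity))

theorem hasDerivAt_phaseSlope (hL : 0 < L) (hr : 0 < r) (k θ : ℝ) :
    HasDerivAt (phaseSlope k L θ) (phaseSlopeDeriv k L θ r) r := by
  refine ((hasDerivAt_one_add_div_rpow hL hr (-1 - θ)).const_mul k).congr_deriv ?_
  rw [phaseSlopeDeriv, phaseSlope, Real.rpow_sub_one (by positivity)]
  field_simp
  ring

theorem hasDerivAt_phaseWeight (hL : 0 < L) (hr : 0 < r) (k : ℝ) (hθ : θ ≠ 0) :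
    HasDerivAt (phaseWeight k L θ) (2 * phaseSlope k L θ r * phaseWeight k L θ r) r := by
  refine ((((hasDerivAt_one_add_div_rpow hL hr (-θ)).const_sub 1).const_mul
    (k * L / θ)).const_mul 2).exp.congr_deriv ?_
  rw [phaseWeight, phaseSlope, show -θ - 1 = -1 - θ by ring]
  field_simp

theorem one_le_phaseWeight (hL : 0 < L) (hr : 0 ≤ r) (hk : 0 ≤ k) (hθ : 0 ≤ θ) :
    1 ≤ phaseWeight k L θ r := by
  have hpow : (1 + r / L) ^ (-θ) ≤ 1 := Real.rpow_le_one_of_one_le_of_nonpos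
    (le_add_of_nonneg_right (by positivity)) (neg_nonpos.2 hθ)
  rw [phaseWeight, Real.one_le_exp_iff]
  have := sub_nonneg.2 hpow
  positivity

theorem phaseWeight_le (hL : 0 < L) (hr : 0 ≤ r) (hk : 0 ≤ k) (hθ : 0 ≤ θ) :
    phaseWeight k L θ r ≤ Real.exp (2 * (k * L / θ)) := by
  rw [phaseWeight]
  gcongr
  exact mul_le_of_le_one_right (by positivity) (sub_le_self _ (by positivity))

theorem phaseSlope_pos (hL : 0 < L) (hr : 0 ≤ r) (hk : 0 < k) (θ : ℝ) :
    0 < phaseSlope k L θ r := by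
  rw [phaseSlope]
  positivity

theorem phaseSlope_le (hL : 0 < L) (hr : 0 ≤ r) (hk : 0 ≤ k) (hθ : 0 ≤ θ) :
    phaseSlope k L θ r ≤ k * (L / (L + r)) := by
  have hpow : (1 + r / L) ^ (-1 - θ) ≤ (1 + r / L) ^ (-1 : ℝ) :=
    Real.rpow_le_rpow_of_exponent_le (le_add_of_nonneg_right (by positivity)) (by linarith)
  have hinv : (1 + r / L) ^ (-1 : ℝ) = L / (L + r) := by
    rw [Real.rpow_neg_one]
    field_simp
  rw [phaseSlope, ← hinv]
  gcongr

theorem phaseSlope_le_const (hL : 0 < L) (hr : 0 ≤ r) (hk : 0 ≤ k) (hθ : 0 ≤ θ) :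
    phaseSlope k L θ r ≤ k :=
  (phaseSlope_le hL hr hk hθ).trans
    (mul_le_of_le_one_right hk ((div_le_one (by positivity)).2 (by linarith)))

theorem half_le_phaseSlope (hL : 0 < L) (hr : 0 ≤ r) (hk : 0 ≤ k) (hθ1 : θ ≤ 1)
    (hrL : 4 * r ≤ L) : k / 2 ≤ phaseSlope k L θ r := by
  have hratio : r / L ≤ 1 / 4 := by
    rw [div_le_iff₀ hL]
    linarith
  have hratio0 : 0 ≤ r / L := by positivity
  have hhalf : (1 / 2 : ℝ) ≤ (1 + r / L) ^ (-1 - θ) := by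
    calc (1 / 2 : ℝ) ≤ (1 + r / L) ^ (-2 : ℝ) := by
          rw [Real.rpow_neg (by positivity), Real.rpow_two, one_div]
          exact inv_anti₀ (by positivity) (by nlinarith)
      _ ≤ _ := Real.rpow_le_rpow_of_exponent_le (by linarith) (by linarith)
  rw [phaseSlope, div_eq_mul_one_div]
  gcongr

end Phase

section PhaseErrors

variable {q R k L θ r : ℝ}

theorem mul_one_add_sq_div_div_pow_le (hL : 0 < L) (hr : 0 ≤ r) (R : ℝ) :
    L * (r * (1 + r ^ 2 / R ^ 2)) / (L + r) ^ 3 ≤ 1 / L + L / R ^ 2 := by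
  rw [div_le_iff₀ (by positivity)]
  have hlinear : L * r ≤ 1 / L * (L + r) ^ 3 := by
    rw [div_mul_eq_mul_div, le_div_iff₀ hL, one_mul]
    have : 0 ≤ L ^ 3 + 2 * L ^ 2 * r + 3 * L * r ^ 2 + r ^ 3 := by positivity
    linarith [show (L + r) ^ 3 = L ^ 3 + 3 * L ^ 2 * r + 3 * L * r ^ 2 + r ^ 3 by ring]
  have hcubic : L / R ^ 2 * r ^ 3 ≤ L / R ^ 2 * (L + r) ^ 3 := by
    gcongr
    linarith
  calc L * (r * (1 + r ^ 2 / R ^ 2)) = L * r + L / R ^ 2 * r ^ 3 := by ring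
    _ ≤ _ := by linarith

theorem radialProfile_mul_phaseSlopeDeriv_sq_div_le (hq : 0 < q) (hq1 : q ≤ 1) (hR : 0 < R)
    (hr : 0 < r) (hL : 0 < L) (hk : 0 < k) (hθ : 0 ≤ θ) (hθ1 : θ ≤ 1) :
    3 / 4 * (radialProfile q R r * phaseSlopeDeriv k L θ r ^ 2 / phaseSlope k L θ r) ≤
      3 / 2 * k * (1 / L + L / R ^ 2) * radialProfileDeriv q R r := by
  have hp := phaseSlope_pos hL hr.le hk θ
  have hw := radialProfile_nonneg hq.le R r
  have hw' := radialProfileDeriv_pos hq hR hr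
  have hquot : radialProfile q R r * phaseSlopeDeriv k L θ r ^ 2 / phaseSlope k L θ r =
      radialProfile q R r * phaseSlope k L θ r * (1 + θ) ^ 2 / (L + r) ^ 2 := by
    rw [phaseSlopeDeriv]
    field_simp
  rw [hquot]
  calc 3 / 4 * (radialProfile q R r * phaseSlope k L θ r * (1 + θ) ^ 2 / (L + r) ^ 2)
      ≤ 3 / 4 * (radialProfile q R r * (k * (L / (L + r))) * (1 + 1) ^ 2 / (L + r) ^ 2) := by
        gcongr
        exact phaseSlope_le hL hr.le hk.le hθ
    _ = 3 / 2 * k * (2 * radialProfile q R r) * L / (L + r) ^ 3 := by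
        field_simp
        ring
    _ ≤ 3 / 2 * k * (r * (1 + r ^ 2 / R ^ 2) * radialProfileDeriv q R r) * L / (L + r) ^ 3 := by
        have := two_mul_radialProfile_le hq.le hq1 R r
        gcongr
    _ = 3 / 2 * k * (L * (r * (1 + r ^ 2 / R ^ 2)) / (L + r) ^ 3) * radialProfileDeriv q R r := by
        ring
    _ ≤ _ := by
        gcongr
        exact mul_one_add_sq_div_div_pow_le hL hr.le R

theorem mul_le_deriv_mul_phaseSlope_sq_add (hq : 0 ≤ q) (hq1 : q ≤ 1) (R : ℝ) (hr : 0 < r)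
    (hL : 0 < L) (k : ℝ) (hθ : 0 ≤ θ) :
    phaseSlope k L θ r ^ 2 * radialProfileDeriv q R r *
        (1 - (1 + r ^ 2 / R ^ 2) * (1 + θ) * r / (L + r)) ≤
      radialProfileDeriv q R r * phaseSlope k L θ r ^ 2 +
        2 * radialProfile q R r * phaseSlope k L θ r * phaseSlopeDeriv k L θ r := by
  calc _ = phaseSlope k L θ r ^ 2 * radialProfileDeriv q R r -
        phaseSlope k L θ r ^ 2 * (1 + θ) / (L + r) *
          (r * (1 + r ^ 2 / R ^ 2) * radialProfileDeriv q R r) := by ring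
    _ ≤ phaseSlope k L θ r ^ 2 * radialProfileDeriv q R r -
        phaseSlope k L θ r ^ 2 * (1 + θ) / (L + r) * (2 * radialProfile q R r) := by
        have := two_mul_radialProfile_le hq hq1 R r
        gcongr
    _ = _ := by
        rw [phaseSlopeDeriv]
        ring

theorem sq_div_eight_mul_le_deriv_mul_phaseSlope_sq_add (hq : 0 < q) (hq1 : q ≤ 1) (hR : 0 < R)
    (hr : 0 < r) (hL : 0 < L) (hk : 0 ≤ k) (hθ : 0 ≤ θ) (hθ1 : θ ≤ 1) (hrL : 4 * r ≤ L)
    (hrR : 2 * r ≤ R) :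
    k ^ 2 / 8 * radialProfileDeriv q R r ≤ radialProfileDeriv q R r * phaseSlope k L θ r ^ 2 +
      2 * radialProfile q R r * phaseSlope k L θ r * phaseSlopeDeriv k L θ r := by
  have hw' := radialProfileDeriv_pos hq hR hr
  have hslope : (k / 2) ^ 2 ≤ phaseSlope k L θ r ^ 2 := by
    gcongr
    exact half_le_phaseSlope hL hr.le hk hθ1 hrL
  have hfactor : (1 + r ^ 2 / R ^ 2) * (1 + θ) * r / (L + r) ≤ 1 / 2 := by
    have hratio : r ^ 2 / R ^ 2 ≤ 1 / 4 := by
      rw [div_le_iff₀ (by positivity)]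
      nlinarith
    rw [div_le_iff₀ (by positivity)]
    calc (1 + r ^ 2 / R ^ 2) * (1 + θ) * r ≤ (1 + 1 / 4) * (1 + 1) * r := by gcongr
      _ ≤ _ := by linarith
  calc k ^ 2 / 8 * radialProfileDeriv q R r = (k / 2) ^ 2 * radialProfileDeriv q R r * (1 / 2) := by
        ring
    _ ≤ phaseSlope k L θ r ^ 2 * radialProfileDeriv q R r *
        (1 - (1 + r ^ 2 / R ^ 2) * (1 + θ) * r / (L + r)) := by
        gcongr
        linarith
    _ ≤ _ := mul_le_deriv_mul_phaseSlope_sq_add hq.le hq1 R hr hL k hθ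

theorem phaseSlope_sq_mul_loss_le (hr : 0 ≤ r) (hL : 0 < L) (hk : 0 < k) (hθ : 0 ≤ θ)
    (hθ1 : θ ≤ 1) (R : ℝ) :
    phaseSlope k L θ r ^ 2 * (θ * (r / (L + r)) + (1 + θ) * (r ^ 3 / R ^ 2) / (L + r)) ≤
      k ^ 2 * θ + 2 * k ^ 2 * L ^ 2 / R ^ 2 := by
  have hp := (phaseSlope_pos hL hr hk θ).le
  have hL_le : L / (L + r) ≤ 1 := by
    rw [div_le_one (by positivity)]
    linarith
  have hr_le : r / (L + r) ≤ 1 := by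
    rw [div_le_one (by positivity)]
    linarith
  calc _ ≤ (k * (L / (L + r))) ^ 2 *
        (θ * (r / (L + r)) + (1 + 1) * (r ^ 3 / R ^ 2) / (L + r)) := by
        gcongr
        exact phaseSlope_le hL hr hk.le hθ
    _ = k ^ 2 * θ * ((L / (L + r)) ^ 2 * (r / (L + r))) +
        2 * k ^ 2 * L ^ 2 / R ^ 2 * (r / (L + r)) ^ 3 := by ring
    _ ≤ k ^ 2 * θ * (1 ^ 2 * 1) + 2 * k ^ 2 * L ^ 2 / R ^ 2 * 1 ^ 3 := by gcongr
    _ = _ := by ring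

theorem neg_mul_le_deriv_mul_phaseSlope_sq_add (hq : 0 < q) (hq1 : q ≤ 1) (hR : 0 < R)
    (hr : 0 < r) (hL : 0 < L) (hk : 0 < k) (hθ : 0 ≤ θ) (hθ1 : θ ≤ 1) :
    -((k ^ 2 * θ + 2 * k ^ 2 * L ^ 2 / R ^ 2) * radialProfileDeriv q R r) ≤
      radialProfileDeriv q R r * phaseSlope k L θ r ^ 2 +
        2 * radialProfile q R r * phaseSlope k L θ r * phaseSlopeDeriv k L θ r := by
  have hw' := (radialProfileDeriv_pos hq hR hr).le
  have hfactor : 1 - (1 + r ^ 2 / R ^ 2) * (1 + θ) * r / (L + r) =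
      L / (L + r) - (θ * (r / (L + r)) + (1 + θ) * (r ^ 3 / R ^ 2) / (L + r)) := by
    field_simp
    ring
  have hgain : 0 ≤ phaseSlope k L θ r ^ 2 * radialProfileDeriv q R r * (L / (L + r)) := by
    positivity
  have hloss := mul_le_mul_of_nonneg_right (phaseSlope_sq_mul_loss_le hr.le hL hk hθ hθ1 R) hw'
  have hlower := mul_le_deriv_mul_phaseSlope_sq_add hq.le hq1 R hr hL k hθ
  rw [hfactor] at hlower
  linarith

end PhaseErrors

/-! ### Choice of the parameters -/

/-- The parameters of `radialProfile q R` and `phaseSlope k L θ`. -/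
structure CarlemanParams where
  (q R k L θ : ℝ)
  q_pos : 0 < q
  q_le_one : q ≤ 1
  one_le_R : 1 ≤ R
  k_pos : 0 < k
  L_pos : 0 < L
  θ_pos : 0 < θ
  θ_le_one : θ ≤ 1

theorem CarlemanParams.R_pos (P : CarlemanParams) : 0 < P.R := zero_lt_one.trans_le P.one_le_R

/-- The multiplier profile with radial factor `radialProfile` and phase slope `phaseSlope`. -/
def CarlemanParams.profile (P : CarlemanParams) : CarlemanProfile where
  E := phaseWeight P.k P.L P.θ
  w := radialProfile P.q P.R
  w' := radialProfileDeriv P.q P.R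
  p := phaseSlope P.k P.L P.θ
  p' := phaseSlopeDeriv P.k P.L P.θ
  M := Real.exp (2 * (P.k * P.L / P.θ))
  k := P.k
  Λ := 1 / P.R ^ 2
  contDiffAt_E hr := contDiffAt_phaseWeight P.L_pos hr P.k P.θ
  contDiffAt_w _ := contDiffAt_radialProfile P.q P.R _
  contDiffAt_p hr := contDiffAt_phaseSlope P.L_pos hr P.k P.θ
  hasDerivAt_E hr := hasDerivAt_phaseWeight P.L_pos hr P.k P.θ_pos.ne'
  hasDerivAt_w _ := hasDerivAt_radialProfile P.q P.R _
  hasDerivAt_p hr := hasDerivAt_phaseSlope P.L_pos hr P.k P.θ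
  one_le_E hr := one_le_phaseWeight P.L_pos hr.le P.k_pos.le P.θ_pos.le
  E_le hr := phaseWeight_le P.L_pos hr.le P.k_pos.le P.θ_pos.le
  w_zero := radialProfile_zero P.q P.R
  w_nonneg _ := radialProfile_nonneg P.q_pos.le P.R _
  w_le_one _ := radialProfile_le_one P.q P.R _
  w_le_self hr := radialProfile_le_self P.q_le_one P.one_le_R hr.le
  w_le_sq _ := radialProfile_le_sq P.q_le_one P.one_le_R _
  w'_pos hr := radialProfileDeriv_pos P.q_pos P.R_pos hr
  p_pos hr := phaseSlope_pos P.L_pos hr.le P.k_pos P.θ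
  p_le hr := phaseSlope_le_const P.L_pos hr.le P.k_pos.le P.θ_pos.le
  mul_w'_le _ := mul_radialProfileDeriv_le P.q_pos.le P.R _
  two_mul_div_sub_le hr := two_mul_radialProfile_div_sub_le P.q_pos.le P.q_le_one P.R hr

/-- The requirements on the parameters when the potentials contribute at most
`C₁ (1 + r)^{-γ/2} w'(r)`: beyond `R₀` this is small compared with `τ₀`, inside the ball of radius
`R₀` it is dominated by the slope `k` of the phase, and the remaining errors are small. -/
structure CarlemanParams.IsAdmissible (P : CarlemanParams) (τ₀ C₁ γ R₀ : ℝ) : Prop where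
  potential_small : ∀ r, R₀ ≤ r → C₁ * (1 + r) ^ (-γ / 2) ≤ τ₀ / 4
  potential_le_slope : C₁ ≤ P.k ^ 2 / 8
  four_mul_le_L : 4 * R₀ ≤ P.L
  two_mul_le_R : 2 * R₀ ≤ P.R
  curvature_small : 3 / 2 * P.k * (1 / P.L + P.L / P.R ^ 2) ≤ τ₀ / 8
  phase_loss_small : P.k ^ 2 * P.θ + 2 * P.k ^ 2 * P.L ^ 2 / P.R ^ 2 ≤ τ₀ / 8
  angular_loss_small : 1 / P.R ^ 2 / 4 ≤ τ₀ / 16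

theorem exists_pos_forall_mul_rpow_le {s δ : ℝ} (C : ℝ) (hδ : 0 < δ) (hs : s < 0) :
    ∃ R₀ : ℝ, 0 < R₀ ∧ ∀ r, R₀ ≤ r → C * (1 + r) ^ s ≤ δ := by
  have hlim : Filter.Tendsto (fun r : ℝ => C * (1 + r) ^ s) Filter.atTop (nhds 0) := by
    simpa using ((tendsto_rpow_neg_atTop (neg_pos.2 hs)).comp
      (Filter.tendsto_atTop_add_const_left Filter.atTop (1 : ℝ) Filter.tendsto_id)).const_mul C
  obtain ⟨R₀, hR₀⟩ := Filter.eventually_atTop.1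
    ((hlim.eventually (eventually_le_nhds hδ)).and (Filter.eventually_gt_atTop 0))
  exact ⟨R₀, (hR₀ R₀ le_rfl).2, fun r hr => (hR₀ r hr).1⟩

theorem exists_phase_decay {τ₀ k : ℝ} (hτ₀ : 0 < τ₀) (hk : 0 < k) :
    ∃ θ : ℝ, 0 < θ ∧ θ ≤ 1 ∧ k ^ 2 * θ ≤ τ₀ / 16 := by
  refine ⟨min 1 (τ₀ / (16 * k ^ 2)), by positivity, min_le_left _ _, ?_⟩
  calc k ^ 2 * min 1 (τ₀ / (16 * k ^ 2)) ≤ k ^ 2 * (τ₀ / (16 * k ^ 2)) := by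
        gcongr
        exact min_le_right _ _
    _ = _ := by field_simp

theorem exists_phase_scale {τ₀ k R₀ : ℝ} (hτ₀ : 0 < τ₀) (hk : 0 < k) (hR₀ : 0 < R₀) :
    ∃ L : ℝ, 0 < L ∧ 4 * R₀ ≤ L ∧ 3 / 2 * k * (1 / L) ≤ τ₀ / 16 := by
  refine ⟨4 * R₀ + 24 * k / τ₀, by positivity, le_add_of_nonneg_right (by positivity), ?_⟩
  calc 3 / 2 * k * (1 / (4 * R₀ + 24 * k / τ₀)) ≤ 3 / 2 * k * (1 / (24 * k / τ₀)) := by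
        gcongr
        linarith
    _ = _ := by
        field_simp
        norm_num

theorem exists_forall_div_sq_le {δ : ℝ} (hδ : 0 < δ) (b : ℝ) :
    ∃ R₁ : ℝ, ∀ R, R₁ ≤ R → b / R ^ 2 ≤ δ := by
  have hlim : Filter.Tendsto (fun R : ℝ => b / R ^ 2) Filter.atTop (nhds 0) :=
    tendsto_const_nhds.div_atTop (Filter.tendsto_pow_atTop two_ne_zero)
  exact Filter.eventually_atTop.1 (hlim.eventually (eventually_le_nhds hδ))

theorem CarlemanParams.exists_isAdmissible {q τ₀ C₁ γ : ℝ} (hq : 0 < q) (hq1 : q ≤ 1)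
    (hτ₀ : 0 < τ₀) (hC₁ : 0 ≤ C₁) (hγ : 0 < γ) :
    ∃ (P : CarlemanParams) (R₀ : ℝ), P.q = q ∧ P.IsAdmissible τ₀ C₁ γ R₀ := by
  obtain ⟨R₀, hR₀, hfar⟩ := exists_pos_forall_mul_rpow_le C₁ (show 0 < τ₀ / 4 by positivity)
    (show -γ / 2 < 0 by linarith)
  have hk : 0 < 8 * C₁ + 1 := by positivity
  set k := 8 * C₁ + 1
  obtain ⟨θ, hθ, hθ1, hkθ⟩ := exists_phase_decay hτ₀ hk
  obtain ⟨L, hL, hR₀L, hkL⟩ := exists_phase_scale hτ₀ hk hR₀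
  have hδ : 0 < τ₀ / 16 := by positivity
  obtain ⟨R₁, hcurvature⟩ := exists_forall_div_sq_le hδ (3 / 2 * k * L)
  obtain ⟨R₂, hphase⟩ := exists_forall_div_sq_le hδ (2 * k ^ 2 * L ^ 2)
  obtain ⟨R₃, hangular⟩ := exists_forall_div_sq_le hδ (1 / 4)
  set R := max (max 1 (2 * R₀)) (max R₁ (max R₂ R₃))
  have hR : 1 ≤ R := (le_max_left _ _).trans (le_max_left _ _)
  specialize hcurvature R ((le_max_left _ _).trans (le_max_right _ _))
  specialize hphase R (by simp [R])
  specialize hangular R (by simp [R])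
  refine ⟨⟨q, R, k, L, θ, hq, hq1, hR, hk, hL, hθ, hθ1⟩, R₀, rfl, hfar, ?_, hR₀L,
    (le_max_right _ _).trans (le_max_left _ _), ?_, ?_, ?_⟩
  · nlinarith
  · calc 3 / 2 * k * (1 / L + L / R ^ 2) = 3 / 2 * k * (1 / L) + 3 / 2 * k * L / R ^ 2 := by ring
      _ ≤ τ₀ / 8 := by linarith
  · linarith
  · rwa [div_right_comm]

/-! ### Positivity of the bracket -/

/-- The constant `C₁` such that potentials of size `a` contribute at most
`C₁ (1 + r)^{-γ/2} w'(r)` to the bracket. -/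
def potentialConst (a q : ℝ) : ℝ := a + a / (2 * q) + 3 * a ^ 2 / (4 * q ^ 2)

section Bracket

variable {q R r a γ v v' v₂ : ℝ}

theorem radialProfile_mul_le_of_le_rpow (hq : 0 < q) (hq1 : q ≤ 1) (hR : 1 ≤ R) (hr : 0 < r)
    (hqγ : q ≤ γ / 4) (ha : 0 ≤ a) (hv' : v' ≤ a * (1 + r) ^ (-γ - 1)) :
    radialProfile q R r * v' ≤ a / (2 * q) * (1 + r) ^ (-γ / 2) * radialProfileDeriv q R r := by
  have hw := radialProfile_nonneg hq.le R r
  calc radialProfile q R r * v' ≤ radialProfile q R r * (a * (1 + r) ^ (-γ - 1)) := by gcongr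
    _ = a * (radialProfile q R r * (1 + r) ^ (-γ - 1)) := by ring
    _ ≤ a * (1 / (2 * q) * (1 + r) ^ (-γ / 2) * radialProfileDeriv q R r) := by
        have := radialProfile_mul_rpow_le hq hq1 hR hr hqγ
        gcongr
    _ = _ := by ring

theorem one_add_rpow_neg_half_le_one (hr : 0 ≤ r) (hγ : 0 ≤ γ) : (1 + r) ^ (-γ / 2) ≤ 1 :=
  Real.rpow_le_one_of_one_le_of_nonpos (by linarith) (by linarith)

theorem three_mul_radialProfile_sq_mul_sq_div_le (hq : 0 < q) (hq1 : q ≤ 1) (hR : 1 ≤ R)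
    (hr : 0 < r) (hqγ : q ≤ γ / 4) (ha : 0 ≤ a) (hv₂ : |v₂| ≤ a * (1 + r) ^ (-γ - 1)) :
    3 * radialProfile q R r ^ 2 * v₂ ^ 2 / radialProfileDeriv q R r ≤
      3 * a ^ 2 / (4 * q ^ 2) * (1 + r) ^ (-γ / 2) * radialProfileDeriv q R r := by
  have hw := radialProfile_nonneg hq.le R r
  have hw' := radialProfileDeriv_pos hq (zero_lt_one.trans_le hR) hr
  set δ := (1 + r) ^ (-γ / 2)
  have hδ1 : δ ≤ 1 := one_add_rpow_neg_half_le_one hr.le (by linarith)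
  have : 0 ≤ δ := by positivity
  have hsq : (radialProfile q R r * |v₂|) ^ 2 ≤ (a / (2 * q) * δ * radialProfileDeriv q R r) ^ 2 :=
    pow_le_pow_left₀ (by positivity)
      (radialProfile_mul_le_of_le_rpow hq hq1 hR hr hqγ ha hv₂) 2
  rw [mul_pow, sq_abs] at hsq
  rw [div_le_iff₀ hw']
  calc 3 * radialProfile q R r ^ 2 * v₂ ^ 2
      ≤ 3 * (a / (2 * q) * δ * radialProfileDeriv q R r) ^ 2 := by linarith
    _ = 3 * a ^ 2 / (4 * q ^ 2) * (δ * δ) * radialProfileDeriv q R r *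
        radialProfileDeriv q R r := by ring
    _ ≤ 3 * a ^ 2 / (4 * q ^ 2) * (δ * 1) * radialProfileDeriv q R r *
        radialProfileDeriv q R r := by gcongr
    _ = _ := by ring

theorem potential_terms_le (hq : 0 < q) (hq1 : q ≤ 1) (hR : 1 ≤ R) (hr : 0 < r)
    (hqγ : q ≤ γ / 4) (ha : 0 ≤ a) (hv : v ≤ a * (1 + r) ^ (-γ))
    (hv' : v' ≤ a * (1 + r) ^ (-γ - 1)) (hv₂ : |v₂| ≤ a * (1 + r) ^ (-γ - 1)) :
    radialProfileDeriv q R r * v + radialProfile q R r * v' +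
        3 * radialProfile q R r ^ 2 * v₂ ^ 2 / radialProfileDeriv q R r ≤
      potentialConst a q * (1 + r) ^ (-γ / 2) * radialProfileDeriv q R r := by
  have hw' := radialProfileDeriv_pos hq (zero_lt_one.trans_le hR) hr
  have hlong : radialProfileDeriv q R r * v ≤
      radialProfileDeriv q R r * (a * (1 + r) ^ (-γ / 2)) := by
    gcongr
    refine hv.trans ?_
    gcongr <;> linarith
  have hradial := radialProfile_mul_le_of_le_rpow hq hq1 hR hr hqγ ha hv'
  have hshort := three_mul_radialProfile_sq_mul_sq_div_le hq hq1 hR hr hqγ ha hv₂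
  rw [potentialConst]
  linarith

theorem CarlemanParams.IsAdmissible.mul_deriv_le_bracket {P : CarlemanParams} {τ₀ τ R₀ : ℝ}
    (hP : P.IsAdmissible τ₀ (potentialConst a P.q) γ R₀) (hτ₀ : 0 ≤ τ₀) (hτ : τ₀ ≤ τ)
    (ha : 0 ≤ a) (hqγ : P.q ≤ γ / 4) (hr : 0 < r) (hv : v ≤ a * (1 + r) ^ (-γ))
    (hv' : v' ≤ a * (1 + r) ^ (-γ - 1)) (hv₂ : |v₂| ≤ a * (1 + r) ^ (-γ - 1)) :
    τ₀ / 4 * radialProfileDeriv P.q P.R r ≤ P.profile.bracket τ v v' v₂ r := by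
  have hq := P.q_pos
  have hw' := (radialProfileDeriv_pos hq P.R_pos hr).le
  have hpotential := potential_terms_le hq P.q_le_one P.one_le_R hr hqγ ha hv hv' hv₂
  have hcurvature := (radialProfile_mul_phaseSlopeDeriv_sq_div_le hq P.q_le_one P.R_pos hr
    P.L_pos P.k_pos P.θ_pos.le P.θ_le_one).trans
      (mul_le_mul_of_nonneg_right hP.curvature_small hw')
  have hangular := mul_le_mul_of_nonneg_right hP.angular_loss_small hw'
  have henergy := mul_le_mul_of_nonneg_right hτ hw'
  have hτ₀w' : 0 ≤ τ₀ * radialProfileDeriv P.q P.R r := mul_nonneg hτ₀ hw'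
  simp only [CarlemanProfile.bracket, CarlemanParams.profile]
  rcases le_total r R₀ with hnear | hfar
  · have hphase := sq_div_eight_mul_le_deriv_mul_phaseSlope_sq_add hq P.q_le_one P.R_pos hr
      P.L_pos P.k_pos.le P.θ_pos.le P.θ_le_one (by linarith [hP.four_mul_le_L])
      (by linarith [hP.two_mul_le_R])
    have hC₁ : 0 ≤ potentialConst a P.q := by
      rw [potentialConst]
      positivity
    have hdominated : potentialConst a P.q * (1 + r) ^ (-γ / 2) * radialProfileDeriv P.q P.R r ≤
        P.k ^ 2 / 8 * radialProfileDeriv P.q P.R r := by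
      gcongr
      exact (mul_le_of_le_one_right hC₁ (one_add_rpow_neg_half_le_one hr.le
        (by linarith))).trans hP.potential_le_slope
    linarith
  · have hphase := neg_mul_le_deriv_mul_phaseSlope_sq_add hq P.q_le_one P.R_pos hr P.L_pos
      P.k_pos P.θ_pos.le P.θ_le_one
    have hphase_small := mul_le_mul_of_nonneg_right hP.phase_loss_small hw'
    have hsmall := mul_le_mul_of_nonneg_right (hP.potential_small r hfar) hw'
    linarith

end Bracket

/-! ### The estimate for integrable data -/

/-- A long-range potential `V₁` with radial derivative bounded above, and a short-range potential
`V₂`, both of size `a` and with decay rate `γ`. -/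
structure PotentialBounds {d : ℕ} (a γ : ℝ) (V₁ V₂ : Ed d → ℝ) : Prop where
  contDiff : ContDiff ℝ 1 V₁
  abs_long_le : ∀ x, |V₁ x| ≤ a * (1 + ‖x‖) ^ (-γ)
  abs_short_le : ∀ x, |V₂ x| ≤ a * (1 + ‖x‖) ^ (-γ - 1)
  radialDeriv_le : ∀ x, radialDeriv V₁ x ≤ a * (1 + ‖x‖) ^ (-γ - 1)

theorem mul_one_add_norm_rpow_le {E : Type*} [SeminormedAddCommGroup E] {a s : ℝ} (ha : 0 ≤ a)
    (hs : s ≤ 0) (x : E) : a * (1 + ‖x‖) ^ s ≤ a :=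
  mul_le_of_le_one_right ha
    (Real.rpow_le_one_of_one_le_of_nonpos (le_add_of_nonneg_right (norm_nonneg x)) hs)

section Potential

variable {d : ℕ} {a γ τ τ₀ τ₁ m σ ε c₀ R₀ : ℝ} {V₁ V₂ : Ed d → ℝ} {f u : Ed d → ℂ}

theorem PotentialBounds.abs_long_le_const (h : PotentialBounds a γ V₁ V₂) (ha : 0 ≤ a)
    (hγ : 0 ≤ γ) (x : Ed d) : |V₁ x| ≤ a :=
  (h.abs_long_le x).trans (mul_one_add_norm_rpow_le ha (by linarith) x)

theorem PotentialBounds.abs_add_sub_le (h : PotentialBounds a γ V₁ V₂) (ha : 0 ≤ a)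
    (hγ : 0 ≤ γ) (hτ : |τ| ≤ τ₁) (x : Ed d) : |V₁ x + V₂ x - τ| ≤ 2 * a + τ₁ := by
  have hV₂ : |V₂ x| ≤ a :=
    (h.abs_short_le x).trans (mul_one_add_norm_rpow_le ha (by linarith) x)
  linarith [abs_sub (V₁ x + V₂ x) τ, abs_add_le (V₁ x) (V₂ x), h.abs_long_le_const ha hγ x]

theorem CarlemanParams.IsAdmissible.mul_integral_le {P : CarlemanParams}
    (hP : P.IsAdmissible τ₀ (potentialConst a P.q) γ R₀) (hd : 2 ≤ d) (hτ₀ : 0 ≤ τ₀) (ha : 0 ≤ a)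
    (hqγ : P.q ≤ γ / 4) (hqm : P.q + 1 / 2 ≤ m) (hτ : τ₀ ≤ τ) (hV : PotentialBounds a γ V₁ V₂)
    (hu : AbsorptiveSolution m c₀ σ ε (fun x => V₁ x + V₂ x - τ) f u) :
    τ₀ / 4 * (2 * P.q / P.R ^ 2) * (∫ x, ‖x‖ ^ 2 * decayWeight (m + 1) 1 x * ‖u x‖ ^ 2) ≤
      P.profile.M * (3 / (2 * P.q) * (∫ x, decayWeight (-m) 1 x * ‖f x‖ ^ 2) +
        ε * ((∫ x, ‖u x‖ ^ 2) + ∫ x, gradNormSq u x)) := by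
  have hq := P.q_pos
  have hm : 0 ≤ m := by linarith
  have hε : |σ * ε| = ε := by rw [abs_mul, hu.abs_sign, one_mul, abs_of_pos hu.absorption_pos]
  have hbracket (x : Ed d) (hx : x ≠ 0) :
      τ₀ / 4 * (2 * P.q / P.R ^ 2) * (‖x‖ ^ 2 * decayWeight (m + 1) 1 x) ≤
        P.profile.bracket τ (V₁ x) (radialDeriv V₁ x) (V₂ x) ‖x‖ := by
    have hlower := mul_sq_mul_rpow_le_radialProfileDeriv hq.le P.one_le_R (norm_nonneg x) hqm
    calc _ = τ₀ / 4 * (2 * P.q / P.R ^ 2 * (‖x‖ ^ 2 * (1 + ‖x‖ ^ 2) ^ (-(m + 1)))) := by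
          rw [decayWeight, one_pow, one_mul, mul_assoc]
      _ ≤ τ₀ / 4 * radialProfileDeriv P.q P.R ‖x‖ := by gcongr
      _ ≤ _ := hP.mul_deriv_le_bracket hτ₀ hτ ha hqγ (norm_pos_iff.2 hx)
          ((le_abs_self _).trans (hV.abs_long_le x)) (hV.radialDeriv_le x) (hV.abs_short_le x)
  have hforcing (x : Ed d) (hx : x ≠ 0) : 3 * P.profile.w ‖x‖ ^ 2 / P.profile.w' ‖x‖ ≤
      3 / (2 * P.q) * decayWeight (-m) 1 x := by
    rw [decayWeight, one_pow, one_mul, neg_neg]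
    exact three_mul_radialProfile_sq_div_le hq P.q_le_one P.one_le_R (norm_pos_iff.2 hx) hqm
  have hcarleman := P.profile.mul_integral_le hd hu.solves hV.contDiff le_rfl
    (hV.abs_long_le_const ha (by linarith)) (by positivity) (by positivity) hbracket hforcing
    (integrable_norm_sq_mul_decayWeight_succ_mul hu.integrable_norm_sq) hu.integrable_forcing
    (hu.integrable_norm_sq_and_mul_integral_le hd hm).1
    (hu.integrable_gradNormSq_and_mul_integral_le hd hm).1
  rwa [hε] at hcarleman

end Potential

theorem exists_const_absorptiveSolution {τ₀ τ₁ m a γ : ℝ} (hτ₀ : 0 < τ₀) (hτ₀₁ : τ₀ ≤ τ₁)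
    (hm : 1 / 2 < m) (ha : 0 ≤ a) (hγ : 0 < γ) :
    ∃ C : ℝ, 0 ≤ C ∧ ∀ {d : ℕ} {τ σ ε : ℝ} {V₁ V₂ : Ed d → ℝ} {f u : Ed d → ℂ}, 2 ≤ d →
      τ₀ ≤ τ → PotentialBounds a γ V₁ V₂ →
      AbsorptiveSolution m (2 * a + τ₁) σ ε (fun x => V₁ x + V₂ x - τ) f u →
      ∫ x, decayWeight m 1 x * ‖u x‖ ^ 2 ≤ C * ∫ x, decayWeight (-m) 1 x * ‖f x‖ ^ 2 ∧
      ∫ x, decayWeight m 1 x * gradNormSq u x ≤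
        C * ∫ x, decayWeight (-m) 1 x * ‖f x‖ ^ 2 := by
  obtain ⟨q, hq, hq1, hqγ, hqm⟩ : ∃ q : ℝ, 0 < q ∧ q ≤ 1 ∧ q ≤ γ / 4 ∧ q + 1 / 2 ≤ m := by
    have hq : 0 < min 1 (min (γ / 4) (m - 1 / 2)) :=
      lt_min one_pos (lt_min (by positivity) (by linarith))
    refine ⟨_, hq, by simp, by simp, le_sub_iff_add_le.1 (by simp)⟩
  obtain ⟨P, R₀, rfl, hP⟩ := CarlemanParams.exists_isAdmissible (C₁ := potentialConst a q) hq hq1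
    hτ₀ (by rw [potentialConst]; positivity) hγ
  have hR := P.R_pos
  set c := τ₀ / 4 * (2 * P.q / P.R ^ 2)
  set c₂ := 3 / (2 * P.q)
  have hc : 0 < c := by positivity
  have hc₂ : 0 < c₂ := by positivity
  have hM : 0 < P.profile.M := Real.exp_pos _
  obtain ⟨C, hC, hclose⟩ := AbsorptiveSolution.exists_const_of_carleman (m := m)
    (c₀ := 2 * a + τ₁) (Q := P.profile.M * (c₂ + 1) / c) (by linarith) (by linarith)
    (by positivity)
  refine ⟨C, hC, fun {d τ σ ε V₁ V₂ f u} hd hτ hV hu => hclose hd hu ?_⟩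
  have hforcing : 0 ≤ ∫ x, decayWeight (-m) 1 x * ‖f x‖ ^ 2 :=
    integral_nonneg fun x => mul_nonneg (decayWeight_pos _ _ x).le (sq_nonneg _)
  have henergy : 0 ≤ ε * ((∫ x, ‖u x‖ ^ 2) + ∫ x, gradNormSq u x) :=
    mul_nonneg hu.absorption_pos.le (add_nonneg (integral_nonneg fun x => sq_nonneg _)
      (integral_nonneg (gradNormSq_nonneg u)))
  rw [div_mul_eq_mul_div, le_div_iff₀ hc, mul_comm _ c, mul_assoc P.profile.M]
  refine (hP.mul_integral_le hd hτ₀.le ha hqγ hqm hτ hV hu).trans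
    (mul_le_mul_of_nonneg_left ?_ hM.le)
  nlinarith [mul_nonneg hc₂.le henergy]

/-! ### Reduction to measurable data -/

/-- The value in `[-b, b]` closest to the minimiser `-⟨g, z⟩/|z|²` of `v ↦ |g + vz|`
(which is `0` by convention if `z = 0`). -/
def clampedMinimizer (b : ℝ) (g z : ℂ) : ℝ := max (-b) (min b (-(inner ℝ g z) / ‖z‖ ^ 2))

theorem abs_clampedMinimizer_le {b : ℝ} (hb : 0 ≤ b) (g z : ℂ) : |clampedMinimizer b g z| ≤ b :=
  abs_le.2 ⟨le_max_left _ _, max_le (by linarith) (min_le_left _ _)⟩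

theorem measurable_clampedMinimizer {X : Type*} [MeasurableSpace X] {b : X → ℝ} {g z : X → ℂ}
    (hb : Measurable b) (hg : Measurable g) (hz : Measurable z) :
    Measurable fun x => clampedMinimizer (b x) (g x) (z x) :=
  hb.neg.max (hb.min ((hg.inner hz).neg.div (hz.norm.pow_const 2)))

theorem sq_clamp_sub_le {b v : ℝ} (hv : |v| ≤ b) (s : ℝ) :
    (max (-b) (min b s) - s) ^ 2 ≤ (v - s) ^ 2 := by
  obtain ⟨hbv, hvb⟩ := abs_le.1 hv
  rcases le_total b s with hbs | hsb
  · rw [min_eq_left hbs, max_eq_right (by linarith)]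
    nlinarith
  rw [min_eq_right hsb]
  rcases le_total s (-b) with hsb' | hbs'
  · rw [max_eq_left hsb']
    nlinarith
  · rw [max_eq_right hbs', sub_self]
    nlinarith [sq_nonneg (v - s)]

theorem norm_add_clampedMinimizer_smul_le (g z : ℂ) {b v : ℝ} (hv : |v| ≤ b) :
    ‖g + clampedMinimizer b g z • z‖ ≤ ‖g + v • z‖ := by
  rcases eq_or_ne z 0 with rfl | hz
  · simp
  have : 0 < ‖z‖ := norm_pos_iff.2 hz
  rw [clampedMinimizer]
  set s := -(inner ℝ g z) / ‖z‖ ^ 2 with hs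
  have hinner : inner ℝ g z = -(s * ‖z‖ ^ 2) := by
    rw [hs]
    field_simp
  have hsquare (t : ℝ) :
      ‖g + t • z‖ ^ 2 = ‖g‖ ^ 2 - s ^ 2 * ‖z‖ ^ 2 + ‖z‖ ^ 2 * (t - s) ^ 2 := by
    rw [norm_add_sq_real, inner_smul_right, hinner, norm_smul, mul_pow, Real.norm_eq_abs, sq_abs]
    ring
  refine (sq_le_sq₀ (norm_nonneg _) (norm_nonneg _)).1 ?_
  rw [hsquare, hsquare]
  have := sq_clamp_sub_le hv s
  gcongr

theorem continuous_lap {d : ℕ} {u : Ed d → ℂ} (hu : ContDiff ℝ 2 u) : Continuous (lap u) :=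
  continuous_finsetSum _ fun i _ =>
    ((contDiff_pd hu i).continuous_fderiv one_ne_zero).clm_apply continuous_const

/-- The equation determines `f` from `V₂`, so replacing `V₂ x` by the admissible value which makes
`|f x|` smallest yields measurable data without increasing the norm of the forcing. -/
theorem exists_measurable_potential_forcing {d : ℕ} {a γ τ s : ℝ} {V₁ V₂ : Ed d → ℝ}
    {f u : Ed d → ℂ} (ha : 0 ≤ a) (hV : PotentialBounds a γ V₁ V₂)
    (hu : SolvesHelmholtz (fun x => V₁ x + V₂ x - τ) s f u) :
    ∃ (V₂' : Ed d → ℝ) (f' : Ed d → ℂ), PotentialBounds a γ V₁ V₂' ∧ Measurable f' ∧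
      (∀ x, ‖f' x‖ ≤ ‖f x‖) ∧ SolvesHelmholtz (fun x => V₁ x + V₂' x - τ) s f' u := by
  set g : Ed d → ℂ := fun x => (V₁ x - τ) • u x + s • (Complex.I * u x) - lap u x with hg
  set b : Ed d → ℝ := fun x => a * (1 + ‖x‖) ^ (-γ - 1)
  set V₂' : Ed d → ℝ := fun x => clampedMinimizer (b x) (g x) (u x)
  have hu_cont := hu.contDiff.continuous
  have hg_cont : Continuous g := by
    have := continuous_lap hu.contDiff
    have := hV.contDiff.continuous
    fun_prop
  have hb : Measurable b := ((measurable_const.add measurable_norm).pow_const _).const_mul _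
  have hV₂' : Measurable V₂' :=
    measurable_clampedMinimizer hb hg_cont.measurable hu_cont.measurable
  have hf (x : Ed d) : f x = g x + V₂ x • u x := by
    simp only [hg, hu.lap_eq x, add_smul, sub_smul]
    ring
  refine ⟨V₂', fun x => g x + V₂' x • u x, ⟨hV.contDiff, hV.abs_long_le, fun x =>
    abs_clampedMinimizer_le (by positivity) _ _, hV.radialDeriv_le⟩,
    hg_cont.measurable.add (hV₂'.smul hu_cont.measurable), fun x => ?_, hu.contDiff, fun x => ?_⟩
  · rw [hf x]
    exact norm_add_clampedMinimizer_smul_le (g x) (u x) (hV.abs_short_le x)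
  · simp only [hg, add_smul, sub_smul]
    ring

/-! ### Comparison of weights -/

section Weights

variable {d : ℕ} {m : ℝ}

theorem usq_mul_ofReal (u : Ed d → ℂ) (x : Ed d) (c : ℝ) :
    usq u x * ENNReal.ofReal c = ENNReal.ofReal (c * ‖u x‖ ^ 2) := by
  rw [mul_comm c, ENNReal.ofReal_mul (sq_nonneg _), ENNReal.ofReal_pow (norm_nonneg _), usq,
    ofReal_norm, enorm_eq_nnnorm]

theorem gradSq_mul_ofReal (u : Ed d → ℂ) (x : Ed d) (c : ℝ) :
    gradSq u x * ENNReal.ofReal c = ENNReal.ofReal (c * gradNormSq u x) := by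
  rw [mul_comm c, ENNReal.ofReal_mul (gradNormSq_nonneg u x), gradNormSq,
    ENNReal.ofReal_sum_of_nonneg fun i _ => sq_nonneg _, gradSq]
  simp only [ENNReal.ofReal_pow (norm_nonneg _), ofReal_norm, enorm_eq_nnnorm]

theorem one_add_norm_rpow_two_mul (x : Ed d) (s : ℝ) :
    (1 + ‖x‖) ^ (2 * s) = ((1 + ‖x‖) ^ 2) ^ s := by
  rw [Real.rpow_mul (by positivity), Real.rpow_two]

theorem one_add_norm_rpow_le_decayWeight (hm : 0 ≤ m) (x : Ed d) :
    (1 + ‖x‖) ^ (-(2 * m)) ≤ decayWeight m 1 x := by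
  rw [← mul_neg, one_add_norm_rpow_two_mul, decayWeight]
  exact Real.rpow_le_rpow_of_nonpos (by positivity) (by nlinarith [norm_nonneg x])
    (neg_nonpos.2 hm)

theorem decayWeight_neg_le_one_add_norm_rpow (hm : 0 ≤ m) (x : Ed d) :
    decayWeight (-m) 1 x ≤ (1 + ‖x‖) ^ (2 * m) := by
  rw [one_add_norm_rpow_two_mul, decayWeight, neg_neg]
  exact Real.rpow_le_rpow (by positivity) (by nlinarith [norm_nonneg x]) hm

theorem decayWeight_le_mul_one_add_norm_rpow (hm : 0 ≤ m) (x : Ed d) :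
    decayWeight m 1 x ≤ 2 ^ m * (1 + ‖x‖) ^ (-(2 * m)) := by
  have hhalf : (2 : ℝ) ^ m = (1 / 2) ^ (-m) := by
    rw [one_div, Real.inv_rpow zero_le_two, Real.rpow_neg zero_le_two, inv_inv]
  rw [← mul_neg, one_add_norm_rpow_two_mul, decayWeight, hhalf,
    ← Real.mul_rpow (by norm_num) (by positivity)]
  exact Real.rpow_le_rpow_of_nonpos (by positivity) (by nlinarith [sq_nonneg (1 - ‖x‖)])
    (neg_nonpos.2 hm)

theorem integrable_decayWeight_mul_of_lintegral_lt_top (hm : 0 ≤ m) {S : Ed d → ℝ}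
    (hS : Continuous S) (hS0 : ∀ x, 0 ≤ S x)
    (hfin : ∫⁻ x, ENNReal.ofReal ((1 + ‖x‖) ^ (-(2 * m)) * S x) < ⊤) :
    Integrable fun x => decayWeight m 1 x * S x := by
  refine ⟨((contDiff_decayWeight (d := d) m 1).continuous.mul hS).aestronglyMeasurable, ?_⟩
  rw [hasFiniteIntegral_iff_ofReal (.of_forall fun x =>
    mul_nonneg (decayWeight_pos _ _ _).le (hS0 x))]
  calc _ ≤ ∫⁻ x, ENNReal.ofReal (2 ^ m) *
        ENNReal.ofReal ((1 + ‖x‖) ^ (-(2 * m)) * S x) := by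
        refine lintegral_mono fun x => ?_
        rw [← ENNReal.ofReal_mul (by positivity), ← mul_assoc]
        exact ENNReal.ofReal_le_ofReal
          (mul_le_mul_of_nonneg_right (decayWeight_le_mul_one_add_norm_rpow hm x) (hS0 x))
    _ = ENNReal.ofReal (2 ^ m) * ∫⁻ x, ENNReal.ofReal ((1 + ‖x‖) ^ (-(2 * m)) * S x) :=
        lintegral_const_mul' _ _ ENNReal.ofReal_ne_top
    _ < ⊤ := ENNReal.mul_lt_top ENNReal.ofReal_lt_top hfin

theorem lintegral_ofReal_le_of_integral_decayWeight_le (hm : 0 ≤ m) {S : Ed d → ℝ} {I : ℝ}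
    (hS0 : ∀ x, 0 ≤ S x) (hint : Integrable fun x => decayWeight m 1 x * S x)
    (hI : ∫ x, decayWeight m 1 x * S x ≤ I) :
    ∫⁻ x, ENNReal.ofReal ((1 + ‖x‖) ^ (-(2 * m)) * S x) ≤ ENNReal.ofReal I := by
  refine le_trans ?_ (ENNReal.ofReal_le_ofReal hI)
  rw [ofReal_integral_eq_lintegral_ofReal hint (.of_forall fun x =>
    mul_nonneg (decayWeight_pos _ _ _).le (hS0 x))]
  exact lintegral_mono fun x => ENNReal.ofReal_le_ofReal
    (mul_le_mul_of_nonneg_right (one_add_norm_rpow_le_decayWeight hm x) (hS0 x))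

theorem lintegral_decayWeight_neg_mul_le (hm : 0 ≤ m) {f f' : Ed d → ℂ}
    (hle : ∀ x, ‖f' x‖ ≤ ‖f x‖) :
    ∫⁻ x, ENNReal.ofReal (decayWeight (-m) 1 x * ‖f' x‖ ^ 2) ≤
      ∫⁻ x, ENNReal.ofReal ((1 + ‖x‖) ^ (2 * m) * ‖f x‖ ^ 2) := by
  refine lintegral_mono fun x => ENNReal.ofReal_le_ofReal ?_
  gcongr
  · exact decayWeight_neg_le_one_add_norm_rpow hm x
  · exact hle x

theorem integrable_decayWeight_neg_mul_norm_sq {f : Ed d → ℂ} (hf : Measurable f)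
    (hfin : ∫⁻ x, ENNReal.ofReal (decayWeight (-m) 1 x * ‖f x‖ ^ 2) < ⊤) :
    Integrable fun x => decayWeight (-m) 1 x * ‖f x‖ ^ 2 := by
  refine ⟨((contDiff_decayWeight (d := d) _ 1).continuous.measurable.mul
    (hf.norm.pow_const 2)).aestronglyMeasurable, ?_⟩
  rwa [hasFiniteIntegral_iff_ofReal (.of_forall fun x =>
    mul_nonneg (decayWeight_pos _ _ _).le (sq_nonneg _))]

end Weights

theorem rpow_half_add_rpow_half_le {A B F : ℝ≥0∞} {C : ℝ} (hC : 0 ≤ C)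
    (hA : A ≤ ENNReal.ofReal C * F) (hB : B ≤ ENNReal.ofReal C * F) :
    A ^ (1 / 2 : ℝ) + B ^ (1 / 2 : ℝ) ≤
      ENNReal.ofReal (2 * C ^ (1 / 2 : ℝ)) * F ^ (1 / 2 : ℝ) := by
  have hroot {X : ℝ≥0∞} (hX : X ≤ ENNReal.ofReal C * F) :
      X ^ (1 / 2 : ℝ) ≤ ENNReal.ofReal (C ^ (1 / 2 : ℝ)) * F ^ (1 / 2 : ℝ) := by
    rw [← ENNReal.ofReal_rpow_of_nonneg hC (by norm_num),
      ← ENNReal.mul_rpow_of_nonneg _ _ (by norm_num)]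
    exact ENNReal.rpow_le_rpow hX (by norm_num)
  calc _ ≤ ENNReal.ofReal (C ^ (1 / 2 : ℝ)) * F ^ (1 / 2 : ℝ) +
        ENNReal.ofReal (C ^ (1 / 2 : ℝ)) * F ^ (1 / 2 : ℝ) := add_le_add (hroot hA) (hroot hB)
    _ = _ := by rw [← add_mul, ← ENNReal.ofReal_add (by positivity) (by positivity), ← two_mul]

theorem exists_const_lintegral_le {τ₀ τ₁ m a γ : ℝ} (hτ₀ : 0 < τ₀) (hτ₀₁ : τ₀ ≤ τ₁)
    (hm : 1 / 2 < m) (ha : 0 ≤ a) (hγ : 0 < γ) :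
    ∃ C : ℝ, 0 ≤ C ∧ ∀ {d : ℕ} {τ ε σ : ℝ} {V₁ V₂ : Ed d → ℝ} {f u : Ed d → ℂ}, 2 ≤ d →
      τ₀ ≤ τ → τ ≤ τ₁ → 0 < ε → ε ≤ 1 → |σ| = 1 → PotentialBounds a γ V₁ V₂ →
      SolvesHelmholtz (fun x => V₁ x + V₂ x - τ) (σ * ε) f u →
      ∫⁻ x, ENNReal.ofReal ((1 + ‖x‖) ^ (-(2 * m)) * ‖u x‖ ^ 2) < ⊤ →
      ∫⁻ x, ENNReal.ofReal ((1 + ‖x‖) ^ (-(2 * m)) * gradNormSq u x) < ⊤ →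
      ∫⁻ x, ENNReal.ofReal ((1 + ‖x‖) ^ (2 * m) * ‖f x‖ ^ 2) < ⊤ →
      ∫⁻ x, ENNReal.ofReal ((1 + ‖x‖) ^ (-(2 * m)) * ‖u x‖ ^ 2) ≤
        ENNReal.ofReal C * ∫⁻ x, ENNReal.ofReal ((1 + ‖x‖) ^ (2 * m) * ‖f x‖ ^ 2) ∧
      ∫⁻ x, ENNReal.ofReal ((1 + ‖x‖) ^ (-(2 * m)) * gradNormSq u x) ≤
        ENNReal.ofReal C * ∫⁻ x, ENNReal.ofReal ((1 + ‖x‖) ^ (2 * m) * ‖f x‖ ^ 2) := by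
  have hm0 : 0 ≤ m := by linarith
  obtain ⟨C, hC, hestimate⟩ := exists_const_absorptiveSolution hτ₀ hτ₀₁ hm ha hγ
  refine ⟨C, hC, ?_⟩
  intro d τ ε σ V₁ V₂ f u hd hτ hτ' hε hε1 hσ hV hsol hu_fin hgrad_fin hf_fin
  obtain ⟨V₂', f', hV', hf'_meas, hf'_le, hsol'⟩ := exists_measurable_potential_forcing ha hV hsol
  have hforcing_le := lintegral_decayWeight_neg_mul_le hm0 hf'_le
  have hforcing := integrable_decayWeight_neg_mul_norm_sq hf'_meas (hforcing_le.trans_lt hf_fin)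
  have hu_int := integrable_decayWeight_mul_of_lintegral_lt_top hm0
    (hsol.contDiff.continuous.norm.pow 2) (fun x => sq_nonneg _) hu_fin
  have hgrad_int := integrable_decayWeight_mul_of_lintegral_lt_top hm0
    (contDiff_gradNormSq hsol.contDiff).continuous (gradNormSq_nonneg u) hgrad_fin
  have hτ_abs : |τ| ≤ τ₁ := abs_le.2 ⟨by linarith, hτ'⟩
  obtain ⟨hmass, hgrad⟩ := hestimate hd hτ hV' ⟨hsol', hσ, hε, hε1,
    hV'.abs_add_sub_le ha hγ.le hτ_abs, hu_int, hgrad_int, hforcing⟩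
  have hbound : ENNReal.ofReal (C * ∫ x, decayWeight (-m) 1 x * ‖f' x‖ ^ 2) ≤
      ENNReal.ofReal C * ∫⁻ x, ENNReal.ofReal ((1 + ‖x‖) ^ (2 * m) * ‖f x‖ ^ 2) := by
    rw [ENNReal.ofReal_mul hC, ofReal_integral_eq_lintegral_ofReal hforcing
      (.of_forall fun x => mul_nonneg (decayWeight_pos _ _ _).le (sq_nonneg _))]
    gcongr
  exact ⟨(lintegral_ofReal_le_of_integral_decayWeight_le hm0 (fun x => sq_nonneg _) hu_int
    hmass).trans hbound, (lintegral_ofReal_le_of_integral_decayWeight_le hm0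
      (gradNormSq_nonneg u) hgrad_int hgrad).trans hbound⟩

/-- uniform weighted resolvent estimate on a compact spectral
window `τ₀ < τ < τ₁`, via the Ikebe–Saito compactness argument. -/
theorem stmt_9 (d : ℕ) (hd : 2 ≤ d) (τ₀ τ₁ α a γ : ℝ)
    (hτ₀ : 0 < τ₀) (hτ₀₁ : τ₀ < τ₁) (hα : 0 < α) (ha : 0 < a) (hγ : 0 < γ) :
    ∃ C : ℝ, 0 < C ∧
      ∀ (V₁ V₂ : Ed d → ℝ), ContDiff ℝ 1 V₁ →
      (∀ x : Ed d, |V₁ x| ≤ a * (1 + ‖x‖) ^ (-γ)) →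
      (∀ x : Ed d, |V₂ x| ≤ a * (1 + ‖x‖) ^ (-γ - 1)) →
      (∀ x : Ed d, radialDeriv V₁ x ≤ a * (1 + ‖x‖) ^ (-γ - 1)) →
      ∀ (τ ε : ℝ), τ₀ < τ → τ < τ₁ → 0 < ε → ε < 1 →
      ∀ (σ : ℝ), σ = 1 ∨ σ = -1 →
      ∀ (u f : Ed d → ℂ), ContDiff ℝ 2 u →
      (∫⁻ x, usq u x * ENNReal.ofReal ((1 + ‖x‖) ^ (-(1 + α)))) < ⊤ →
      (∫⁻ x, gradSq u x * ENNReal.ofReal ((1 + ‖x‖) ^ (-(1 + α)))) < ⊤ →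
      (∫⁻ x, usq f x * ENNReal.ofReal ((1 + ‖x‖) ^ (1 + α))) < ⊤ →
      (∀ x, -lap u x + ((V₁ x : ℂ) + (V₂ x : ℂ)) * u x
        + (σ : ℂ) * ((ε : ℂ) * Complex.I) * u x - (τ : ℂ) * u x = f x) →
      (∫⁻ x, usq u x * ENNReal.ofReal ((1 + ‖x‖) ^ (-(1 + α)))) ^ (1/2 : ℝ)
        + (∫⁻ x, gradSq u x * ENNReal.ofReal ((1 + ‖x‖) ^ (-(1 + α)))) ^ (1/2 : ℝ)
      ≤ ENNReal.ofReal C *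
          (∫⁻ x, usq f x * ENNReal.ofReal ((1 + ‖x‖) ^ (1 + α))) ^ (1/2 : ℝ) := by
  obtain ⟨m, hm⟩ : ∃ m : ℝ, 1 + α = 2 * m := ⟨(1 + α) / 2, by ring⟩
  obtain ⟨C, hC, hestimate⟩ := exists_const_lintegral_le (m := m) hτ₀ hτ₀₁.le (by linarith) ha.le hγ
  refine ⟨2 * C ^ (1 / 2 : ℝ) + 1, by positivity, ?_⟩
  intro V₁ V₂ hV₁ hV₁a hV₂a hdV τ ε hτ hτ' hε hε1 σ hσ u f hu hu_fin hgrad_fin hf_fin heq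
  have hσ_abs : |σ| = 1 := by rcases hσ with rfl | rfl <;> simp
  have hsol : SolvesHelmholtz (fun x => V₁ x + V₂ x - τ) (σ * ε) f u := by
    refine ⟨hu, fun x => ?_⟩
    simp only [← heq x, Complex.real_smul]
    push_cast
    ring
  simp only [hm, usq_mul_ofReal, gradSq_mul_ofReal] at hu_fin hgrad_fin hf_fin ⊢
  obtain ⟨hmass, hgrad⟩ := hestimate hd hτ.le hτ'.le hε hε1.le hσ_abs ⟨hV₁, hV₁a, hV₂a, hdV⟩ hsol
    hu_fin hgrad_fin hf_fin
  refine (rpow_half_add_rpow_half_le hC hmass hgrad).trans ?_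
  gcongr
  linarith
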